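/- arXiv:1812.07473 — 2 statements merged into one kernel-verified Lean document; each statement's English description precedes it below -/
import Mathlib

section
/- For each d ∈ ℕ there is a constant c(d) > 0 such that for every F ∈ 𝔉_d^s and every n ∈ ℕ one has sup over k ∈ ℕ with k ≤ √n of ρ(F^n, F^{n+k}) ≤ c(d) · n^{−1/2}. -/
open MeasureTheory RealInnerProductSpace
open scoped ENNReal

noncomputable section

abbrev Euc (d : ℕ) := EuclideanSpace ℝ (Fin d)

/-- Convolution of two measures on an additive structure. -/
def mconv {α : Type*} [MeasurableSpace α] [Add α] (μ ν : Measure α) : Measure α :=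
  (μ.prod ν).map (fun p => p.1 + p.2)

/-- Convolution power `μ^{*n}`, with `μ^{*0}` the Dirac measure at `0`. -/
def convPow {α : Type*} [MeasurableSpace α] [AddMonoid α] (μ : Measure α) : ℕ → Measure α
  | 0 => Measure.dirac 0
  | n + 1 => mconv (convPow μ n) μ

/-- Convolution product of a finite family of measures. -/
def convProd {α : Type*} [MeasurableSpace α] [AddMonoid α] :
    ∀ {n : ℕ}, (Fin n → Measure α) → Measure α
  | 0, _ => Measure.dirac 0
  | n + 1, G => mconv (convProd (fun i : Fin n => G i.castSucc)) (G (Fin.last n))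

/-- The compound Poisson measure `e(a·μ) = e^{-a} ∑_k a^k μ^{*k}/k!`. -/
def cpois {α : Type*} [MeasurableSpace α] [AddMonoid α] (a : ℝ) (μ : Measure α) : Measure α :=
  Measure.sum fun k : ℕ =>
    (ENNReal.ofReal (Real.exp (-a) * a ^ k / k.factorial)) • convPow μ k

/-- A measure is symmetric if it is invariant under `x ↦ -x`. -/
def IsSymmMeasure {d : ℕ} (μ : Measure (Euc d)) : Prop :=
  μ.map (fun x => -x) = μ

/-- Characteristic function of a measure on `ℝ^d`. -/
def charFn {d : ℕ} (μ : Measure (Euc d)) (t : Euc d) : ℂ :=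
  ∫ x, Complex.exp ((⟪t, x⟫ : ℂ) * Complex.I) ∂μ

/-- Characteristic function of a measure on `ℝ`. -/
def charFn1 (μ : Measure ℝ) (t : ℝ) : ℂ :=
  ∫ x, Complex.exp (((t * x : ℝ) : ℂ) * Complex.I) ∂μ

/-- Convex polyhedra determined by the directions `t 1, …, t m`. -/
def polyhedraOn {d m : ℕ} (t : Fin m → Euc d) : Set (Set (Euc d)) :=
  {X | ∃ a b : Fin m → EReal,
    X = {x | ∀ j, a j ≤ ((⟪x, t j⟫ : ℝ) : EReal) ∧ ((⟪x, t j⟫ : ℝ) : EReal) ≤ b j}}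

/-- The collection `𝔛_m` of convex polyhedra determined by `m` pairs of parallel hyperplanes. -/
def polyhedra (d m : ℕ) : Set (Set (Euc d)) :=
  {X | ∃ t : Fin m → Euc d, X ∈ polyhedraOn t}

/-- The distance `ρ_m(G,H) = sup_{X ∈ 𝔛_m} |G{X} - H{X}|`. -/
def rhoPoly {d : ℕ} (m : ℕ) (G H : Measure (Euc d)) : ℝ :=
  ⨆ X ∈ polyhedra d m, |(G X).toReal - (H X).toReal|

/-- The Lévy concentration function `Q(μ, b) = sup_x μ[x, x+b]`. -/
def concFn (μ : Measure ℝ) (b : ℝ) : ℝ :=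
  ⨆ x : ℝ, (μ (Set.Icc x (x + b))).toReal

/-- `q(H, X) = inf_{‖t‖=1} Q(𝓛(⟨ξ,t⟩), λ{⟨x,t⟩ : x ∈ X})` where `H = 𝓛(ξ)`. -/
def qFn {d : ℕ} (H : Measure (Euc d)) (X : Set (Euc d)) : ℝ :=
  ⨅ t ∈ {t : Euc d | ‖t‖ = 1},
    concFn (H.map fun x => ⟪x, t⟫) (volume ((fun x => ⟪x, t⟫) '' X)).toReal

/-- The uniform (Kolmogorov) distance on `ℝ^d`. -/
def kolmDist {d : ℕ} (G H : Measure (Euc d)) : ℝ :=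
  ⨆ x : Euc d, |(G {y | ∀ i, y i ≤ x i}).toReal - (H {y | ∀ i, y i ≤ x i}).toReal|

/-- The uniform (Kolmogorov) distance on `ℝ`. -/
def kolmDist1 (G H : Measure ℝ) : ℝ :=
  ⨆ x : ℝ, |(G (Set.Iic x)).toReal - (H (Set.Iic x)).toReal|

end

set_option linter.unusedSectionVars false

section Gen
variable {E : Type} [AddCommGroup E] [MeasurableSpace E] [MeasurableAdd₂ E]

lemma mconv_eq_conv (μ ν : Measure E) : mconv μ ν = μ.conv ν := rfl

lemma convPow_succ_eq (F : Measure E) (n : ℕ) : convPow F (n+1) = mconv (convPow F n) F := rfl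

lemma isProb_mconv (μ ν : Measure E) [IsProbabilityMeasure μ] [IsProbabilityMeasure ν] :
    IsProbabilityMeasure (mconv μ ν) :=
  Measure.isProbabilityMeasure_map (by fun_prop)

instance isProb_convPow (F : Measure E) [IsProbabilityMeasure F] (n : ℕ) :
    IsProbabilityMeasure (convPow F n) := by
  induction n with
  | zero => exact inferInstanceAs (IsProbabilityMeasure (Measure.dirac (0:E)))
  | succ n ih => exact isProb_mconv _ _

lemma convPow_add (F : Measure E) [IsProbabilityMeasure F] (a b : ℕ) :
    convPow F (a + b) = mconv (convPow F a) (convPow F b) := by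
  induction b with
  | zero =>
    show convPow F a = (convPow F a).conv (Measure.dirac 0)
    rw [Measure.conv_dirac_zero]
  | succ b ih =>
    rw [← add_assoc, convPow_succ_eq, ih, convPow_succ_eq]
    simp only [mconv_eq_conv]
    rw [Measure.conv_assoc]

/-- law of the sum under product measure -/
lemma pi_map_sum (F : Measure E) [IsProbabilityMeasure F] (n : ℕ) :
    (Measure.pi (fun _ : Fin n => F)).map (fun X => ∑ j, X j) = convPow F n := by
  induction n with
  | zero =>
    have : (fun X : Fin 0 → E => ∑ j, X j) = fun _ => 0 := by ext; simp
    rw [this, Measure.map_const]; simp [convPow]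
  | succ n ih =>
    have h := measurePreserving_piFinSuccAbove (fun _ : Fin (n+1) => F) 0
    have e : (fun X : Fin (n+1) → E => ∑ j, X j)
      = (fun p : E × E => p.1 + p.2) ∘ (Prod.map id (fun X : Fin n → E => ∑ j, X j)) ∘
        (MeasurableEquiv.piFinSuccAbove (fun _ : Fin (n+1) => E) 0) := by
      ext X
      simp [Fin.sum_univ_succ, MeasurableEquiv.piFinSuccAbove, Fin.insertNthEquiv, Fin.tail]
    have hs : Measurable (fun X : Fin n → E => ∑ j, X j) := by fun_prop
    rw [e, ← Measure.map_map (by fun_prop) (by fun_prop),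
      ← Measure.map_map (by fun_prop) (by fun_prop), h.map_eq,
      ← Measure.map_prod_map _ _ measurable_id hs, ih, Measure.map_id]
    show F.conv (convPow F n) = (convPow F n).conv F
    rw [Measure.conv_comm]

lemma pi_map_pair (F : Measure E) [IsProbabilityMeasure F] (n : ℕ) (j : Fin (n+1)) :
    (Measure.pi (fun _ : Fin (n+1) => F)).map (fun X => (X j, ∑ i, X i)) =
      (F.prod (convPow F n)).map (fun p => (p.1, p.1 + p.2)) := by
  have h := measurePreserving_piFinSuccAbove (fun _ : Fin (n+1) => F) j
  have e : (fun X : Fin (n+1) → E => (X j, ∑ i, X i))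
      = (fun p : E × E => (p.1, p.1 + p.2)) ∘ (Prod.map id (fun X : Fin n → E => ∑ j, X j)) ∘
        (MeasurableEquiv.piFinSuccAbove (fun _ : Fin (n+1) => E) j) := by
    ext X
    · simp [MeasurableEquiv.piFinSuccAbove, Fin.insertNthEquiv]
    · simp [Fin.sum_univ_succAbove _ j, MeasurableEquiv.piFinSuccAbove, Fin.insertNthEquiv, Fin.removeNth]
  have hs : Measurable (fun X : Fin n → E => ∑ j, X j) := by fun_prop
  rw [e, ← Measure.map_map (by fun_prop) (by fun_prop),
      ← Measure.map_map (by fun_prop) (by fun_prop), h.map_eq,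
      ← Measure.map_prod_map _ _ measurable_id hs, pi_map_sum, Measure.map_id]

/-- integral of a bounded function of (X j, sum) -/
lemma pi_integral_pair (F : Measure E) [IsProbabilityMeasure F] (n : ℕ) (j : Fin (n+1))
    (h : E → E → ℝ) (hm : Measurable (fun p : E × E => h p.1 p.2)) :
    ∫ X, h (X j) (∑ i, X i) ∂(Measure.pi (fun _ : Fin (n+1) => F)) =
      ∫ p, h p.1 (p.1 + p.2) ∂(F.prod (convPow F n)) := by
  have h1 : ∫ q, h q.1 q.2 ∂((Measure.pi (fun _ : Fin (n+1) => F)).map (fun X => (X j, ∑ i, X i)))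
    = ∫ X, h (X j) (∑ i, X i) ∂(Measure.pi (fun _ : Fin (n+1) => F)) :=
    integral_map (by fun_prop) hm.aestronglyMeasurable
  rw [← h1, pi_map_pair]
  exact integral_map (by fun_prop) hm.aestronglyMeasurable

noncomputable def pp (ν : Measure E) (A : Set E) (a : E) : ℝ := ν.real {s | s + a ∈ A}
noncomputable def vv (F : Measure E) (n : ℕ) (A : Set E) (a : E) : ℝ :=
  pp (convPow F n) A a - (convPow F (n+1)).real A

variable (F : Measure E) [IsProbabilityMeasure F] (n : ℕ)

lemma pp_nonneg (ν : Measure E) (A : Set E) (a : E) : 0 ≤ pp ν A a := measureReal_nonneg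
lemma pp_le_one (ν : Measure E) [IsProbabilityMeasure ν] (A : Set E) (a : E) : pp ν A a ≤ 1 :=
  measureReal_le_one
lemma pp_mono (ν : Measure E) [IsProbabilityMeasure ν] {A B : Set E} (h : A ⊆ B) (a : E) :
    pp ν A a ≤ pp ν B a := measureReal_mono (fun _ hs => h hs)

lemma pp_measurable (ν : Measure E) [IsProbabilityMeasure ν] {A : Set E} (hA : MeasurableSet A) :
    Measurable (pp ν A) := by
  have h : MeasurableSet {p : E × E | p.2 + p.1 ∈ A} :=
    (show Measurable (fun p : E × E => p.2 + p.1) by fun_prop) hA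
  exact (measurable_measure_prodMk_left h).ennreal_toReal

lemma vv_measurable {A : Set E} (hA : MeasurableSet A) : Measurable (vv F n A) :=
  (pp_measurable _ hA).sub_const _

lemma vv_abs_le (A : Set E) (a : E) : |vv F n A a| ≤ 1 := by
  have h1 := pp_nonneg (convPow F n) A a
  have h2 := pp_le_one (convPow F n) A a
  have h3 : 0 ≤ (convPow F (n+1)).real A := measureReal_nonneg
  have h4 : (convPow F (n+1)).real A ≤ 1 := measureReal_le_one
  rw [vv, abs_le]; constructor <;> linarith

lemma integrable_bdd {Ω : Type*} [MeasurableSpace Ω] (P : Measure Ω) [IsFiniteMeasure P] {f : Ω → ℝ} (C : ℝ)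
    (hf : Measurable f) (hb : ∀ x, |f x| ≤ C) : Integrable f P :=
  Integrable.of_bound hf.aestronglyMeasurable C (Filter.Eventually.of_forall (by simpa using hb))

lemma vv_integrable {A : Set E} (hA : MeasurableSet A) : Integrable (vv F n A) F :=
  integrable_bdd F 1 (vv_measurable F n hA) (vv_abs_le F n A)

lemma pp_integrable (ν ρ : Measure E) [IsProbabilityMeasure ν] [IsProbabilityMeasure ρ]
    {A : Set E} (hA : MeasurableSet A) : Integrable (pp ν A) ρ :=
  integrable_bdd ρ 1 (pp_measurable ν hA) (fun x => by
    rw [abs_of_nonneg (pp_nonneg _ _ _)]; exact pp_le_one _ _ _)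

/-- integral of translation probabilities -/
lemma mconv_real (ν ρ : Measure E) [IsProbabilityMeasure ν] [IsProbabilityMeasure ρ]
    {A : Set E} (hA : MeasurableSet A) : (mconv ν ρ).real A = ∫ a, pp ν A a ∂ρ := by
  have hpre : MeasurableSet ((fun p : E × E => p.1 + p.2) ⁻¹' A) :=
    (show Measurable (fun p : E × E => p.1 + p.2) by fun_prop) hA
  unfold mconv
  rw [measureReal_def, Measure.map_apply (by fun_prop) hA, Measure.prod_apply_symm hpre]
  unfold pp
  simp only [measureReal_def]
  rw [integral_toReal]
  · rfl
  · exact (measurable_measure_prodMk_right hpre).aemeasurable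
  · exact Filter.Eventually.of_forall (fun a => measure_lt_top _ _)

lemma vv_integral {A : Set E} (hA : MeasurableSet A) : ∫ a, vv F n A a ∂F = 0 := by
  unfold vv
  rw [integral_sub (pp_integrable _ _ hA) (integrable_const _), convPow_succ_eq, ← mconv_real _ _ hA]
  simp

end Gen

section Gen
variable {E : Type} [AddCommGroup E] [MeasurableSpace E] [MeasurableAdd₂ E]
variable (F : Measure E) [IsProbabilityMeasure F] (n : ℕ)

noncomputable abbrev PP (F : Measure E) (n : ℕ) : Measure (Fin (n+1) → E) := Measure.pi (fun _ : Fin (n+1) => F)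

lemma PP_integral_eval (j : Fin (n+1)) {g : E → ℝ} (hg : Measurable g) :
    ∫ X, g (X j) ∂(PP F n) = ∫ a, g a ∂F := by
  have h := (measurePreserving_eval (fun _ : Fin (n+1) => F) j)
  have h1 : ∫ q, g q ∂((PP F n).map (Function.eval j)) = ∫ X, g (X j) ∂(PP F n) :=
    integral_map (measurable_pi_apply j).aemeasurable hg.aestronglyMeasurable
  rw [← h1, h.map_eq]

lemma PP_integral_sum {g : E → ℝ} (C : ℝ) (hg : Measurable g) (hb : ∀ a, |g a| ≤ C) :
    ∫ X, ∑ j, g (X j) ∂(PP F n) = (n+1) * ∫ a, g a ∂F := by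
  rw [integral_finsetSum]
  · simp_rw [PP_integral_eval F n _ hg]; simp
  · intro j _
    exact integrable_bdd _ C (by fun_prop) (fun x => hb _)

lemma PP_integral_mul {g : E → ℝ} (C : ℝ) (hg : Measurable g) (hb : ∀ a, |g a| ≤ C)
    (i j : Fin (n+1)) (hij : i ≠ j) :
    ∫ X, g (X i) * g (X j) ∂(PP F n) = (∫ a, g a ∂F) * ∫ a, g a ∂F := by
  have hI : ProbabilityTheory.iIndepFun (fun (i : Fin (n+1)) (X : Fin (n+1) → E) => g (X i)) (PP F n) :=
    ProbabilityTheory.iIndepFun_pi (X := fun _ => g) (fun i => hg.aemeasurable)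
  have := (hI.indepFun hij).integral_mul_eq_mul_integral
    (hg.comp (measurable_pi_apply i)).aestronglyMeasurable
    (hg.comp (measurable_pi_apply j)).aestronglyMeasurable
  have h2 := PP_integral_eval F n i hg
  have h3 := PP_integral_eval F n j hg
  rw [h2, h3] at this
  exact this

lemma PP_integral_sum_sq {g : E → ℝ} (C : ℝ) (hg : Measurable g) (hb : ∀ a, |g a| ≤ C)
    (h0 : ∫ a, g a ∂F = 0) :
    ∫ X, (∑ j, g (X j)) ^ 2 ∂(PP F n) = (n+1) * ∫ a, (g a)^2 ∂F := by
  have hC : 0 ≤ C := by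
    obtain ⟨a⟩ : Nonempty E := ⟨0⟩
    exact (abs_nonneg _).trans (hb a)
  have e : ∀ X : Fin (n+1) → E, (∑ j, g (X j)) ^ 2 = ∑ i, ∑ j, g (X i) * g (X j) := by
    intro X; rw [sq, Finset.sum_mul_sum]
  simp_rw [e]
  have hint : ∀ i j : Fin (n+1), Integrable (fun X : Fin (n+1) → E => g (X i) * g (X j)) (PP F n) := by
    intro i j
    refine integrable_bdd _ (C*C) (by fun_prop) (fun x => ?_)
    rw [abs_mul]; exact mul_le_mul (hb _) (hb _) (abs_nonneg _) hC
  rw [integral_finsetSum _ (fun i _ => integrable_finsetSum _ (fun j _ => hint i j))]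
  have : ∀ i : Fin (n+1), ∫ X, ∑ j, g (X i) * g (X j) ∂(PP F n) = ∫ a, (g a)^2 ∂F := by
    intro i
    rw [integral_finsetSum _ (fun j _ => hint i j), Finset.sum_eq_single i]
    · have := PP_integral_eval F n i (g := fun a => (g a)^2) (by fun_prop)
      rw [← this]; simp only [sq]
    · intro j _ hj
      rw [PP_integral_mul F n C hg hb i j hj.symm, h0]; simp
    · simp
  simp_rw [this]; simp

lemma bessel {A : Set E} (hA : MeasurableSet A) :
    (n+1) * ∫ a, (vv F n A a)^2 ∂F ≤ (convPow F (n+1)).real A := by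
  classical
  set v := vv F n A with hv
  have hvm := vv_measurable F n hA
  have hvb := vv_abs_le F n A
  set I : E → ℝ := A.indicator (fun _ => 1) with hI
  have hIm : Measurable I := measurable_const.indicator hA
  have hIb : ∀ x, |I x| ≤ 1 := by
    intro x; by_cases hx : x ∈ A <;> simp [I, hx]
  have h1 : 0 ≤ ∫ X, (I (∑ j, X j) - ∑ j, v (X j))^2 ∂(PP F n) := integral_nonneg (fun _ => sq_nonneg _)
  have hsumb : ∀ X : Fin (n+1) → E, |∑ j, v (X j)| ≤ n+1 := by
    intro X
    refine (Finset.abs_sum_le_sum_abs _ _).trans ?_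
    refine (Finset.sum_le_sum (fun j _ => hvb (X j))).trans ?_
    simp
  have hv1 : ∀ j : Fin (n+1), Measurable (fun X : Fin (n+1) → E => v (X j)) := fun j => hvm.comp (measurable_pi_apply j)
  have hvs : Measurable (fun X : Fin (n+1) → E => ∑ j, v (X j)) := Finset.measurable_sum _ (fun j _ => hv1 j)
  have hIs : Measurable (fun X : Fin (n+1) → E => I (∑ j, X j)) := hIm.comp (by fun_prop)
  have e : ∀ X : Fin (n+1) → E, (I (∑ j, X j) - ∑ j, v (X j))^2 =
      I (∑ j, X j) - 2 * ∑ j, (v (X j) * I (∑ i, X i)) + (∑ j, v (X j))^2 := by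
    intro X
    have : I (∑ j, X j)^2 = I (∑ j, X j) := by
      by_cases hx : ∑ j, X j ∈ A <;> simp [I, hx]
    rw [sub_sq, this, ← Finset.sum_mul]; ring
  have i1 : Integrable (fun X : Fin (n+1) → E => I (∑ j, X j)) (PP F n) :=
    integrable_bdd _ 1 hIs (fun X => hIb _)
  have i2' : ∀ j, Integrable (fun X : Fin (n+1) → E => v (X j) * I (∑ i, X i)) (PP F n) := by
    intro j
    refine integrable_bdd _ 1 ((hv1 j).mul hIs) (fun X => ?_)
    rw [abs_mul]
    exact mul_le_one₀ (hvb _) (abs_nonneg _) (hIb _)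
  have i2 : Integrable (fun X : Fin (n+1) → E => 2 * ∑ j, (v (X j) * I (∑ i, X i))) (PP F n) :=
    (integrable_finsetSum _ (fun j _ => i2' j)).const_mul 2
  have i3 : Integrable (fun X : Fin (n+1) → E => (∑ j, v (X j))^2) (PP F n) := by
    refine integrable_bdd _ (((n:ℝ)+1)^2) (hvs.pow_const 2) (fun X => ?_)
    rw [abs_pow]
    exact pow_le_pow_left₀ (abs_nonneg _) (hsumb X) 2
  simp_rw [e] at h1
  have i12 : Integrable (fun X : Fin (n+1) → E => I (∑ j, X j) - 2 * ∑ j, (v (X j) * I (∑ i, X i))) (PP F n) := i1.sub i2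
  rw [integral_add i12 i3, integral_sub i1 i2, integral_const_mul,
    integral_finsetSum _ (fun j _ => i2' j),
    PP_integral_sum_sq F n 1 hvm hvb (vv_integral F n hA)] at h1
  have k1 : ∫ X, I (∑ j, X j) ∂(PP F n) = (convPow F (n+1)).real A := by
    have : ∫ q, I q ∂((PP F n).map (fun X => ∑ j, X j)) = ∫ X, I (∑ j, X j) ∂(PP F n) :=
      integral_map (by fun_prop) hIm.aestronglyMeasurable
    rw [← this, pi_map_sum]
    simp [I, integral_indicator hA]
  have k2 : ∀ j, ∫ X, v (X j) * I (∑ i, X i) ∂(PP F n) = ∫ a, (v a)^2 ∂F := by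
    intro j
    have := pi_integral_pair F n j (fun a t => v a * I t)
      ((hvm.comp measurable_fst).mul (hIm.comp measurable_snd))
    rw [this, integral_prod]
    · have q : ∀ a, ∫ s, v a * I (a + s) ∂(convPow F n) = (v a)^2 + (convPow F (n+1)).real A * v a := by
        intro a
        rw [integral_const_mul]
        have : ∫ s, I (a + s) ∂(convPow F n) = pp (convPow F n) A a := by
          have hs : MeasurableSet {s | s + a ∈ A} := (show Measurable (fun s => s + a) by fun_prop) hA
          have : (fun s => I (a + s)) = Set.indicator {s | s + a ∈ A} (fun _ => (1:ℝ)) := by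
            ext s; simp only [I, Set.indicator, Set.mem_ofPred_eq, add_comm]
          rw [this, integral_indicator hs]; simp [pp]
        rw [this]
        simp only [v, vv]; ring
      simp only [q]
      rw [integral_add, integral_const_mul, vv_integral F n hA]
      · ring
      · refine integrable_bdd _ 1 (hvm.pow_const 2) (fun a => ?_)
        rw [abs_pow]; exact pow_le_one₀ (abs_nonneg _) (hvb a)
      · exact (vv_integrable F n hA).const_mul _
    · refine integrable_bdd _ 1 ((hvm.comp measurable_fst).mul (hIm.comp (by fun_prop))) (fun X => ?_)
      rw [abs_mul]
      exact mul_le_one₀ (hvb _) (abs_nonneg _) (hIb _)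
  simp_rw [k2] at h1
  rw [k1] at h1
  simp at h1
  linarith

end Gen

section Q
variable {d : ℕ}

/-- the quadrant -/
def QQ (x : Euc d) : Set (Euc d) := {y | ∀ i, y i ≤ x i}
def HH (c : Fin d) (t : ℝ) : Set (Euc d) := {y | y c ≤ t}

lemma meas_coord (c : Fin d) : Measurable (fun y : Euc d => y c) := by fun_prop

lemma HH_meas (c : Fin d) (t : ℝ) : MeasurableSet (HH c t) :=
  measurableSet_le (meas_coord c) measurable_const

lemma QQ_meas (x : Euc d) : MeasurableSet (QQ x) := by
  have : QQ x = ⋂ c, HH c (x c) := by ext y; simp [QQ, HH]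
  rw [this]; exact MeasurableSet.iInter (fun c => HH_meas c _)

lemma symm_convPow {F : Measure (Euc d)} [IsProbabilityMeasure F] (hF : IsSymmMeasure F) (n : ℕ) :
    IsSymmMeasure (convPow F n) := by
  unfold IsSymmMeasure at *
  induction n with
  | zero => show (Measure.dirac (0 : Euc d)).map (fun x => -x) = Measure.dirac 0
            rw [Measure.map_dirac' (measurable_neg)]; simp
  | succ n ih =>
    have h := Measure.map_conv_addMonoidHom (μ := convPow F n) (ν := F) (negAddMonoidHom : Euc d →+ Euc d)
      (by show Measurable (fun x : Euc d => -x); fun_prop)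
    have h' : ((convPow F n).conv F).map (fun x => -x) =
      ((convPow F n).map (fun x => -x)).conv (F.map (fun x => -x)) := h
    rw [ih, hF] at h'
    exact h'

lemma symm_integral {F : Measure (Euc d)} (hF : IsSymmMeasure F) {g : Euc d → ℝ} (hg : Measurable g) :
    ∫ a, g (-a) ∂F = ∫ a, g a ∂F := by
  have : ∫ q, g q ∂(F.map (fun x => -x)) = ∫ a, g (-a) ∂F :=
    integral_map (by fun_prop) hg.aestronglyMeasurable
  rw [← this, hF]

lemma ppQ_sub_le (ν : Measure (Euc d)) [IsProbabilityMeasure ν] (x a b : Euc d) :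
    pp ν (QQ x) a - pp ν (QQ x) b ≤ ∑ c, |pp ν (HH c (x c)) a - pp ν (HH c (x c)) b| := by
  have hsub : {s | s + a ∈ QQ x} ⊆ {s | s + b ∈ QQ x} ∪
      ⋃ c ∈ (Finset.univ : Finset (Fin d)), ({s | s + a ∈ HH c (x c)} \ {s | s + b ∈ HH c (x c)}) := by
    intro s hs
    by_cases h : s + b ∈ QQ x
    · exact Or.inl h
    · right
      have : ∃ c, ¬ (s + b) c ≤ x c := by
        by_contra hc; push Not at hc; exact h hc
      obtain ⟨c, hc⟩ := this
      simp only [Set.mem_iUnion]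
      exact ⟨c, Finset.mem_univ c, hs c, hc⟩
  have h1 := measureReal_mono (μ := ν) hsub
  have h2 := h1.trans (measureReal_union_le _ _)
  have h3 := measureReal_biUnion_finset_le (μ := ν) Finset.univ
    (fun c => ({s | s + a ∈ HH c (x c)} \ {s | s + b ∈ HH c (x c)}))
  have h4 : ∀ c, ν.real ({s | s + a ∈ HH c (x c)} \ {s | s + b ∈ HH c (x c)}) ≤
      |pp ν (HH c (x c)) a - pp ν (HH c (x c)) b| := by
    intro c
    rcases le_total (a c) (b c) with hab | hab
    · have hss : {s | s + b ∈ HH c (x c)} ⊆ {s | s + a ∈ HH c (x c)} := by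
        intro s hs
        have : s c + b c ≤ x c := hs
        show s c + a c ≤ x c
        linarith
      have hm : MeasurableSet {s | s + b ∈ HH c (x c)} :=
        (show Measurable (fun s => s + b) by fun_prop) (HH_meas c _)
      rw [measureReal_sdiff hss hm]
      exact le_abs_self _
    · have : {s | s + a ∈ HH c (x c)} \ {s | s + b ∈ HH c (x c)} = ∅ := by
        rw [Set.sdiff_eq_empty]
        intro s hs
        have : s c + a c ≤ x c := hs
        show s c + b c ≤ x c
        linarith
      rw [this]; simp
  have h5 := Finset.sum_le_sum (fun c (_ : c ∈ Finset.univ) => h4 c)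
  unfold pp at *
  linarith

lemma ppQ_abs_sub_le (ν : Measure (Euc d)) [IsProbabilityMeasure ν] (x a b : Euc d) :
    |pp ν (QQ x) a - pp ν (QQ x) b| ≤ ∑ c, |pp ν (HH c (x c)) a - pp ν (HH c (x c)) b| := by
  rw [abs_le]
  refine ⟨?_, ppQ_sub_le ν x a b⟩
  have := ppQ_sub_le ν x b a
  simp_rw [abs_sub_comm (pp ν (HH _ _) b)] at this
  linarith

lemma ppH_anti (ν : Measure (Euc d)) [IsProbabilityMeasure ν] (c : Fin d) (t : ℝ) {a b : Euc d} (h : a c ≤ b c) :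
    pp ν (HH c t) b ≤ pp ν (HH c t) a := by
  refine measureReal_mono (fun s hs => ?_)
  have : s c + b c ≤ t := hs
  show s c + a c ≤ t
  linarith

lemma ppH_zero_le (ν : Measure (Euc d)) [IsProbabilityMeasure ν] (c : Fin d) (t : ℝ) (a : Euc d) :
    |pp ν (HH c t) 0 - pp ν (HH c t) a| ≤ |pp ν (HH c t) a - pp ν (HH c t) (-a)| := by
  rcases le_total 0 (a c) with h | h
  · have h1 := ppH_anti ν c t (a := 0) (b := a) (by simpa using h)
    have h2 := ppH_anti ν c t (a := -a) (b := 0) (by simpa using h)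
    rw [abs_of_nonneg (by linarith), abs_of_nonpos (by linarith)]; linarith
  · have h1 := ppH_anti ν c t (a := a) (b := 0) (by simpa using h)
    have h2 := ppH_anti ν c t (a := 0) (b := -a) (by simpa using h)
    rw [abs_of_nonpos (by linarith), abs_of_nonneg (by linarith)]; linarith

variable (F : Measure (Euc d)) [IsProbabilityMeasure F] (n : ℕ)

lemma pp_zero (ν : Measure (Euc d)) (A : Set (Euc d)) : pp ν A 0 = ν.real A := by
  simp [pp]

lemma vv_abs_int {A : Set (Euc d)} (hA : MeasurableSet A) :
    ∫ a, |vv F n A a| ∂F ≤ 1 / Real.sqrt (n+1) := by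
  have hb := bessel F n hA
  have hle : (convPow F (n+1)).real A ≤ 1 := measureReal_le_one
  set r := Real.sqrt (n+1) with hr
  have hr0 : 0 < r := Real.sqrt_pos.mpr (by positivity)
  have hr2 : r^2 = n+1 := Real.sq_sqrt (by positivity)
  have hi2 : Integrable (fun a => (vv F n A a)^2) F := by
    refine integrable_bdd _ 1 ((vv_measurable F n hA).pow_const 2) (fun a => ?_)
    rw [abs_pow]; exact pow_le_one₀ (abs_nonneg _) (vv_abs_le F n A a)
  have h1 : ∫ a, |vv F n A a| ∂F ≤ ∫ a, ((r/2) * (vv F n A a)^2 + 1/(2*r)) ∂F := by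
    apply integral_mono (vv_integrable F n hA).abs ((hi2.const_mul _).add (integrable_const _))
    intro a
    show |vv F n A a| ≤ (r/2) * (vv F n A a)^2 + 1/(2*r)
    rw [← sq_abs (vv F n A a)]
    have e : (r/2) * |vv F n A a|^2 + 1/(2*r) - |vv F n A a| = (r * |vv F n A a| - 1)^2/(2*r) := by
      field_simp; ring
    have : 0 ≤ (r * |vv F n A a| - 1)^2/(2*r) := by positivity
    linarith
  rw [integral_add (hi2.const_mul _) (integrable_const _), integral_const_mul] at h1
  simp only [integral_const, probReal_univ, smul_eq_mul, one_mul] at h1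
  refine h1.trans ?_
  rw [← hr2] at hb
  have hb' : ∫ a, (vv F n A a)^2 ∂F ≤ 1 / r^2 := by
    rw [le_div_iff₀ (by positivity)]; linarith
  calc r/2 * ∫ a, (vv F n A a)^2 ∂F + 1/(2*r) ≤ r/2 * (1/r^2) + 1/(2*r) := by gcongr
    _ = 1/r := by field_simp; ring

lemma step2 (hF : IsSymmMeasure F) (x : Euc d) :
    |(convPow F n).real (QQ x) - (convPow F (n+1)).real (QQ x)| ≤ 2 * d / Real.sqrt (n+1) := by
  set ν := convPow F n with hν
  have hQ := QQ_meas x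
  have e : ν.real (QQ x) - (convPow F (n+1)).real (QQ x) =
      ∫ a, (pp ν (QQ x) 0 - pp ν (QQ x) a) ∂F := by
    rw [integral_sub (integrable_const _) (pp_integrable _ _ hQ), convPow_succ_eq, mconv_real _ _ hQ]
    simp [pp_zero]
    rfl
  have hvm : ∀ c, Measurable (fun a => |vv F n (HH c (x c)) a|) := fun c =>
    (vv_measurable F n (HH_meas c (x c))).abs
  have hi1 : ∀ c, Integrable (fun a => |vv F n (HH c (x c)) a|) F := fun c =>
    (vv_integrable F n (HH_meas c (x c))).abs
  have hi2 : ∀ c, Integrable (fun a => |vv F n (HH c (x c)) (-a)|) F := fun c =>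
    integrable_bdd _ 1 ((hvm c).comp measurable_neg) (fun a => by
      rw [abs_abs]; exact vv_abs_le F n _ _)
  rw [e, ← Real.norm_eq_abs]
  have hint : Integrable (fun a => ∑ c, (|vv F n (HH c (x c)) a| + |vv F n (HH c (x c)) (-a)|)) F :=
    integrable_finsetSum _ (fun c _ => (hi1 c).add (hi2 c))
  refine (norm_integral_le_of_norm_le hint (Filter.Eventually.of_forall fun a => ?_)).trans ?_
  · rw [Real.norm_eq_abs]
    refine (ppQ_abs_sub_le ν x 0 a).trans (Finset.sum_le_sum fun c _ => ?_)
    refine (ppH_zero_le ν c (x c) a).trans ?_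
    have : pp ν (HH c (x c)) a - pp ν (HH c (x c)) (-a) = vv F n (HH c (x c)) a - vv F n (HH c (x c)) (-a) := by
      simp only [vv, ν]; ring
    rw [this]; exact abs_sub _ _
  · have hi3 : ∀ c, Integrable (fun a => |vv F n (HH c (x c)) a| + |vv F n (HH c (x c)) (-a)|) F := fun c => (hi1 c).add (hi2 c)
    rw [integral_finsetSum _ (fun c _ => hi3 c)]
    have : ∀ c ∈ (Finset.univ : Finset (Fin d)), ∫ a, (|vv F n (HH c (x c)) a| + |vv F n (HH c (x c)) (-a)|) ∂F ≤ 2 / Real.sqrt (n+1) := by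
      intro c _
      rw [integral_add (hi1 c) (hi2 c), symm_integral hF (hvm c)]
      have := vv_abs_int F n (HH_meas c (x c))
      have e2 : 2 / Real.sqrt (n+1) = 1 / Real.sqrt (n+1) + 1 / Real.sqrt ((n:ℝ)+1) := by ring
      rw [e2]; linarith
    refine (Finset.sum_le_sum this).trans ?_
    simp only [Finset.sum_const, Finset.card_univ, Fintype.card_fin, nsmul_eq_mul]
    apply le_of_eq; ring

lemma joint_meas' {Ω : Type} [MeasurableSpace Ω]
    (ν : Measure (Euc d)) [IsProbabilityMeasure ν] (x : Euc d) {u a : Ω → Euc d}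
    (hu : Measurable u) (ha : Measurable a) : Measurable (fun ω => pp ν (QQ (x + u ω)) (a ω)) := by
  have h : MeasurableSet {q : Ω × Euc d | q.2 + a q.1 ∈ QQ (x + u q.1)} := by
    have : {q : Ω × Euc d | q.2 + a q.1 ∈ QQ (x + u q.1)} =
      ⋂ c, {q : Ω × Euc d | (q.2 + a q.1) c ≤ (x + u q.1) c} := by
      ext q; simp [QQ]
    rw [this]
    refine MeasurableSet.iInter (fun c => measurableSet_le ?_ ?_)
    · exact (meas_coord c).comp (measurable_snd.add (ha.comp measurable_fst))
    · exact (meas_coord c).comp (measurable_const.add (hu.comp measurable_fst))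
  exact (measurable_measure_prodMk_left h).ennreal_toReal

lemma refl_conv {ν : Measure (Euc d)} [IsProbabilityMeasure ν] (hν : IsSymmMeasure ν) (x : Euc d) :
    ∫ u, pp ν (QQ (x + u)) 0 ∂ν = (mconv ν ν).real (QQ x) := by
  rw [mconv_real _ _ (QQ_meas x), ← symm_integral hν (pp_measurable ν (QQ_meas x))]
  congr 1; ext u
  unfold pp
  congr 1; ext s
  simp [QQ, add_comm]

lemma joint_integrable {Ω : Type} [MeasurableSpace Ω] (P : Measure Ω) [IsProbabilityMeasure P]
    (ν : Measure (Euc d)) [IsProbabilityMeasure ν] (x : Euc d) {u a : Ω → Euc d}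
    (hu : Measurable u) (ha : Measurable a) :
    Integrable (fun ω => pp ν (QQ (x + u ω)) (a ω)) P := by
  have h2 : Measurable (fun ω => pp ν (QQ (x + u ω)) (a ω)) := joint_meas' ν x hu ha
  refine integrable_bdd _ 1 h2 (fun X => ?_)
  rw [abs_of_nonneg (pp_nonneg _ _ _)]; exact pp_le_one _ _ _

lemma step3 (hF : IsSymmMeasure F) (x : Euc d) :
    (n+1) * ((convPow F (n+n)).real (QQ x) - (convPow F ((n+1)+(n+1))).real (QQ x)) =
    ∫ X, ∑ j, vv F n (QQ (x + ∑ i, X i)) (X j) ∂(PP F n) := by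
  have hm1 : Measurable (fun p : Euc d × Euc d => pp (convPow F n) (QQ (x + p.2)) p.1) :=
    joint_meas' (convPow F n) x measurable_snd measurable_fst
  have hm2 : Measurable (fun u => pp (convPow F (n+1)) (QQ (x + u)) 0) :=
    joint_meas' (convPow F (n+1)) x measurable_id measurable_const
  have hsm : Measurable (fun X : Fin (n+1) → Euc d => ∑ i, X i) :=
    Finset.measurable_sum _ (fun j _ => measurable_pi_apply j)
  have hj1 : ∀ j : Fin (n+1), Integrable (fun X : Fin (n+1) → Euc d => pp (convPow F n) (QQ (x + ∑ i, X i)) (X j)) (PP F n) := 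
    fun j => joint_integrable _ _ x hsm (measurable_pi_apply j)
  have hj2 : Integrable (fun X : Fin (n+1) → Euc d => (convPow F (n+1)).real (QQ (x + ∑ i, X i))) (PP F n) := by
    simp_rw [← pp_zero]
    exact joint_integrable _ _ x hsm measurable_const
  have hj3 : ∀ j : Fin (n+1), Integrable (fun X : Fin (n+1) → Euc d => vv F n (QQ (x + ∑ i, X i)) (X j)) (PP F n) := fun j => (hj1 j).sub hj2
  rw [integral_finsetSum _ (fun j _ => hj3 j)]
  have : ∀ j : Fin (n+1), ∫ X, vv F n (QQ (x + ∑ i, X i)) (X j) ∂(PP F n) =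
      (convPow F (n+n)).real (QQ x) - (convPow F ((n+1)+(n+1))).real (QQ x) := by
    intro j
    unfold vv
    rw [integral_sub (hj1 j) hj2]
    congr 1
    · rw [pi_integral_pair F n j (fun a u => pp (convPow F n) (QQ (x + u)) a) hm1]
      have e : ∀ p : Euc d × Euc d, pp (convPow F n) (QQ (x + (p.1 + p.2))) p.1
          = pp (convPow F n) (QQ (x + p.2)) 0 := by
        intro p
        unfold pp
        congr 1; ext s
        simp only [QQ, Set.mem_ofPred_eq, add_zero, PiLp.add_apply]
        refine forall_congr' fun c => ?_
        constructor <;> intro h <;> linarith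
      simp_rw [e]
      rw [integral_fun_snd (μ := F) (ν := convPow F n) (fun u => pp (convPow F n) (QQ (x + u)) 0)]
      simp only [probReal_univ, one_smul]
      rw [refl_conv (symm_convPow hF n), convPow_add]
    · have : ∫ q, pp (convPow F (n+1)) (QQ (x + q)) 0 ∂((PP F n).map (fun X => ∑ j, X j)) = ∫ X, pp (convPow F (n+1)) (QQ (x + ∑ j, X j)) 0 ∂(PP F n) :=
        integral_map hsm.aemeasurable hm2.aestronglyMeasurable
      simp_rw [pp_zero] at this
      rw [← this, pi_map_sum]
      have h3 := refl_conv (symm_convPow hF (n+1)) x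
      simp_rw [pp_zero] at h3
      rw [h3, ← convPow_add]
  simp_rw [this]; simp; try ring

end Q

section Gen
variable {E : Type} [AddCommGroup E] [MeasurableSpace E] [MeasurableAdd₂ E]
variable (F : Measure E) [IsProbabilityMeasure F] (n : ℕ)

lemma exp_moment {g : E → ℝ} (hg : Measurable g) (hb : ∀ a, |g a| ≤ 1)
    (h2 : ((n:ℝ)+1) * (∫ a, g a ∂F) + ((n:ℝ)+1) * ∫ a, (g a)^2 ∂F ≤ 2) :
    ∫ X, Real.exp (∑ j, g (X j)) ∂(PP F n) ≤ 8 := by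
  have hi1 : Integrable g F := integrable_bdd _ 1 hg hb
  have hi2 : Integrable (fun a => (g a)^2) F := by
    refine integrable_bdd _ 1 (hg.pow_const 2) (fun a => ?_)
    rw [abs_pow]; exact pow_le_one₀ (abs_nonneg _) (hb a)
  have hie : Integrable (fun a => Real.exp (g a)) F := by
    refine integrable_bdd _ (Real.exp 1) (hg.exp) (fun a => ?_)
    rw [abs_of_pos (Real.exp_pos _)]
    exact Real.exp_le_exp.mpr ((abs_le.mp (hb a)).2)
  have e1 : ∫ X, Real.exp (∑ j, g (X j)) ∂(PP F n) = (∫ a, Real.exp (g a) ∂F)^(n+1) := by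
    simp_rw [Real.exp_sum]
    have := integral_fintype_prod_eq_pow (𝕜 := ℝ) (ι := Fin (n+1)) (μ := F) (fun a => Real.exp (g a))
    rw [this]; simp
  rw [e1]
  have h1 : ∫ a, Real.exp (g a) ∂F ≤ Real.exp ((∫ a, g a ∂F) + ∫ a, (g a)^2 ∂F) := by
    have hi12 : Integrable (fun a => 1 + g a) F := (integrable_const _).add hi1
    have : ∫ a, Real.exp (g a) ∂F ≤ ∫ a, (1 + g a + (g a)^2) ∂F := by
      apply integral_mono hie (hi12.add hi2)
      intro a
      have := Real.abs_exp_sub_one_sub_id_le (hb a)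
      show Real.exp (g a) ≤ 1 + g a + (g a)^2
      linarith [(abs_le.mp this).2]
    rw [integral_add hi12 hi2, integral_add (integrable_const _) hi1] at this
    simp at this
    linarith [Real.add_one_le_exp ((∫ a, g a ∂F) + ∫ a, (g a)^2 ∂F)]
  have h0 : 0 ≤ ∫ a, Real.exp (g a) ∂F := integral_nonneg (fun a => (Real.exp_pos _).le)
  calc (∫ a, Real.exp (g a) ∂F)^(n+1) ≤ (Real.exp ((∫ a, g a ∂F) + ∫ a, (g a)^2 ∂F))^(n+1) := by gcongr
    _ = Real.exp (((n:ℝ)+1) * (∫ a, g a ∂F) + ((n:ℝ)+1) * ∫ a, (g a)^2 ∂F) := by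
      rw [← Real.exp_nat_mul]; push_cast; ring_nf
    _ ≤ Real.exp 2 := Real.exp_le_exp.mpr h2
    _ = Real.exp 1 * Real.exp 1 := by rw [← Real.exp_add]; norm_num
    _ ≤ 8 := by nlinarith [Real.exp_one_lt_d9, Real.exp_pos 1]

open Classical in
noncomputable def ee (θ : ℝ) (B : Set E) (a : E) : ℝ := if θ < pp (convPow F n) B a then 1 else 0
noncomputable def ww (θ : ℝ) (A A' B : Set E) (a : E) : ℝ :=
  (1 - ee F n θ B a) * (vv F n A' a - vv F n A a)

lemma ee_meas (θ : ℝ) {B : Set E} (hB : MeasurableSet B) : Measurable (ee F n θ B) :=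
  Measurable.ite (measurableSet_lt measurable_const (pp_measurable _ hB)) measurable_const measurable_const

lemma ee_cases (θ : ℝ) (B : Set E) (a : E) :
    (ee F n θ B a = 0 ∧ pp (convPow F n) B a ≤ θ) ∨ (ee F n θ B a = 1 ∧ θ < pp (convPow F n) B a) := by
  unfold ee
  by_cases h : θ < pp (convPow F n) B a
  · right; simp [h]
  · left; simp [h]; exact not_lt.mp h

lemma ee_abs (θ : ℝ) (B : Set E) (a : E) : |ee F n θ B a| ≤ 1 := by
  rcases ee_cases F n θ B a with h | h <;> rw [h.1] <;> simp

lemma ee_nonneg (θ : ℝ) (B : Set E) (a : E) : 0 ≤ ee F n θ B a := by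
  rcases ee_cases F n θ B a with h | h <;> rw [h.1] <;> simp

lemma ww_meas (θ : ℝ) {A A' B : Set E} (hA : MeasurableSet A) (hA' : MeasurableSet A') (hB : MeasurableSet B) :
    Measurable (ww F n θ A A' B) :=
  (measurable_const.sub (ee_meas F n θ hB)).mul ((vv_measurable F n hA').sub (vv_measurable F n hA))

lemma vv_diff {U V : Set E} (hU : MeasurableSet U) (h : U ⊆ V) (a : E) :
    vv F n V a - vv F n U a = vv F n (V \ U) a := by
  unfold vv pp
  have h1 : {s | s + a ∈ V \ U} = {s | s + a ∈ V} \ {s | s + a ∈ U} := rfl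
  have hm : MeasurableSet {s | s + a ∈ U} := (show Measurable (fun s => s + a) by fun_prop) hU
  have hs : {s | s + a ∈ U} ⊆ {s | s + a ∈ V} := fun s hs => h hs
  rw [h1, measureReal_sdiff hs hm, measureReal_sdiff h hU]
  ring

lemma vv_le_of_subset {D B : Set E} (h : D ⊆ B) (a : E) {t : ℝ}
    (h1 : pp (convPow F n) B a ≤ t) (h2 : (convPow F (n+1)).real B ≤ t) : |vv F n D a| ≤ t := by
  have k1 := pp_mono (convPow F n) h a
  have k2 : (convPow F (n+1)).real D ≤ (convPow F (n+1)).real B := measureReal_mono h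
  have k3 := pp_nonneg (convPow F n) D a
  have k4 : 0 ≤ (convPow F (n+1)).real D := measureReal_nonneg
  rw [vv, abs_le]; constructor <;> linarith

/-- parameters -/
noncomputable def th (D : ℝ) (k : ℕ) : ℝ := 2 * D / 2^k

lemma th_pos {D : ℝ} (hD : 1 ≤ D) (k : ℕ) : 0 < th D k := by unfold th; positivity

lemma four_le_th {D : ℝ} (hD : 1 ≤ D) (k : ℕ) : D / 4^k ≤ th D k / 2 := by
  unfold th
  have h : (4:ℝ)^k = 2^k * 2^k := by rw [← mul_pow]; norm_num
  have h1 : (1:ℝ) ≤ 2^k := one_le_pow₀ (by norm_num)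
  rw [h]
  have : 2 * D / 2^k / 2 = D / 2^k := by ring
  rw [this]
  apply div_le_div_of_nonneg_left (by linarith) (by positivity)
  nlinarith

lemma th_succ_le {D : ℝ} (hD : 1 ≤ D) (k : ℕ) : th D (k+1) ≤ th D k := by
  unfold th
  apply div_le_div_of_nonneg_left (by linarith) (by positivity)
  exact pow_le_pow_right₀ (by norm_num) (Nat.le_succ k)

lemma th_sq {D : ℝ} (k : ℕ) : th D k ^ 2 = 4 * D^2 / 4^k := by
  unfold th
  have h : (4:ℝ)^k = 2^k * 2^k := by rw [← mul_pow]; norm_num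
  rw [h]; field_simp; ring

lemma ee_int {D : ℝ} (hD : 1 ≤ D) (k : ℕ) {B : Set E} (hB : MeasurableSet B)
    (hμ : (convPow F (n+1)).real B ≤ D / 4^k) :
    ((n:ℝ)+1) * ∫ a, ee F n (th D k) B a ∂F ≤ 1 := by
  have hb := bessel F n hB
  have hθ := th_pos hD k
  have hi2 : Integrable (fun a => (vv F n B a)^2) F := by
    refine integrable_bdd _ 1 ((vv_measurable F n hB).pow_const 2) (fun a => ?_)
    rw [abs_pow]; exact pow_le_one₀ (abs_nonneg _) (vv_abs_le F n B a)
  have h1 : ∫ a, ee F n (th D k) B a ∂F ≤ ∫ a, (4 / th D k ^ 2) * (vv F n B a)^2 ∂F := by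
    apply integral_mono (integrable_bdd _ 1 (ee_meas F n _ hB) (ee_abs F n _ B)) (hi2.const_mul _)
    intro a
    show ee F n (th D k) B a ≤ (4 / th D k ^ 2) * (vv F n B a)^2
    rcases ee_cases F n (th D k) B a with h | h
    · rw [h.1]; positivity
    · rw [h.1]
      have h4 := four_le_th hD k
      have : th D k / 2 ≤ vv F n B a := by unfold vv; linarith
      have h5 : (th D k / 2)^2 ≤ (vv F n B a)^2 := by gcongr
      rw [div_mul_eq_mul_div, le_div_iff₀ (by positivity)]
      linarith
  rw [integral_const_mul] at h1
  have h2 : ((n:ℝ)+1) * ∫ a, ee F n (th D k) B a ∂F ≤ 4 / th D k ^ 2 * (((n:ℝ)+1) * ∫ a, (vv F n B a)^2 ∂F) := by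
    calc _ ≤ ((n:ℝ)+1) * (4 / th D k ^ 2 * ∫ a, (vv F n B a)^2 ∂F) := by gcongr
      _ = _ := by ring
  refine h2.trans ?_
  calc 4 / th D k ^ 2 * (((n:ℝ)+1) * ∫ a, (vv F n B a)^2 ∂F) ≤ 4 / th D k ^ 2 * (D/4^k) := by
        gcongr; exact hb.trans hμ
    _ = 1 / D := by rw [th_sq]; field_simp
    _ ≤ 1 := by rw [div_le_one (by linarith)]; exact hD

lemma ww_abs {D : ℝ} (hD : 1 ≤ D) (k : ℕ) {A A' B : Set E} (hA : MeasurableSet A) (hAA : A ⊆ A') (hAB : A' \ A ⊆ B)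
    (hμ : (convPow F (n+1)).real B ≤ D / 4^k) (a : E) :
    |ww F n (th D k) A A' B a| ≤ th D k := by
  have hθ := th_pos hD k
  unfold ww
  rw [vv_diff F n hA hAA]
  rcases ee_cases F n (th D k) B a with h | h
  · rw [h.1]; simp
    exact vv_le_of_subset F n hAB a h.2 (hμ.trans ((four_le_th hD k).trans (by linarith)))
  · rw [h.1]; simp; exact hθ.le

lemma ww_exp {D : ℝ} (hD : 1 ≤ D) (k : ℕ) {A A' B : Set E} (hA : MeasurableSet A) (hA' : MeasurableSet A')
    (hB : MeasurableSet B) (hAA : A ⊆ A') (hAB : A' \ A ⊆ B)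
    (hμ : (convPow F (n+1)).real B ≤ D / 4^k) (σ : ℝ) (hσ : |σ| = 1) :
    ∫ X, Real.exp (∑ j, σ * ww F n (th D k) A A' B (X j) / th D k) ∂(PP F n) ≤ 8 := by
  set θ := th D k with hθd
  have hθ : 0 < θ := th_pos hD k
  have hDm : MeasurableSet (A' \ A) := hA'.diff hA
  set v := vv F n (A' \ A) with hv
  have hvm : Measurable v := vv_measurable F n hDm
  have hvb : ∀ a, |v a| ≤ 1 := vv_abs_le F n _
  set e := ee F n θ B with he
  have hem : Measurable e := ee_meas F n θ hB
  have heb : ∀ a, |e a| ≤ 1 := ee_abs F n θ B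
  have hw : ∀ a, ww F n θ A A' B a = (1 - e a) * v a := by
    intro a; unfold ww; rw [vv_diff F n hA hAA]
  have hσ2 : σ^2 = 1 := by rw [← sq_abs, hσ]; norm_num
  have hwm := ww_meas F n θ hA hA' hB
  have hbes := bessel F n hDm
  have hmuD : (convPow F (n+1)).real (A' \ A) ≤ D/4^k := (measureReal_mono hAB).trans hμ
  have hee := ee_int F n hD k hB hμ
  have hi2 : Integrable (fun a => (v a)^2) F := by
    refine integrable_bdd _ 1 (hvm.pow_const 2) (fun a => ?_)
    rw [abs_pow]; exact pow_le_one₀ (abs_nonneg _) (hvb a)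
  have hie : Integrable e F := integrable_bdd _ 1 hem heb
  have hiv : Integrable v F := integrable_bdd _ 1 hvm hvb
  have hiev : Integrable (fun a => e a * v a) F := by
    refine integrable_bdd _ 1 (hem.mul hvm) (fun a => ?_)
    rw [abs_mul]; exact mul_le_one₀ (heb a) (abs_nonneg _) (hvb a)
  -- quadratic term
  have hquad : ((n:ℝ)+1) * ∫ a, (v a)^2 ∂F ≤ θ^2/4 := by
    refine (hbes.trans hmuD).trans ?_
    rw [hθd, th_sq]
    rw [div_div, mul_comm ((4:ℝ)^k), mul_div_mul_left _ _ (by norm_num : (4:ℝ) ≠ 0)]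
    gcongr; nlinarith
  refine exp_moment F n ((hwm.const_mul σ).div_const θ) (fun a => ?_) ?_
  · rw [abs_div, abs_mul, hσ, one_mul, abs_of_pos hθ, div_le_one hθ]
    exact ww_abs F n hD k hA hAA hAB hμ a
  · have l1 : ∫ a, σ * ww F n θ A A' B a / θ ∂F ≤ ∫ a, (1/2 * e a + 1/(2*θ^2) * (v a)^2) ∂F := by
      have r1 : ∫ a, σ * ww F n θ A A' B a / θ ∂F = ∫ a, -(σ/θ) * (e a * v a) ∂F := by
        have : ∀ a, σ * ww F n θ A A' B a / θ = (σ/θ) * v a + -(σ/θ) * (e a * v a) := by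
          intro a; rw [hw]; ring
        simp_rw [this]
        rw [integral_add (hiv.const_mul _) (hiev.const_mul _), integral_const_mul, vv_integral F n hDm]
        simp
      rw [r1]
      apply integral_mono (hiev.const_mul _) ((hie.const_mul _).add (hi2.const_mul _))
      intro a
      show -(σ/θ) * (e a * v a) ≤ 1/2 * e a + 1/(2*θ^2) * (v a)^2
      rcases ee_cases F n θ B a with h | h
      · rw [he, h.1]; simp; positivity
      · rw [he, h.1]
        have : 0 ≤ (1 + σ/θ * v a)^2/2 := by positivity
        have e2 : (1 + σ/θ * v a)^2/2 = 1/2 * 1 + 1/(2*θ^2) * (v a)^2 + (σ/θ) * (1 * v a) := by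
          have : (σ/θ * v a)^2 = (v a)^2/θ^2 := by rw [mul_pow, div_pow, hσ2]; ring
          rw [add_sq, this]; ring
        linarith
    have l2 : ∫ a, (σ * ww F n θ A A' B a / θ)^2 ∂F ≤ ∫ a, 1/θ^2 * (v a)^2 ∂F := by
      have r : ∀ a, (σ * ww F n θ A A' B a / θ)^2 ≤ 1/θ^2 * (v a)^2 := by
        intro a
        rw [hw, div_pow, mul_pow, hσ2, one_mul, mul_pow, one_div_mul_eq_div]
        gcongr
        rcases ee_cases F n θ B a with h | h
        · rw [he, h.1]; simp
        · rw [he, h.1]; simp; positivity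
      refine integral_mono_of_nonneg (Filter.Eventually.of_forall fun a => sq_nonneg _) (hi2.const_mul _)
        (Filter.Eventually.of_forall r)
    rw [integral_add (hie.const_mul _) (hi2.const_mul _), integral_const_mul, integral_const_mul] at l1
    rw [integral_const_mul] at l2
    set IE := ∫ a, e a ∂F
    set IV := ∫ a, (v a)^2 ∂F
    have hm : (0:ℝ) ≤ (n:ℝ)+1 := by positivity
    have l1' := mul_le_mul_of_nonneg_left l1 hm
    have l2' := mul_le_mul_of_nonneg_left l2 hm
    have q : 1/θ^2 * (((n:ℝ)+1) * IV) ≤ 1/4 := by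
      rw [one_div_mul_eq_div, div_le_iff₀ (by positivity)]; linarith
    have e3 : ((n:ℝ)+1) * (1/2 * IE + 1/(2*θ^2) * IV) = 1/2 * (((n:ℝ)+1)*IE) + 1/2 * (1/θ^2 * (((n:ℝ)+1) * IV)) := by
      field_simp
    have e4 : ((n:ℝ)+1) * (1/θ^2 * IV) = 1/θ^2 * (((n:ℝ)+1) * IV) := by ring
    rw [e3] at l1'; rw [e4] at l2'
    linarith

lemma ee_exp {D : ℝ} (hD : 1 ≤ D) (k : ℕ) {B : Set E} (hB : MeasurableSet B)
    (hμ : (convPow F (n+1)).real B ≤ D / 4^k) :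
    ∫ X, Real.exp (∑ j, ee F n (th D k) B (X j)) ∂(PP F n) ≤ 8 := by
  have hee := ee_int F n hD k hB hμ
  refine exp_moment F n (ee_meas F n _ hB) (ee_abs F n _ B) ?_
  have : ∀ a, (ee F n (th D k) B a)^2 = ee F n (th D k) B a := by
    intro a; rcases ee_cases F n (th D k) B a with h | h <;> rw [h.1] <;> simp
  simp_rw [this]; linarith

end Gen

/-- A finite-resolution chaining system for a family of sets `Q z`. -/
structure ChainSys {E : Type} [MeasurableSpace E] (μ : Measure E) (D L : ℝ) {Z : Type} (Q : Z → Set E) where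
  A : ℕ → Z → Set E
  B : ℕ → Z → Set E
  R : ℕ → Finset Z
  M : ℕ → ℝ
  hA : ∀ k z, MeasurableSet (A k z)
  hB : ∀ k z, MeasurableSet (B k z)
  hA0 : ∀ z, A 0 z = ∅
  hAA : ∀ k z, A k z ⊆ A (k+1) z
  hAQ : ∀ k z, A k z ⊆ Q z
  hQB : ∀ k z, Q z \ A k z ⊆ B k z
  hBB : ∀ k z, B (k+1) z ⊆ B k z
  hμ : ∀ k z, μ.real (B k z) ≤ D / 4^k
  hR : ∀ k z, ∃ r ∈ R k, A k z = A k r ∧ A (k+1) z = A (k+1) r ∧ B k z = B k r ∧ B (k+1) z = B (k+1) r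
  hM1 : ∀ k, 1 ≤ M k
  hcard : ∀ k, ((R k).card : ℝ) ≤ M k
  hlog : ∀ k, Real.log (M k) ≤ L * (k+2)

lemma le_log_add (t : ℝ) {M : ℝ} (hM : 1 ≤ M) : t ≤ Real.log M + Real.exp t / M := by
  have h := Real.add_one_le_exp (t - Real.log M)
  rw [Real.exp_sub, Real.exp_log (by linarith)] at h
  linarith

lemma sum_geo (K : ℕ) : ∑ k ∈ Finset.range K, ((k:ℝ)+2)/2^k ≤ 6 := by
  have : ∑ k ∈ Finset.range K, ((k:ℝ)+2)/2^k = 6 - (2*K+6)/2^K := by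
    induction K with
    | zero => simp
    | succ K ih =>
      rw [Finset.sum_range_succ, ih]; push_cast; field_simp; ring
  rw [this]
  have : (0:ℝ) ≤ (2*K+6)/2^K := by positivity
  linarith

section Gen
variable {E : Type} [AddCommGroup E] [MeasurableSpace E] [MeasurableAdd₂ E]
variable (F : Measure E) [IsProbabilityMeasure F] (n : ℕ)
variable {D L : ℝ} {Z : Type} {Q : Z → Set E}

lemma chain_point (hD : 1 ≤ D) (S : ChainSys (convPow F (n+1)) D L Q) (z : Z) (a : E) (K : ℕ) :
    |vv F n (Q z) a - ∑ k ∈ Finset.range K, ww F n (th D k) (S.A k z) (S.A (k+1) z) (S.B k z) a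
      - (1 - ee F n (th D K) (S.B K z) a) * (vv F n (Q z) a - vv F n (S.A K z) a)| ≤
    ∑ k ∈ Finset.range K, th D k * (ee F n (th D k) (S.B k z) a + ee F n (th D (k+1)) (S.B (k+1) z) a) := by
  induction K with
  | zero =>
    have h0 : ee F n (th D 0) (S.B 0 z) a = 0 := by
      rcases ee_cases F n (th D 0) (S.B 0 z) a with h | h
      · exact h.1
      · have := pp_le_one (convPow F n) (S.B 0 z) a
        have h2 := h.2
        unfold th at h2; simp at h2; linarith
    rw [h0, S.hA0]
    simp [vv, pp]
  | succ K ih =>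
    rw [Finset.sum_range_succ, Finset.sum_range_succ]
    have e : vv F n (Q z) a - (∑ k ∈ Finset.range K, ww F n (th D k) (S.A k z) (S.A (k+1) z) (S.B k z) a
      + ww F n (th D K) (S.A K z) (S.A (K+1) z) (S.B K z) a)
      - (1 - ee F n (th D (K+1)) (S.B (K+1) z) a) * (vv F n (Q z) a - vv F n (S.A (K+1) z) a) =
      (vv F n (Q z) a - ∑ k ∈ Finset.range K, ww F n (th D k) (S.A k z) (S.A (k+1) z) (S.B k z) a
      - (1 - ee F n (th D K) (S.B K z) a) * (vv F n (Q z) a - vv F n (S.A K z) a)) +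
      (ee F n (th D (K+1)) (S.B (K+1) z) a - ee F n (th D K) (S.B K z) a) * (vv F n (Q z) a - vv F n (S.A (K+1) z) a) := by
      unfold ww; ring
    rw [e]
    refine (abs_add_le _ _).trans (add_le_add ih ?_)
    rw [vv_diff F n (S.hA _ _) (S.hAQ _ _)]
    have hθ := th_pos hD K
    have hθ' := th_pos hD (K+1)
    have hs := th_succ_le hD K
    have f1 := four_le_th hD K
    have f2 := four_le_th hD (K+1)
    have m1 := S.hμ K z
    have m2 := S.hμ (K+1) z
    have hsub1 := S.hQB (K+1) z
    have hsub2 := hsub1.trans (S.hBB K z)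
    rcases ee_cases F n (th D K) (S.B K z) a with h | h <;>
    rcases ee_cases F n (th D (K+1)) (S.B (K+1) z) a with h' | h' <;> rw [h.1, h'.1]
    · simp
    · have := vv_le_of_subset F n hsub2 a h.2 (by linarith)
      simpa using this
    · have := vv_le_of_subset F n hsub1 a h'.2 (by linarith)
      simp; linarith
    · simp; linarith

lemma chain_point2 (hD : 1 ≤ D) (S : ChainSys (convPow F (n+1)) D L Q) (z : Z) (a : E) (K : ℕ) :
    |vv F n (Q z) a - ∑ k ∈ Finset.range K, ww F n (th D k) (S.A k z) (S.A (k+1) z) (S.B k z) a| ≤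
    ∑ k ∈ Finset.range K, th D k * (ee F n (th D k) (S.B k z) a + ee F n (th D (k+1)) (S.B (k+1) z) a)
      + th D K := by
  have h := chain_point F n hD S z a K
  have h2 : |(1 - ee F n (th D K) (S.B K z) a) * (vv F n (Q z) a - vv F n (S.A K z) a)| ≤ th D K := by
    rw [vv_diff F n (S.hA _ _) (S.hAQ _ _)]
    rcases ee_cases F n (th D K) (S.B K z) a with h | h
    · rw [h.1]; simp
      have f1 := four_le_th hD K
      have hθ := th_pos hD K
      exact vv_le_of_subset F n (S.hQB K z) a h.2 ((S.hμ K z).trans (by linarith))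
    · rw [h.1]; simp; exact (th_pos hD K).le
  rw [abs_le] at *
  constructor <;> linarith

noncomputable def YY (S : ChainSys (convPow F (n+1)) D L Q) (k : ℕ) (z : Z) (X : Fin (n+1) → E) : ℝ :=
  ∑ j, ww F n (th D k) (S.A k z) (S.A (k+1) z) (S.B k z) (X j)
noncomputable def NN (S : ChainSys (convPow F (n+1)) D L Q) (k : ℕ) (z : Z) (X : Fin (n+1) → E) : ℝ :=
  ∑ j, ee F n (th D k) (S.B k z) (X j)

lemma chain_sum (hD : 1 ≤ D) (S : ChainSys (convPow F (n+1)) D L Q) (z : Z) (X : Fin (n+1) → E) (K : ℕ) :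
    |∑ j, vv F n (Q z) (X j)| ≤
      ∑ k ∈ Finset.range K, th D k * (|YY F n S k z X| / th D k + NN F n S k z X + NN F n S (k+1) z X)
        + (n+1) * th D K := by
  have h1 : ∀ j, |vv F n (Q z) (X j) - ∑ k ∈ Finset.range K, ww F n (th D k) (S.A k z) (S.A (k+1) z) (S.B k z) (X j)| ≤ _ :=
    fun j => chain_point2 F n hD S z (X j) K
  have h2 : |∑ j, (vv F n (Q z) (X j) - ∑ k ∈ Finset.range K, ww F n (th D k) (S.A k z) (S.A (k+1) z) (S.B k z) (X j))| ≤ _ :=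
    (Finset.abs_sum_le_sum_abs _ _).trans (Finset.sum_le_sum (fun j _ => h1 j))
  rw [Finset.sum_sub_distrib, Finset.sum_add_distrib, Finset.sum_comm] at h2
  conv_rhs at h2 => enter [1]; rw [Finset.sum_comm]
  have h3 : |∑ k ∈ Finset.range K, YY F n S k z X| ≤ ∑ k ∈ Finset.range K, |YY F n S k z X| := Finset.abs_sum_le_sum_abs _ _
  have h4 : |∑ j, vv F n (Q z) (X j)| ≤ |∑ j, vv F n (Q z) (X j) - ∑ k ∈ Finset.range K, YY F n S k z X| + |∑ k ∈ Finset.range K, YY F n S k z X| := by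
    have := abs_add_le (∑ j, vv F n (Q z) (X j) - ∑ k ∈ Finset.range K, YY F n S k z X) (∑ k ∈ Finset.range K, YY F n S k z X)
    simpa using this
  have e1 : ∀ k ∈ Finset.range K, th D k * (|YY F n S k z X| / th D k + NN F n S k z X + NN F n S (k+1) z X) =
      |YY F n S k z X| + ∑ j, th D k * (ee F n (th D k) (S.B k z) (X j) + ee F n (th D (k+1)) (S.B (k+1) z) (X j)) := by
    intro k _
    have hθ := th_pos hD k
    rw [← Finset.mul_sum, Finset.sum_add_distrib]
    unfold NN
    rw [mul_add, mul_add, mul_add, mul_div_cancel₀ _ hθ.ne']; ring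
  rw [Finset.sum_congr rfl e1, Finset.sum_add_distrib]
  simp only [Finset.sum_const, Finset.card_univ, Fintype.card_fin, nsmul_eq_mul] at h2
  push_cast at h2
  unfold YY at *
  linarith

noncomputable def PhiK (S : ChainSys (convPow F (n+1)) D L Q) (k : ℕ) (X : Fin (n+1) → E) : ℝ :=
  3 * Real.log (S.M k) + (∑ r ∈ S.R k, (Real.exp (∑ j, 1 * ww F n (th D k) (S.A k r) (S.A (k+1) r) (S.B k r) (X j) / th D k)
    + Real.exp (∑ j, (-1) * ww F n (th D k) (S.A k r) (S.A (k+1) r) (S.B k r) (X j) / th D k)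
    + Real.exp (∑ j, ee F n (th D k) (S.B k r) (X j)) + Real.exp (∑ j, ee F n (th D (k+1)) (S.B (k+1) r) (X j)))) / S.M k

lemma PhiK_bound (hD : 1 ≤ D) (S : ChainSys (convPow F (n+1)) D L Q) (k : ℕ) (z : Z) (X : Fin (n+1) → E) :
    |YY F n S k z X| / th D k + NN F n S k z X + NN F n S (k+1) z X ≤ PhiK F n S k X := by
  obtain ⟨r, hr, a1, a2, b1, b2⟩ := S.hR k z
  have hθ := th_pos hD k
  unfold YY NN
  rw [a1, a2, b1, b2]
  set y := ∑ j, ww F n (th D k) (S.A k r) (S.A (k+1) r) (S.B k r) (X j) with hy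
  set n1 := ∑ j, ee F n (th D k) (S.B k r) (X j)
  set n2 := ∑ j, ee F n (th D (k+1)) (S.B (k+1) r) (X j)
  have hM := S.hM1 k
  have e1 : ∑ j, 1 * ww F n (th D k) (S.A k r) (S.A (k+1) r) (S.B k r) (X j) / th D k = y / th D k := by
    rw [hy, Finset.sum_div]; simp
  have e2 : ∑ j, (-1) * ww F n (th D k) (S.A k r) (S.A (k+1) r) (S.B k r) (X j) / th D k = -(y / th D k) := by
    rw [hy, Finset.sum_div, ← Finset.sum_neg_distrib]
    refine Finset.sum_congr rfl (fun j _ => by ring)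
  have key : Real.exp (y / th D k) + Real.exp (-(y / th D k)) + Real.exp n1 + Real.exp n2 ≤
      ∑ r ∈ S.R k, (Real.exp (∑ j, 1 * ww F n (th D k) (S.A k r) (S.A (k+1) r) (S.B k r) (X j) / th D k)
    + Real.exp (∑ j, (-1) * ww F n (th D k) (S.A k r) (S.A (k+1) r) (S.B k r) (X j) / th D k)
    + Real.exp (∑ j, ee F n (th D k) (S.B k r) (X j)) + Real.exp (∑ j, ee F n (th D (k+1)) (S.B (k+1) r) (X j))) := by
    rw [← e2, ← e1]
    exact Finset.single_le_sum (f := fun r => (Real.exp (∑ j, 1 * ww F n (th D k) (S.A k r) (S.A (k+1) r) (S.B k r) (X j) / th D k)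
    + Real.exp (∑ j, (-1) * ww F n (th D k) (S.A k r) (S.A (k+1) r) (S.B k r) (X j) / th D k)
    + Real.exp (∑ j, ee F n (th D k) (S.B k r) (X j)) + Real.exp (∑ j, ee F n (th D (k+1)) (S.B (k+1) r) (X j)))) (fun i _ => by positivity) hr
  have key2 := div_le_div_of_nonneg_right key (by linarith : 0 ≤ S.M k)
  have ha : |y| / th D k ≤ Real.log (S.M k) + (Real.exp (y / th D k) + Real.exp (-(y / th D k))) / S.M k := by
    have p1 := le_log_add (y / th D k) hM
    have p2 := le_log_add (-(y / th D k)) hM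
    have q1 : 0 ≤ Real.exp (y / th D k) / S.M k := by positivity
    have q2 : 0 ≤ Real.exp (-(y / th D k)) / S.M k := by positivity
    rw [add_div]
    rcases abs_cases y with h | h <;> rw [h.1]
    · linarith
    · rw [neg_div]; linarith
  have h1 := le_log_add n1 hM
  have h2 := le_log_add n2 hM
  unfold PhiK
  rw [add_div, add_div] at key2
  linarith

lemma exp_sum_integrable {g : E → ℝ} (C : ℝ) (hg : Measurable g) (hb : ∀ a, |g a| ≤ C) :
    Integrable (fun X : Fin (n+1) → E => Real.exp (∑ j, g (X j))) (PP F n) := by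
  have hm : Measurable (fun X : Fin (n+1) → E => ∑ j, g (X j)) :=
    Finset.measurable_sum _ (fun j _ => hg.comp (measurable_pi_apply j))
  refine integrable_bdd _ (Real.exp ((n+1) * C)) hm.exp (fun X => ?_)
  rw [abs_of_pos (Real.exp_pos _)]
  apply Real.exp_le_exp.mpr
  refine (Finset.sum_le_sum (fun j _ => (abs_le.mp (hb (X j))).2)).trans ?_
  simp

lemma PhiK_int (hD : 1 ≤ D) (S : ChainSys (convPow F (n+1)) D L Q) (k : ℕ) :
    Integrable (PhiK F n S k) (PP F n) ∧ ∫ X, PhiK F n S k X ∂(PP F n) ≤ (3*L+16) * (k+2) := by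
  have hθ := th_pos hD k
  have hsub : ∀ r, S.A (k+1) r \ S.A k r ⊆ S.B k r := fun r x hx =>
    S.hQB k r ⟨S.hAQ (k+1) r hx.1, hx.2⟩
  have hwb : ∀ σ : ℝ, |σ| = 1 → ∀ r a, |σ * ww F n (th D k) (S.A k r) (S.A (k+1) r) (S.B k r) a / th D k| ≤ 1 := by
    intro σ hσ r a
    rw [abs_div, abs_mul, hσ, one_mul, abs_of_pos hθ, div_le_one hθ]
    exact ww_abs F n hD k (S.hA k r) (S.hAA k r) (hsub r) (S.hμ k r) a
  have hwi : ∀ σ : ℝ, |σ| = 1 → ∀ r, Integrable (fun X : Fin (n+1) → E => Real.exp (∑ j, σ * ww F n (th D k) (S.A k r) (S.A (k+1) r) (S.B k r) (X j) / th D k)) (PP F n) := by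
    intro σ hσ r
    exact exp_sum_integrable F n (g := fun a => σ * ww F n (th D k) (S.A k r) (S.A (k+1) r) (S.B k r) a / th D k) 1
      (((ww_meas F n _ (S.hA k r) (S.hA (k+1) r) (S.hB k r)).const_mul σ).div_const _) (hwb σ hσ r)
  have i1 := hwi 1 (by norm_num)
  have i2 := hwi (-1) (by norm_num)
  have i3 : ∀ k r, Integrable (fun X : Fin (n+1) → E => Real.exp (∑ j, ee F n (th D k) (S.B k r) (X j))) (PP F n) :=
    fun k r => exp_sum_integrable F n 1 (ee_meas F n _ (S.hB k r)) (ee_abs F n _ _)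
  have i12 : ∀ r, Integrable (fun X : Fin (n+1) → E => Real.exp (∑ j, 1 * ww F n (th D k) (S.A k r) (S.A (k+1) r) (S.B k r) (X j) / th D k)
    + Real.exp (∑ j, (-1) * ww F n (th D k) (S.A k r) (S.A (k+1) r) (S.B k r) (X j) / th D k)) (PP F n) := fun r => (i1 r).add (i2 r)
  have i123 : ∀ r, Integrable (fun X : Fin (n+1) → E => Real.exp (∑ j, 1 * ww F n (th D k) (S.A k r) (S.A (k+1) r) (S.B k r) (X j) / th D k)
    + Real.exp (∑ j, (-1) * ww F n (th D k) (S.A k r) (S.A (k+1) r) (S.B k r) (X j) / th D k)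
    + Real.exp (∑ j, ee F n (th D k) (S.B k r) (X j))) (PP F n) := fun r => (i12 r).add (i3 k r)
  have i4 : ∀ r, Integrable (fun X : Fin (n+1) → E => Real.exp (∑ j, 1 * ww F n (th D k) (S.A k r) (S.A (k+1) r) (S.B k r) (X j) / th D k)
    + Real.exp (∑ j, (-1) * ww F n (th D k) (S.A k r) (S.A (k+1) r) (S.B k r) (X j) / th D k)
    + Real.exp (∑ j, ee F n (th D k) (S.B k r) (X j)) + Real.exp (∑ j, ee F n (th D (k+1)) (S.B (k+1) r) (X j))) (PP F n) :=
    fun r => (i123 r).add (i3 (k+1) r)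
  have isum := (integrable_finsetSum (S.R k) (fun r _ => i4 r)).div_const (S.M k)
  refine ⟨(integrable_const _).add isum, ?_⟩
  unfold PhiK
  rw [integral_add (integrable_const _) isum, integral_div, integral_finsetSum _ (fun r _ => i4 r)]
  have hle : ∀ r ∈ S.R k, ∫ X, (Real.exp (∑ j, 1 * ww F n (th D k) (S.A k r) (S.A (k+1) r) (S.B k r) (X j) / th D k)
    + Real.exp (∑ j, (-1) * ww F n (th D k) (S.A k r) (S.A (k+1) r) (S.B k r) (X j) / th D k)
    + Real.exp (∑ j, ee F n (th D k) (S.B k r) (X j)) + Real.exp (∑ j, ee F n (th D (k+1)) (S.B (k+1) r) (X j))) ∂(PP F n) ≤ 32 := by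
    intro r _
    rw [integral_add (i123 r) (i3 (k+1) r), integral_add (i12 r) (i3 k r), integral_add (i1 r) (i2 r)]
    have b1 := ww_exp F n hD k (S.hA k r) (S.hA (k+1) r) (S.hB k r) (S.hAA k r) (hsub r) (S.hμ k r) 1 (by norm_num)
    have b2 := ww_exp F n hD k (S.hA k r) (S.hA (k+1) r) (S.hB k r) (S.hAA k r) (hsub r) (S.hμ k r) (-1) (by norm_num)
    have b3 := ee_exp F n hD k (S.hB k r) (S.hμ k r)
    have b4 := ee_exp F n hD (k+1) (S.hB (k+1) r) (S.hμ (k+1) r)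
    linarith
  have hs := Finset.sum_le_sum hle
  simp only [Finset.sum_const, nsmul_eq_mul] at hs
  have hM := S.hM1 k
  have hc := S.hcard k
  have hl := S.hlog k
  have hs2 := div_le_div_of_nonneg_right hs (by linarith : 0 ≤ S.M k)
  have hs3 : ((S.R k).card : ℝ) * 32 / S.M k ≤ 32 := by
    rw [div_le_iff₀ (by linarith)]; linarith
  simp only [integral_const, probReal_univ, smul_eq_mul, one_mul] at *
  have hk : (0:ℝ) ≤ k := Nat.cast_nonneg k
  nlinarith

lemma chain_main (hD : 1 ≤ D) (S : ChainSys (convPow F (n+1)) D L Q) :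
    ∃ Ψ : (Fin (n+1) → E) → ℝ, Integrable Ψ (PP F n) ∧
      (∀ X z, |∑ j, vv F n (Q z) (X j)| ≤ Ψ X) ∧ ∫ X, Ψ X ∂(PP F n) ≤ 12 * D * (3*L+16) + 1 := by
  obtain ⟨K, hK⟩ : ∃ K : ℕ, (n+1) * th D K ≤ 1 := by
    obtain ⟨K, hK⟩ := pow_unbounded_of_one_lt (((n:ℝ)+1) * (2*D)) (by norm_num : (1:ℝ) < 2)
    refine ⟨K, ?_⟩
    unfold th
    rw [← mul_div_assoc, div_le_one (by positivity)]; exact hK.le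
  have hi : ∀ k, Integrable (fun X => th D k * PhiK F n S k X) (PP F n) := fun k => (PhiK_int F n hD S k).1.const_mul _
  have hL : 0 ≤ 3*L+16 := by
    have h1 := S.hlog 0
    have h2 := Real.log_nonneg (S.hM1 0)
    simp at h1; linarith
  refine ⟨fun X => ∑ k ∈ Finset.range K, th D k * PhiK F n S k X + (n+1) * th D K, ?_, ?_, ?_⟩
  · exact (integrable_finsetSum _ (fun k _ => hi k)).add (integrable_const _)
  · intro X z
    refine (chain_sum F n hD S z X K).trans ?_
    refine add_le_add (Finset.sum_le_sum (fun k _ => ?_)) le_rfl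
    exact mul_le_mul_of_nonneg_left (PhiK_bound F n hD S k z X) (th_pos hD k).le
  · rw [integral_add (integrable_finsetSum _ (fun k _ => hi k)) (integrable_const _), integral_finsetSum _ (fun k _ => hi k)]
    have : ∀ k ∈ Finset.range K, ∫ X, th D k * PhiK F n S k X ∂(PP F n) ≤ 2 * D * (3*L+16) * (((k:ℝ)+2)/2^k) := by
      intro k _
      rw [integral_const_mul]
      calc th D k * ∫ X, PhiK F n S k X ∂(PP F n) ≤ th D k * ((3*L+16) * (k+2)) :=
            mul_le_mul_of_nonneg_left (PhiK_int F n hD S k).2 (th_pos hD k).le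
        _ = _ := by unfold th; ring
    have h2 := Finset.sum_le_sum this
    rw [← Finset.mul_sum] at h2
    have h3 := mul_le_mul_of_nonneg_left (sum_geo K) (by positivity : 0 ≤ 2 * D * (3*L+16))
    simp only [integral_const, probReal_univ, smul_eq_mul, one_mul]
    linarith

end Gen

lemma exists_quantile (ρ : Measure ℝ) [IsProbabilityMeasure ρ] {u : ℝ} (h0 : 0 < u) (h1 : u < 1) :
    ∃ q : ℝ, ρ.real (Set.Iio q) ≤ u ∧ u ≤ ρ.real (Set.Iic q) := by
  set f := ProbabilityTheory.cdf ρ with hf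
  have hmono : Monotone f := ProbabilityTheory.monotone_cdf ρ
  obtain ⟨t1, ht1⟩ : ∃ t, u ≤ f t :=
    (((ProbabilityTheory.tendsto_cdf_atTop ρ).eventually (lt_mem_nhds h1)).exists).imp (fun _ h => le_of_lt h)
  obtain ⟨t0, ht0⟩ : ∃ t, f t < u :=
    ((ProbabilityTheory.tendsto_cdf_atBot ρ).eventually (gt_mem_nhds h0)).exists
  set S : Set ℝ := {t | u ≤ f t}
  have hne : S.Nonempty := ⟨t1, ht1⟩
  have hbd : BddBelow S := ⟨t0, fun t ht => by
    by_contra hlt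
    push Not at hlt
    have := hmono hlt.le
    have h2 : u ≤ f t := ht
    linarith⟩
  set q := sInf S
  refine ⟨q, ?_, ?_⟩
  · have hlim : Filter.Tendsto f (nhdsWithin q (Set.Iio q)) (nhds (Function.leftLim f q)) := hmono.tendsto_leftLim q
    have hle : Function.leftLim f q ≤ u := by
      refine le_of_tendsto hlim ?_
      filter_upwards [self_mem_nhdsWithin] with t ht
      by_contra hlt
      push Not at hlt
      have : q ≤ t := csInf_le hbd hlt.le
      exact absurd ht (not_lt.mpr this)
    have hm : ρ (Set.Iio q) = ENNReal.ofReal (Function.leftLim f q - 0) := by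
      conv_lhs => rw [← ProbabilityTheory.measure_cdf ρ]
      exact StieltjesFunction.measure_Iio _ (ProbabilityTheory.tendsto_cdf_atBot ρ) q
    have hnn : 0 ≤ Function.leftLim f q := by
      refine ge_of_tendsto hlim (Filter.Eventually.of_forall fun t => ProbabilityTheory.cdf_nonneg ρ t)
    rw [measureReal_def, hm, ENNReal.toReal_ofReal (by linarith)]
    linarith
  · rw [← ProbabilityTheory.cdf_eq_real]
    have hc : Filter.Tendsto f (nhdsWithin q (Set.Ioi q)) (nhds (f q)) :=
      ((ProbabilityTheory.cdf ρ).right_continuous q).tendsto.mono_left (nhdsWithin_mono _ Set.Ioi_subset_Ici_self)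
    refine ge_of_tendsto hc ?_
    filter_upwards [self_mem_nhdsWithin] with t ht
    obtain ⟨s, hs, hst⟩ := exists_lt_of_csInf_lt hne ht
    exact le_trans hs (hmono hst.le)

noncomputable def grid (q : ℝ → ℝ) (k : ℕ) : Finset ℝ :=
  (Finset.Ico 1 (4^k)).image (fun i : ℕ => q ((i:ℝ)/4^k))

lemma grid_zero (q : ℝ → ℝ) : grid q 0 = ∅ := by simp [grid]

lemma grid_succ (q : ℝ → ℝ) (k : ℕ) : grid q k ⊆ grid q (k+1) := by
  intro g hg
  simp only [grid, Finset.mem_image, Finset.mem_Ico] at *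
  obtain ⟨i, ⟨h1, h2⟩, rfl⟩ := hg
  refine ⟨4*i, ⟨by omega, by rw [pow_succ]; omega⟩, ?_⟩
  congr 1; push_cast; rw [pow_succ]; field_simp

lemma grid_card (q : ℝ → ℝ) (k : ℕ) : (grid q k).card ≤ 4^k := by
  refine Finset.card_image_le.trans ?_
  simp

def strip (G : Finset ℝ) (ζ : ℝ) : Set ℝ := {t | ∀ g ∈ G, (g ≤ ζ ∧ g < t) ∨ (ζ < g ∧ t < g)}

lemma strip_meas (G : Finset ℝ) (ζ : ℝ) : MeasurableSet (strip G ζ) := by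
  have : strip G ζ = ⋂ g ∈ G, (({t | g ≤ ζ} ∩ {t | g < t}) ∪ ({t | ζ < g} ∩ {t : ℝ | t < g})) := by
    ext t; simp [strip]
  rw [this]
  refine Finset.measurableSet_biInter _ (fun g _ => ?_)
  exact ((MeasurableSet.const _).inter measurableSet_Ioi).union ((MeasurableSet.const _).inter measurableSet_Iio)

lemma strip_le (ρ : Measure ℝ) [IsProbabilityMeasure ρ] (q : ℝ → ℝ)
    (hq : ∀ u, 0 < u → u < 1 → ρ.real (Set.Iio (q u)) ≤ u ∧ u ≤ ρ.real (Set.Iic (q u))) (k : ℕ) (ζ : ℝ) :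
    ρ.real (strip (grid q k) ζ) ≤ 1 / 4^k := by
  set N := 4^k with hN
  have hN0 : 0 < N := by positivity
  have hNr : ((N:ℕ):ℝ) = 4^k := by rw [hN]; push_cast; rfl
  have hNp : (0:ℝ) < 4^k := by positivity
  rcases (strip (grid q k) ζ).eq_empty_or_nonempty with he | ⟨t, ht⟩
  · rw [he]; simp
  have hex : ∃ i : ℕ, i + 1 = N ∨ ζ < q (((i+1 : ℕ):ℝ)/4^k) := ⟨N - 1, Or.inl (by omega)⟩
  classical
  set i := Nat.find hex with hi
  have hspec := Nat.find_spec hex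
  have hmin : ∀ j, j < i → ¬ (j + 1 = N ∨ ζ < q (((j+1 : ℕ):ℝ)/4^k)) := fun j hj => Nat.find_min hex hj
  rw [← hi] at hspec
  have hiN : i + 1 ≤ N := by
    have : i ≤ N - 1 := Nat.find_min' hex (Or.inl (by omega))
    omega
  have hlow : ∃ Low : Set ℝ, MeasurableSet Low ∧ (i:ℝ)/4^k ≤ ρ.real Low ∧
      (∀ s ∈ strip (grid q k) ζ, ∀ l ∈ Low, l < s) := by
    rcases Nat.eq_zero_or_pos i with h | h
    · exact ⟨∅, MeasurableSet.empty, by simp [h], by simp⟩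
    · have h1 := hmin (i-1) (by omega)
      push Not at h1
      have e : i - 1 + 1 = i := by omega
      rw [e] at h1
      have hlt : (i:ℝ)/4^k < 1 := by
        rw [div_lt_one hNp, ← hNr]; exact_mod_cast (by omega : i < N)
      refine ⟨Set.Iic (q ((i:ℝ)/4^k)), measurableSet_Iic, (hq _ (by positivity) hlt).2, ?_⟩
      intro s hs l hl
      have hg : q ((i:ℝ)/4^k) ∈ grid q k := by
        simp only [grid, Finset.mem_image, Finset.mem_Ico]
        exact ⟨i, ⟨h, by omega⟩, rfl⟩
      rcases hs _ hg with h2 | h2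
      · exact lt_of_le_of_lt hl h2.2
      · exact absurd h2.1 (not_lt.mpr h1.2)
  have hup : ∃ Up : Set ℝ, ρ.real Up ≤ ((i:ℝ)+1)/4^k ∧ strip (grid q k) ζ ⊆ Up ∧
      (∀ s ∈ strip (grid q k) ζ, ∀ l, l < s → l ∈ Up) := by
    by_cases h : i + 1 = N
    · refine ⟨Set.univ, ?_, by simp, by simp⟩
      have : ((i:ℝ)+1) = 4^k := by rw [← hNr]; exact_mod_cast h
      rw [this, div_self hNp.ne']; simp
    · have h1 : ζ < q (((i+1 : ℕ):ℝ)/4^k) := by tauto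
      have hlt : ((i+1 : ℕ):ℝ)/4^k < 1 := by
        rw [div_lt_one hNp, ← hNr]; exact_mod_cast (by omega : i + 1 < N)
      have hg : q (((i+1 : ℕ):ℝ)/4^k) ∈ grid q k := by
        simp only [grid, Finset.mem_image, Finset.mem_Ico]
        exact ⟨i+1, ⟨by omega, by omega⟩, rfl⟩
      have hs : strip (grid q k) ζ ⊆ Set.Iio (q (((i+1 : ℕ):ℝ)/4^k)) := by
        intro s hs
        rcases hs _ hg with h2 | h2
        · exact absurd h1 (not_lt.mpr h2.1)
        · exact h2.2
      refine ⟨Set.Iio (q (((i+1 : ℕ):ℝ)/4^k)), ?_, hs, fun s hs' l hl => lt_trans hl (hs hs')⟩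
      have := (hq _ (by positivity) hlt).1
      push_cast at this ⊢
      exact this
  obtain ⟨Low, hLm, hL1, hL2⟩ := hlow
  obtain ⟨Up, hU1, hU2, hU3⟩ := hup
  have hdis : Disjoint (strip (grid q k) ζ) Low := by
    rw [Set.disjoint_left]
    intro s hs hl
    exact lt_irrefl _ (hL2 s hs s hl)
  have hsub : strip (grid q k) ζ ∪ Low ⊆ Up := by
    refine Set.union_subset hU2 (fun l hl => hU3 t ht l (hL2 t ht l hl))
  have h1 := measureReal_mono (μ := ρ) hsub
  rw [measureReal_union hdis hLm] at h1
  have : ((i:ℝ)+1)/4^k = (i:ℝ)/4^k + 1/4^k := by ring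
  linarith

lemma rep_exists (G : Finset ℝ) : ∃ b : ℝ, ∀ ζ : ℝ, ∃ r ∈ insert b G, ∀ g ∈ G, (g ≤ ζ ↔ g ≤ r) := by
  obtain ⟨b, hb⟩ := G.bddBelow
  refine ⟨b - 1, fun ζ => ?_⟩
  by_cases h : (G.filter (fun g => g ≤ ζ)).Nonempty
  · refine ⟨(G.filter (fun g => g ≤ ζ)).max' h, ?_, ?_⟩
    · exact Finset.mem_insert_of_mem (Finset.mem_filter.mp (Finset.max'_mem _ h)).1
    · intro g hg
      constructor
      · intro hz; exact Finset.le_max' _ _ (Finset.mem_filter.mpr ⟨hg, hz⟩)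
      · intro hz; exact hz.trans (Finset.mem_filter.mp (Finset.max'_mem _ h)).2
  · refine ⟨b - 1, Finset.mem_insert_self _ _, ?_⟩
    intro g hg
    constructor
    · intro hz; exact absurd ⟨g, Finset.mem_filter.mpr ⟨hg, hz⟩⟩ h
    · intro hz; have h3 : b ≤ g := hb hg
      linarith

section Geo
variable {d : ℕ}

def Aset (G : Fin d → Finset ℝ) (z : Euc d) : Set (Euc d) := {y | ∀ c, ∃ g ∈ G c, y c ≤ g ∧ g ≤ z c}
def Bset (G : Fin d → Finset ℝ) (z : Euc d) : Set (Euc d) := {y | ∃ c, y c ∈ strip (G c) (z c)}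

lemma Aset_meas (G : Fin d → Finset ℝ) (z : Euc d) : MeasurableSet (Aset G z) := by
  have : Aset G z = ⋂ c, ⋃ g ∈ G c, (HH c g ∩ {y | g ≤ z c}) := by
    ext y; simp only [Aset, HH, Set.mem_ofPred_eq, Set.mem_iInter, Set.mem_iUnion, Set.mem_inter_iff, exists_prop]
  rw [this]
  exact MeasurableSet.iInter fun c => Finset.measurableSet_biUnion _ fun g _ => (HH_meas c g).inter (MeasurableSet.const _)

lemma Bset_eq (G : Fin d → Finset ℝ) (z : Euc d) :
    Bset G z = ⋃ c ∈ (Finset.univ : Finset (Fin d)), (fun y : Euc d => y c) ⁻¹' (strip (G c) (z c)) := by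
  ext y; simp [Bset]

lemma Bset_meas (G : Fin d → Finset ℝ) (z : Euc d) : MeasurableSet (Bset G z) := by
  rw [Bset_eq]
  exact Finset.measurableSet_biUnion _ fun c _ => (meas_coord c) (strip_meas _ _)

lemma Aset_congr (G : Fin d → Finset ℝ) {z r : Euc d} (h : ∀ c, ∀ g ∈ G c, (g ≤ z c ↔ g ≤ r c)) :
    Aset G z = Aset G r := by
  ext y
  refine forall_congr' fun c => exists_congr fun g => ?_
  constructor
  · rintro ⟨h1, h2, h3⟩; exact ⟨h1, h2, (h c g h1).mp h3⟩
  · rintro ⟨h1, h2, h3⟩; exact ⟨h1, h2, (h c g h1).mpr h3⟩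

lemma Bset_congr (G : Fin d → Finset ℝ) {z r : Euc d} (h : ∀ c, ∀ g ∈ G c, (g ≤ z c ↔ g ≤ r c)) :
    Bset G z = Bset G r := by
  ext y
  refine exists_congr fun c => forall_congr' fun g => forall_congr' fun hg => ?_
  have := h c g hg
  have h2 : z c < g ↔ r c < g := by rw [← not_le, ← not_le, this]
  rw [this, h2]

theorem exists_chain (hd : 0 < d) (μ : Measure (Euc d)) [IsProbabilityMeasure μ] :
    Nonempty (ChainSys μ (d:ℝ) (2*d) (QQ : Euc d → Set (Euc d))) := by
  classical
  have hpr : ∀ c : Fin d, IsProbabilityMeasure (μ.map (fun y : Euc d => y c)) := fun c =>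
    Measure.isProbabilityMeasure_map (meas_coord c).aemeasurable
  have hq : ∀ c : Fin d, ∃ q : ℝ → ℝ, ∀ u, 0 < u → u < 1 →
      (μ.map (fun y : Euc d => y c)).real (Set.Iio (q u)) ≤ u ∧ u ≤ (μ.map (fun y : Euc d => y c)).real (Set.Iic (q u)) := by
    intro c
    have := fun u => (show ∃ x, (0 < u → u < 1 → (μ.map (fun y : Euc d => y c)).real (Set.Iio x) ≤ u ∧ u ≤ (μ.map (fun y : Euc d => y c)).real (Set.Iic x)) from by
      by_cases h0 : 0 < u
      · by_cases h1 : u < 1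
        · obtain ⟨x, hx⟩ := exists_quantile (μ.map (fun y : Euc d => y c)) h0 h1
          exact ⟨x, fun _ _ => hx⟩
        · exact ⟨0, fun _ h => absurd h h1⟩
      · exact ⟨0, fun h => absurd h h0⟩)
    exact ⟨fun u => (this u).choose, fun u => (this u).choose_spec⟩
  choose q hq using hq
  set G : ℕ → Fin d → Finset ℝ := fun k c => grid (q c) k with hG
  have hb : ∀ k c, ∃ b : ℝ, ∀ ζ : ℝ, ∃ r ∈ insert b (G (k+1) c), ∀ g ∈ G (k+1) c, (g ≤ ζ ↔ g ≤ r) :=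
    fun k c => rep_exists _
  choose b hb using hb
  have hGs : ∀ k c, G k c ⊆ G (k+1) c := fun k c => grid_succ _ _
  refine ⟨{ A := fun k z => Aset (G k) z
            B := fun k z => Bset (G k) z
            R := fun k => (Fintype.piFinset (fun c => insert (b k c) (G (k+1) c))).image (fun f => WithLp.toLp 2 f)
            M := fun k => ((4:ℝ)^(k+1)+1)^d
            hA := fun k z => Aset_meas _ _
            hB := fun k z => Bset_meas _ _
            hA0 := ?_
            hAA := ?_
            hAQ := ?_
            hQB := ?_
            hBB := ?_
            hμ := ?_
            hR := ?_
            hM1 := ?_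
            hcard := ?_
            hlog := ?_ }⟩
  · intro z
    ext y
    simp only [Aset, hG, grid_zero]
    constructor
    · intro h; obtain ⟨g, hg, _⟩ := h ⟨0, hd⟩; simp at hg
    · intro h; exact absurd h (Set.notMem_empty _)
  · intro k z y hy c
    obtain ⟨g, hg, h⟩ := hy c
    exact ⟨g, hGs k c hg, h⟩
  · intro k z y hy c
    obtain ⟨g, hg, h⟩ := hy c
    exact h.1.trans h.2
  · rintro k z y ⟨hy, hn⟩
    have : ∃ c, ¬ ∃ g ∈ G k c, y c ≤ g ∧ g ≤ z c := by
      by_contra hc; push Not at hc; exact hn hc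
    obtain ⟨c, hc⟩ := this
    refine ⟨c, fun g hg => ?_⟩
    by_cases h : g ≤ z c
    · left; refine ⟨h, ?_⟩
      by_contra h2; push Not at h2; exact hc ⟨g, hg, h2, h⟩
    · right; push Not at h; exact ⟨h, lt_of_le_of_lt (hy c) h⟩
  · rintro k z y ⟨c, hc⟩
    exact ⟨c, fun g hg => hc g (hGs k c hg)⟩
  · intro k z
    rw [Bset_eq]
    refine (measureReal_biUnion_finset_le _ _).trans ?_
    have : ∀ c ∈ (Finset.univ : Finset (Fin d)), μ.real ((fun y : Euc d => y c) ⁻¹' (strip (G k c) (z c))) ≤ 1/4^k := by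
      intro c _
      have h := strip_le (μ.map (fun y : Euc d => y c)) (q c) (hq c) k (z c)
      rw [map_measureReal_apply (meas_coord c) (strip_meas _ _)] at h
      exact h
    refine (Finset.sum_le_sum this).trans ?_
    simp [div_eq_mul_inv]
  · intro k z
    choose r hr1 hr2 using fun c => hb k c (z c)
    refine ⟨WithLp.toLp 2 r, ?_, ?_⟩
    · exact Finset.mem_image_of_mem _ (Fintype.mem_piFinset.mpr hr1)
    · have h2 : ∀ c, ∀ g ∈ G (k+1) c, (g ≤ z c ↔ g ≤ (WithLp.toLp 2 r : Euc d) c) := hr2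
      have h1 : ∀ c, ∀ g ∈ G k c, (g ≤ z c ↔ g ≤ (WithLp.toLp 2 r : Euc d) c) := fun c g hg => h2 c g (hGs k c hg)
      exact ⟨Aset_congr _ h1, Aset_congr _ h2, Bset_congr _ h1, Bset_congr _ h2⟩
  · intro k
    exact one_le_pow₀ (by linarith [show (0:ℝ) ≤ 4^(k+1) by positivity])
  · intro k
    have h1 : (Fintype.piFinset (fun c => insert (b k c) (G (k+1) c))).card ≤ (4^(k+1)+1)^d := by
      rw [Fintype.card_piFinset]
      refine (Finset.prod_le_pow_card _ _ (4^(k+1)+1) (fun c _ => ?_)).trans ?_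
      · exact (Finset.card_insert_le _ _).trans (Nat.add_le_add_right (grid_card _ _) 1)
      · simp
    have h2 := (Finset.card_image_le (f := fun f => (WithLp.toLp 2 f : Euc d))).trans h1
    exact_mod_cast h2
  · intro k
    rw [Real.log_pow]
    have h4 : Real.log 4 ≤ 2 := by
      have : (4:ℝ) = 2^2 := by norm_num
      rw [this, Real.log_pow]
      have := Real.log_two_lt_d9
      push_cast; linarith
    have : Real.log ((4:ℝ)^(k+1)+1) ≤ Real.log (4^(k+2)) := by
      apply Real.log_le_log (by positivity)
      have : (1:ℝ) ≤ 4^(k+1) := one_le_pow₀ (by norm_num)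
      rw [pow_succ 4 (k+1)]; linarith
    rw [Real.log_pow] at this
    push_cast at this
    have h5 : ((k:ℝ)+2) * Real.log 4 ≤ (k+2) * 2 := by gcongr
    have h6 : (d:ℝ) * Real.log ((4:ℝ)^(k+1)+1) ≤ d * ((k+2)*2) := by gcongr; linarith
    linarith

end Geo

section Fin7
variable {d : ℕ} (F : Measure (Euc d)) [IsProbabilityMeasure F]

noncomputable def C1 (d : ℕ) : ℝ := 12 * d * (3*(2*d)+16) + 1

lemma C1_pos (d : ℕ) : 0 < C1 d := by unfold C1; positivity

lemma step4 (hd : 0 < d) (hF : IsSymmMeasure F) (n : ℕ) (x : Euc d) :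
    ((n:ℝ)+1) * |(convPow F (n+n)).real (QQ x) - (convPow F (n+n+2)).real (QQ x)| ≤ C1 d := by
  obtain ⟨S⟩ := exists_chain hd (convPow F (n+1))
  obtain ⟨Ψ, h1, h2, h3⟩ := chain_main F n (by exact_mod_cast hd) S
  have e := step3 F n hF x
  have en : n + 1 + (n+1) = n+n+2 := by ring
  rw [en] at e
  have : ((n:ℝ)+1) * |(convPow F (n+n)).real (QQ x) - (convPow F (n+n+2)).real (QQ x)| =
    |((n:ℝ)+1) * ((convPow F (n+n)).real (QQ x) - (convPow F (n+n+2)).real (QQ x))| := by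
    rw [abs_mul, abs_of_nonneg (by positivity : (0:ℝ) ≤ (n:ℝ)+1)]
  rw [this, e, ← Real.norm_eq_abs]
  exact (norm_integral_le_of_norm_le h1 (Filter.Eventually.of_forall fun X => h2 X _)).trans h3

lemma pp_QQ (ν : Measure (Euc d)) (x a : Euc d) : pp ν (QQ x) a = ν.real (QQ (x - a)) := by
  unfold pp; congr 1; ext s
  simp [QQ, le_sub_iff_add_le]

lemma step4' (hd : 0 < d) (hF : IsSymmMeasure F) (N : ℕ) (x : Euc d) :
    |(convPow F N).real (QQ x) - (convPow F (N+2)).real (QQ x)| ≤ 2 * C1 d / (N+1) := by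
  have hC := C1_pos d
  rcases Nat.even_or_odd' N with ⟨n, h | h⟩
  · have h4 := step4 F hd hF n x
    have e : N = n + n := by omega
    rw [e, le_div_iff₀ (by positivity)]
    push_cast
    nlinarith [abs_nonneg ((convPow F (n+n)).real (QQ x) - (convPow F (n+n+2)).real (QQ x))]
  · have e : N = (n + n) + 1 := by omega
    have h4 := fun y => step4 F hd hF n y
    have e2 : N + 2 = (n+n+2) + 1 := by omega
    rw [e2, e, convPow_succ_eq, convPow_succ_eq, mconv_real _ _ (QQ_meas x), mconv_real _ _ (QQ_meas x),
      ← integral_sub (pp_integrable _ _ (QQ_meas x)) (pp_integrable _ _ (QQ_meas x)), ← Real.norm_eq_abs]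
    have hb : ∀ a, ‖pp (convPow F (n+n)) (QQ x) a - pp (convPow F (n+n+2)) (QQ x) a‖ ≤ C1 d / (n+1) := by
      intro a
      rw [pp_QQ, pp_QQ, Real.norm_eq_abs, le_div_iff₀ (by positivity), mul_comm]
      exact h4 _
    refine (norm_integral_le_of_norm_le (integrable_const (C1 d / (n+1))) (Filter.Eventually.of_forall hb)).trans ?_
    simp only [integral_const, probReal_univ, smul_eq_mul, one_mul]
    push_cast
    apply le_of_eq
    field_simp; ring

lemma step5 (hd : 0 < d) (hF : IsSymmMeasure F) (N j : ℕ) (x : Euc d) :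
    |(convPow F N).real (QQ x) - (convPow F (N+2*j)).real (QQ x)| ≤ j * (2 * C1 d / (N+1)) := by
  have hC := C1_pos d
  induction j with
  | zero => simp
  | succ j ih =>
    have h := step4' F hd hF (N+2*j) x
    have e : N + 2*(j+1) = N + 2*j + 2 := by ring
    rw [e]
    have h2 : 2 * C1 d / (((N + 2*j : ℕ):ℝ)+1) ≤ 2 * C1 d / (N+1) := by
      gcongr; simp
    have := abs_sub_le ((convPow F N).real (QQ x)) ((convPow F (N+2*j)).real (QQ x)) ((convPow F (N+2*j+2)).real (QQ x))
    push_cast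
    linarith

lemma step6 (hd : 0 < d) (hF : IsSymmMeasure F) (n k : ℕ) (hn : 0 < n) (hk : (k:ℝ) ≤ Real.sqrt n) (x : Euc d) :
    |(convPow F n).real (QQ x) - (convPow F (n+k)).real (QQ x)| ≤ (2 * C1 d + 2 * d) / Real.sqrt n := by
  have hC := C1_pos d
  have hn' : (0:ℝ) < n := by exact_mod_cast hn
  set s := Real.sqrt n with hs
  have hs0 : 0 < s := Real.sqrt_pos.mpr hn'
  have hs2 : s^2 = n := Real.sq_sqrt hn'.le
  have hmain : ∀ j : ℕ, (j:ℝ) ≤ k → (j:ℝ) * (2 * C1 d / (n+1)) ≤ 2 * C1 d / s := by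
    intro j hj
    calc (j:ℝ) * (2 * C1 d / (n+1)) ≤ s * (2 * C1 d / n) := by
          gcongr
          · linarith
          · linarith
      _ = 2 * C1 d / s := by rw [← hs2]; field_simp
  have hd0 : 0 ≤ 2 * (d:ℝ) / s := by positivity
  rw [add_div]
  rcases Nat.even_or_odd' k with ⟨j, h | h⟩
  · have h5 := step5 F hd hF n j x
    have := hmain j (by exact_mod_cast (by omega))
    rw [h]; linarith
  · have h5 := step5 F hd hF n j x
    have := hmain j (by exact_mod_cast (by omega))
    have h2 := step2 F (n+2*j) hF x
    have e : n + k = n + 2*j + 1 := by omega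
    rw [e]
    have h3 : 2 * (d:ℝ) / Real.sqrt (((n+2*j : ℕ):ℝ)+1) ≤ 2 * d / s := by
      rw [hs]; gcongr; push_cast; linarith [Nat.cast_nonneg (α := ℝ) j]
    have h6 := abs_sub_le ((convPow F n).real (QQ x)) ((convPow F (n+2*j)).real (QQ x)) ((convPow F (n+2*j+1)).real (QQ x))
    linarith

end Fin7

theorem stmt7 :
    ∃ C : ℕ → ℝ, (∀ d, 0 < C d) ∧
      ∀ (d n : ℕ), 0 < d → 0 < n →
        ∀ F : Measure (Euc d), IsProbabilityMeasure F → IsSymmMeasure F →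
          ∀ k : ℕ, (k : ℝ) ≤ Real.sqrt n →
            kolmDist (convPow F n) (convPow F (n + k)) ≤ C d / Real.sqrt n := by
  refine ⟨fun d => 2 * C1 d + 2 * d, fun d => ?_, ?_⟩
  · have := C1_pos d
    positivity
  · intro d n hd hn F hP hF k hk
    exact ciSup_le (fun x => step6 F hd hF n k hn hk x)
end

section
/- For each d ∈ ℕ there is a constant c(d) > 0 such that for every F ∈ 𝔉_d^s and every n ∈ ℕ one has ρ(F^n, e(nF)) ≤ c(d) · n^{−1/2}. -/
open MeasureTheory RealInnerProductSpace
open scoped ENNReal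

instance sgn_convPow_prob {d : ℕ} (F : Measure (Euc d)) [IsProbabilityMeasure F] (n : ℕ) :
    IsProbabilityMeasure (convPow F n) := by
  induction n with
  | zero => unfold convPow; infer_instance
  | succ n ih =>
    unfold convPow mconv
    exact Measure.isProbabilityMeasure_map (by fun_prop)

/-- The sign as a real number. -/
noncomputable def sg (u : ℤˣ) : ℝ := ((u : ℤ) : ℝ)

@[simp] lemma sg_one : sg 1 = 1 := by simp [sg]
@[simp] lemma sg_neg_one : sg (-1) = -1 := by simp [sg]
lemma sg_mul (u v : ℤˣ) : sg (u * v) = sg u * sg v := by simp [sg]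
lemma sg_neg (u : ℤˣ) : sg (-u) = - sg u := by simp [sg]
lemma sg_sq (u : ℤˣ) : sg u * sg u = 1 := by
  rcases Int.units_eq_one_or u with h | h <;> simp [h]

lemma map_sg {d : ℕ} (F : Measure (Euc d)) (hs : IsSymmMeasure F) (u : ℤˣ) :
    F.map (fun a => sg u • a) = F := by
  rcases Int.units_eq_one_or u with h | h
  · simp [h]
  · simp only [h, sg_neg_one, neg_smul, one_smul]; exact hs

lemma law_lemma {d : ℕ} (F : Measure (Euc d)) [IsProbabilityMeasure F] (hs : IsSymmMeasure F)
    {M : ℕ} (ω : Fin M → ℤˣ) (J : Finset (Fin M)) :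
    (Measure.pi fun _ : Fin M => F).map (fun a => ∑ i ∈ J, sg (ω i) • a i) = convPow F J.card := by
  classical
  have hind : ProbabilityTheory.iIndepFun (fun (i : Fin M) (a : Fin M → Euc d) => sg (ω i) • a i)
      (Measure.pi fun _ : Fin M => F) :=
    ProbabilityTheory.iIndepFun_pi (X := fun i (a : Euc d) => sg (ω i) • a)
      (fun i => by fun_prop)
  induction J using Finset.induction_on with
  | empty => 
    simp [convPow, Measure.map_const]
  | insert j J hj ih =>
    rw [Finset.card_insert_of_notMem hj]
    have h1 := hind.indepFun_finsetSum_of_notMem (fun i => by fun_prop) hj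
    have h2 := h1.map_add_eq_map_conv_map₀ (by fun_prop) (Measurable.aemeasurable (by fun_prop))
    have h3 : (Measure.pi fun _ : Fin M => F).map (fun a : Fin M → Euc d => sg (ω j) • a j) = F := by
      have : (fun a : Fin M → Euc d => sg (ω j) • a j) = (fun y => sg (ω j) • y) ∘ (fun a => a j) := rfl
      rw [this, ← Measure.map_map (by fun_prop) (by fun_prop),
        (measurePreserving_eval (fun _ : Fin M => F) j).map_eq, map_sg F hs]
    have e1 : (∑ i ∈ J, fun a : Fin M → Euc d => sg (ω i) • a i) = fun a => ∑ i ∈ J, sg (ω i) • a i := by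
      ext a; simp
    rw [e1] at h2
    have e2 : (fun a : Fin M → Euc d => ∑ i ∈ insert j J, sg (ω i) • a i) =
      (fun a => ∑ i ∈ J, sg (ω i) • a i) + (fun a => sg (ω j) • a j) := by
      ext a; simp [Finset.sum_insert hj, add_comm]
    rw [e2, h2, ih, h3]
    rfl

/-- Indicator of the orthant below `x`. -/
noncomputable def oneB {d : ℕ} (x y : Euc d) : ℝ := Set.indicator {y : Euc d | ∀ c, y c ≤ x c} (fun _ => 1) y

/-- The values of the distribution functions of the powers. -/
noncomputable def gf {d : ℕ} (F : Measure (Euc d)) (x : Euc d) (k : ℕ) : ℝ :=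
  (convPow F k {y : Euc d | ∀ c, y c ≤ x c}).toReal

lemma meas_box {d : ℕ} (x : Euc d) : MeasurableSet {y : Euc d | ∀ c, y c ≤ x c} := by
  have : {y : Euc d | ∀ c, y c ≤ x c} = ⋂ c, {y | y c ≤ x c} := by ext; simp
  rw [this]
  exact MeasurableSet.iInter fun c => measurableSet_le (by fun_prop) (by fun_prop)

@[fun_prop]
lemma meas_oneB {d : ℕ} (x : Euc d) : Measurable (oneB x) :=
  measurable_const.indicator (meas_box x)

lemma oneB_nonneg {d : ℕ} (x y : Euc d) : 0 ≤ oneB x y := by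
  unfold oneB; exact Set.indicator_nonneg (by simp) _
lemma oneB_le_one {d : ℕ} (x y : Euc d) : oneB x y ≤ 1 := by
  unfold oneB; exact Set.indicator_le' (fun _ _ => le_refl _) (fun _ _ => zero_le_one) _
lemma gf_nonneg {d : ℕ} (F : Measure (Euc d)) (x : Euc d) (k : ℕ) : 0 ≤ gf F x k :=
  ENNReal.toReal_nonneg
lemma gf_le_one {d : ℕ} (F : Measure (Euc d)) [IsProbabilityMeasure F] (x : Euc d) (k : ℕ) :
    gf F x k ≤ 1 := by
  exact measureReal_le_one

lemma integrable_oneB_comp {d : ℕ} (x : Euc d) {Ω : Type*} [MeasurableSpace Ω] (μ : Measure Ω)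
    [IsProbabilityMeasure μ] (f : Ω → Euc d) (hf : Measurable f) :
    Integrable (fun a => oneB x (f a)) μ := by
  refine Integrable.of_bound (Measurable.aestronglyMeasurable (by fun_prop)) 1 (Filter.Eventually.of_forall fun a => ?_)
  rw [Real.norm_eq_abs, abs_le]
  exact ⟨by linarith [oneB_nonneg x (f a)], oneB_le_one _ _⟩

lemma integral_law {d : ℕ} (F : Measure (Euc d)) [IsProbabilityMeasure F] (hs : IsSymmMeasure F)
    (x : Euc d) {M : ℕ} (ω : Fin M → ℤˣ) (J : Finset (Fin M)) :
    ∫ a, oneB x (∑ i ∈ J, sg (ω i) • a i) ∂(Measure.pi fun _ : Fin M => F) = gf F x J.card := by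
  have h := integral_map (μ := Measure.pi fun _ : Fin M => F)
    (φ := fun a => ∑ i ∈ J, sg (ω i) • a i) (f := oneB x) (Measurable.aemeasurable (by fun_prop))
    (Measurable.aestronglyMeasurable (by fun_prop))
  rw [← h, law_lemma F hs]
  unfold oneB gf
  rw [integral_indicator (meas_box x)]
  simp [Measure.real]

/-- Characters of the sign group. -/
noncomputable def chi {M : ℕ} (A : Finset (Fin M)) (ω : Fin M → ℤˣ) : ℝ := ∏ i ∈ A, sg (ω i)

/-- The flip of one sign. -/
def flp {M : ℕ} (i : Fin M) : Fin M → ℤˣ := Pi.mulSingle i (-1)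

lemma flp_same {M : ℕ} (i : Fin M) : flp i i = -1 := by simp [flp]
lemma flp_ne {M : ℕ} {i j : Fin M} (h : j ≠ i) : flp i j = 1 := by simp [flp, h]

lemma chi_mul {M : ℕ} (A : Finset (Fin M)) (ω η : Fin M → ℤˣ) :
    chi A (ω * η) = chi A ω * chi A η := by
  simp [chi, sg_mul, Finset.prod_mul_distrib]

lemma chi_one {M : ℕ} (A : Finset (Fin M)) : chi A 1 = 1 := by simp [chi]

lemma chi_sq {M : ℕ} (A : Finset (Fin M)) (ω : Fin M → ℤˣ) : chi A ω * chi A ω = 1 := by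
  rw [chi, ← Finset.prod_mul_distrib]; simp [sg_sq]

lemma card_signs (M : ℕ) : Fintype.card (Fin M → ℤˣ) = 2 ^ M := by simp

lemma sum_chi {M : ℕ} (ω : Fin M → ℤˣ) :
    ∑ A : Finset (Fin M), chi A ω = if ω = 1 then (2:ℝ) ^ M else 0 := by
  have : ∑ A : Finset (Fin M), chi A ω = ∏ i, (1 + sg (ω i)) := by
    rw [Finset.prod_one_add]; simp [chi]
  rw [this]
  split_ifs with h
  · simp [h]; norm_num
  · obtain ⟨i, hi⟩ : ∃ i, ω i ≠ 1 := by
      by_contra hc; push Not at hc; exact h (funext hc)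
    have : ω i = -1 := (Int.units_eq_one_or _).resolve_left hi
    exact Finset.prod_eq_zero (Finset.mem_univ i) (by simp [this])

lemma sum_flip {M : ℕ} (η : Fin M → ℤˣ) (h : (Fin M → ℤˣ) → ℝ) :
    ∑ ω, h (ω * η) = ∑ ω, h ω :=
  Fintype.sum_equiv (Equiv.mulRight η) _ _ (fun _ => rfl)

lemma orth_sg {M : ℕ} (i j : Fin M) :
    ∑ ω : Fin M → ℤˣ, sg (ω i) * sg (ω j) = if i = j then (2:ℝ) ^ M else 0 := by
  split_ifs with h
  · subst h; simp [sg_sq]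
  · have h1 := sum_flip (flp i) (fun ω => sg (ω i) * sg (ω j))
    simp only [Pi.mul_apply, flp_same, flp_ne (Ne.symm h), mul_one, mul_neg, sg_neg, neg_mul,
      Finset.sum_neg_distrib] at h1
    linarith

/-- Exceedance indicator of a coordinate. -/
noncomputable def exc {d : ℕ} (x : Euc d) (c : Fin d) (y : Euc d) : ℝ := if x c < y c then 1 else 0

lemma exc_abs {d : ℕ} (x : Euc d) (c : Fin d) (y : Euc d) : |exc x c y| ≤ 1 := by
  unfold exc; split_ifs <;> simp

lemma oneB_diff {d : ℕ} (x S U : Euc d) :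
    |oneB x S - oneB x U| ≤ ∑ c, |exc x c S - exc x c U| := by
  by_cases h : ∃ c, |exc x c S - exc x c U| = 1
  · obtain ⟨c, hc⟩ := h
    have h1 : |oneB x S - oneB x U| ≤ 1 := by
      rw [abs_le]; constructor <;>
      linarith [oneB_nonneg x S, oneB_nonneg x U, oneB_le_one x S, oneB_le_one x U]
    have h2 := Finset.single_le_sum (f := fun c => |exc x c S - exc x c U|)
      (fun i _ => abs_nonneg _) (Finset.mem_univ c)
    simp only [hc] at h2
    linarith
  · have h0 : oneB x S = oneB x U := by
      push Not at h
      have : ∀ c, (S c ≤ x c ↔ U c ≤ x c) := by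
        intro c
        have := h c
        unfold exc at this
        by_cases h1 : x c < S c <;> by_cases h2 : x c < U c <;> simp [h1, h2] at this
        · constructor <;> intro h <;> linarith
        · constructor <;> intro h <;> linarith
      simp [oneB, Set.indicator, this]
    rw [h0]; simp only [sub_self, abs_zero]
    exact Finset.sum_nonneg fun i _ => abs_nonneg _

lemma exc_cross {d : ℕ} (x U v : Euc d) (c : Fin d) (u : ℤˣ) :
    |exc x c (U + sg u • v) - exc x c U| =
      (exc x c (U + sg u • v) - exc x c U) * (sg u * Real.sign (v c)) := by
  unfold exc
  have e : (U + sg u • v) c = U c + sg u * v c := by simp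
  rw [e]
  rcases lt_trichotomy (v c) 0 with h | h | h
  · rw [Real.sign_of_neg h]
    rcases Int.units_eq_one_or u with hu | hu <;> simp only [hu, sg_one, sg_neg_one] <;>
      split_ifs <;> first | (exfalso; linarith) | norm_num
  · simp [h]
  · rw [Real.sign_of_pos h]
    rcases Int.units_eq_one_or u with hu | hu <;> simp only [hu, sg_one, sg_neg_one] <;>
      split_ifs <;> first | (exfalso; linarith) | norm_num

lemma sign_sq_le (r : ℝ) : Real.sign r * Real.sign r ≤ 1 := by
  rcases Real.sign_apply_eq r with h | h | h <;> rw [h] <;> norm_num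

lemma zsum_bound {m : ℕ} (hm : 0 < m) (s : Fin m → ℝ) (hs : ∀ i, s i * s i ≤ 1) :
    ∑ ω : Fin m → ℤˣ, |∑ j, sg (ω j) * s j| ≤ 2 ^ m * √m := by
  have hm' : (0:ℝ) < √m := by positivity
  have hmm : √(m:ℝ) * √m = m := Real.mul_self_sqrt (by positivity)
  have h2 : ∑ ω : Fin m → ℤˣ, (∑ j, sg (ω j) * s j) ^ 2 ≤ 2 ^ m * m := by
    have : ∀ ω : Fin m → ℤˣ, (∑ j, sg (ω j) * s j) ^ 2 =
        ∑ i, ∑ j, (s i * s j) * (sg (ω i) * sg (ω j)) := by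
      intro ω
      rw [sq, Finset.sum_mul_sum]
      exact Finset.sum_congr rfl fun i _ => Finset.sum_congr rfl fun j _ => by ring
    simp only [this]
    rw [Finset.sum_comm]
    have : ∀ i : Fin m, ∑ ω : Fin m → ℤˣ, ∑ j, (s i * s j) * (sg (ω i) * sg (ω j)) ≤ 2 ^ m := by
      intro i
      rw [Finset.sum_comm]
      simp only [← Finset.mul_sum, orth_sg]
      simp
      nlinarith [hs i, show (0:ℝ) < 2 ^ m by positivity]
    calc _ ≤ ∑ i : Fin m, (2:ℝ) ^ m := Finset.sum_le_sum fun i _ => this i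
      _ = _ := by simp; ring
  have h3 : ∀ ω : Fin m → ℤˣ, |∑ j, sg (ω j) * s j| ≤
      ((∑ j, sg (ω j) * s j) ^ 2 / √m + √m) / 2 := by
    intro ω
    set Z := ∑ j, sg (ω j) * s j
    have : 0 ≤ (|Z| - √m) ^ 2 / √m := by positivity
    have e : (|Z| - √m) ^ 2 / √m = Z ^ 2 / √m + √m - 2 * |Z| := by
      field_simp; rw [← sq_abs Z]; nlinarith
    linarith
  calc _ ≤ ∑ ω : Fin m → ℤˣ, ((∑ j, sg (ω j) * s j) ^ 2 / √m + √m) / 2 :=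
        Finset.sum_le_sum fun ω _ => h3 ω
    _ = ((∑ ω : Fin m → ℤˣ, (∑ j, sg (ω j) * s j) ^ 2) / √m + 2 ^ m * √m) / 2 := by
        rw [← Finset.sum_div, Finset.sum_add_distrib, ← Finset.sum_div]; simp
    _ ≤ ((2 ^ m * m) / √m + 2 ^ m * √m) / 2 := by gcongr
    _ = 2 ^ m * √m := by
        have : (2 ^ m * (m:ℝ)) / √m = 2 ^ m * √m := by
          rw [div_eq_iff hm'.ne', mul_assoc, hmm]
        rw [this]; ring

lemma lo_discrete {d m : ℕ} (hm : 0 < m) (x : Euc d) (a : Fin m → Euc d) :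
    ∑ j, |∑ ω : Fin m → ℤˣ, (oneB x (∑ i, sg (ω i) • a i) -
      oneB x (∑ i ∈ Finset.univ.erase j, sg (ω i) • a i))| ≤ 2 ^ m * (d * √m) := by
  have hsplit : ∀ (j : Fin m) (ω : Fin m → ℤˣ), ∑ i, sg (ω i) • a i =
      ∑ i ∈ Finset.univ.erase j, sg (ω i) • a i + sg (ω j) • a j := fun j ω =>
    (Finset.sum_erase_add _ _ (Finset.mem_univ j)).symm
  have hflip : ∀ (j : Fin m) (c : Fin d), ∑ ω : Fin m → ℤˣ,
      exc x c (∑ i ∈ Finset.univ.erase j, sg (ω i) • a i) * (sg (ω j) * Real.sign (a j c)) = 0 := by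
    intro j c
    have h1 := sum_flip (flp j) (fun ω =>
      exc x c (∑ i ∈ Finset.univ.erase j, sg (ω i) • a i) * (sg (ω j) * Real.sign (a j c)))
    have e : ∀ ω : Fin m → ℤˣ, ∑ i ∈ Finset.univ.erase j, sg ((ω * flp j) i) • a i =
        ∑ i ∈ Finset.univ.erase j, sg (ω i) • a i := by
      intro ω
      refine Finset.sum_congr rfl fun i hi => ?_
      rw [Pi.mul_apply, flp_ne (Finset.ne_of_mem_erase hi), mul_one]
    simp only [e] at h1
    simp only [Pi.mul_apply, flp_same, mul_neg, mul_one, sg_neg, neg_mul,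
      Finset.sum_neg_distrib] at h1
    linarith
  have hj : ∀ j : Fin m, |∑ ω : Fin m → ℤˣ, (oneB x (∑ i, sg (ω i) • a i) -
      oneB x (∑ i ∈ Finset.univ.erase j, sg (ω i) • a i))| ≤
      ∑ c, ∑ ω : Fin m → ℤˣ, exc x c (∑ i, sg (ω i) • a i) * (sg (ω j) * Real.sign (a j c)) := by
    intro j
    calc _ ≤ ∑ ω : Fin m → ℤˣ, |oneB x (∑ i, sg (ω i) • a i) -
          oneB x (∑ i ∈ Finset.univ.erase j, sg (ω i) • a i)| := Finset.abs_sum_le_sum_abs _ _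
      _ ≤ ∑ ω : Fin m → ℤˣ, ∑ c, |exc x c (∑ i, sg (ω i) • a i) -
          exc x c (∑ i ∈ Finset.univ.erase j, sg (ω i) • a i)| :=
        Finset.sum_le_sum fun ω _ => oneB_diff _ _ _
      _ = ∑ c, ∑ ω : Fin m → ℤˣ, |exc x c (∑ i, sg (ω i) • a i) -
          exc x c (∑ i ∈ Finset.univ.erase j, sg (ω i) • a i)| := Finset.sum_comm
      _ = _ := by
        refine Finset.sum_congr rfl fun c _ => ?_
        have := hflip j c
        rw [← sub_zero (∑ ω : Fin m → ℤˣ, exc x c (∑ i, sg (ω i) • a i) *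
          (sg (ω j) * Real.sign (a j c))), ← this, ← Finset.sum_sub_distrib]
        refine Finset.sum_congr rfl fun ω _ => ?_
        rw [hsplit j ω, exc_cross]; ring
  calc _ ≤ ∑ j, ∑ c, ∑ ω : Fin m → ℤˣ,
          exc x c (∑ i, sg (ω i) • a i) * (sg (ω j) * Real.sign (a j c)) :=
        Finset.sum_le_sum fun j _ => hj j
    _ = ∑ c, ∑ ω : Fin m → ℤˣ, exc x c (∑ i, sg (ω i) • a i) *
          ∑ j, sg (ω j) * Real.sign (a j c) := by
        rw [Finset.sum_comm]
        refine Finset.sum_congr rfl fun c _ => ?_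
        rw [Finset.sum_comm]
        simp only [Finset.mul_sum]
    _ ≤ ∑ c : Fin d, 2 ^ m * √m := by
        refine Finset.sum_le_sum fun c _ => ?_
        refine le_trans (Finset.sum_le_sum fun ω _ => ?_)
          (zsum_bound hm (fun j => Real.sign (a j c)) fun i => sign_sq_le _)
        refine (le_abs_self _).trans ?_
        rw [abs_mul]
        exact mul_le_of_le_one_left (abs_nonneg _) (exc_abs _ _ _)
    _ = _ := by simp; ring

lemma lo_step {d : ℕ} (F : Measure (Euc d)) [IsProbabilityMeasure F] (hs : IsSymmMeasure F)
    (x : Euc d) (k : ℕ) : |gf F x (k + 1) - gf F x k| ≤ d / √((k + 1 : ℕ) : ℝ) := by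
  set m := k + 1 with hmdef
  have hm : 0 < m := by omega
  set P := Measure.pi fun _ : Fin m => F
  let D : Fin m → (Fin m → Euc d) → ℝ := fun j a => ∑ ω : Fin m → ℤˣ,
    (oneB x (∑ i, sg (ω i) • a i) - oneB x (∑ i ∈ Finset.univ.erase j, sg (ω i) • a i))
  have hDt : ∀ (J : Finset (Fin m)) (ω : Fin m → ℤˣ),
      Integrable (fun a : Fin m → Euc d => oneB x (∑ i ∈ J, sg (ω i) • a i)) P := fun J ω =>
    integrable_oneB_comp x P _ (by fun_prop)
  have hDint : ∀ j, Integrable (D j) P := fun j =>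
    integrable_finsetSum _ fun ω _ => (hDt _ ω).sub (hDt _ ω)
  have hDval : ∀ j, ∫ a, D j a ∂P = 2 ^ m * (gf F x m - gf F x k) := by
    intro j
    simp only [D]
    rw [integral_finsetSum]
    swap
    · exact fun ω _ => (hDt _ ω).sub (hDt _ ω)
    have : ∀ ω : Fin m → ℤˣ, ∫ a, (oneB x (∑ i, sg (ω i) • a i) -
        oneB x (∑ i ∈ Finset.univ.erase j, sg (ω i) • a i)) ∂P = gf F x m - gf F x k := by
      intro ω
      rw [integral_sub (hDt _ ω) (hDt _ ω), integral_law F hs, integral_law F hs]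
      simp [hmdef]
    simp only [this]
    simp
    ring
  have h1 : ∑ j, |∫ a, D j a ∂P| ≤ 2 ^ m * (d * √m) := by
    calc _ ≤ ∑ j, ∫ a, |D j a| ∂P := Finset.sum_le_sum fun j _ => abs_integral_le_integral_abs
      _ = ∫ a, ∑ j, |D j a| ∂P := (integral_finsetSum _ fun j _ => (hDint j).abs).symm
      _ ≤ ∫ a, (2 ^ m * (d * √m) : ℝ) ∂P := integral_mono
          (integrable_finsetSum _ fun j _ => (hDint j).abs) (integrable_const _)
          (fun a => lo_discrete hm x a)
      _ = _ := by simp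
  simp only [hDval, abs_mul] at h1
  simp at h1
  have hm' : (0:ℝ) < √m := by positivity
  have hmm : √(m:ℝ) * √m = m := Real.mul_self_sqrt (by positivity)
  rw [le_div_iff₀ hm']
  have h2 : (2:ℝ) ^ m * ((m:ℝ) * |gf F x m - gf F x k|) ≤ 2 ^ m * (d * √m) := by
    linarith
  have h3 := le_of_mul_le_mul_left h2 (by positivity)
  have h4 : (|gf F x m - gf F x k| * √m) * √m ≤ d * √m := by
    rw [mul_assoc, hmm]; linarith
  exact le_of_mul_le_mul_right h4 hm'

lemma parseval {M : ℕ} (f : (Fin M → ℤˣ) → ℝ) :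
    ∑ A : Finset (Fin M), (∑ ω, chi A ω * f ω) ^ 2 = 2 ^ M * ∑ ω, f ω ^ 2 := by
  have h1 : ∀ A : Finset (Fin M), (∑ ω, chi A ω * f ω) ^ 2 =
      ∑ ω, ∑ ω', (f ω * f ω') * chi A (ω * ω') := by
    intro A
    rw [sq, Finset.sum_mul_sum]
    exact Finset.sum_congr rfl fun i _ => Finset.sum_congr rfl fun j _ => by
      rw [chi_mul]; ring
  simp only [h1]
  rw [Finset.sum_comm, Finset.mul_sum]
  refine Finset.sum_congr rfl fun ω _ => ?_
  rw [Finset.sum_comm]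
  simp only [← Finset.mul_sum, sum_chi]
  have h2 : ∀ ω' : Fin M → ℤˣ, ω * ω' = 1 ↔ ω' = ω := by
    intro ω'
    rw [mul_eq_one_iff_inv_eq]
    have : ω⁻¹ = ω := by ext i; simp [Pi.inv_apply]
    rw [this, eq_comm]
  simp only [h2]
  simp
  ring

lemma block_bound {M : ℕ} {Q : Type*} (T : Finset Q) (f h : (Fin M → ℤˣ) → Q → ℝ)
    (hf : ∀ ω, ∑ q ∈ T, f ω q ^ 2 ≤ 1) (hh : ∀ ω, ∑ q ∈ T, h ω q ^ 2 ≤ 1) :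
    ∑ A : Finset (Fin M), |∑ ω, ∑ ω', chi A ω * chi A ω' * ∑ q ∈ T, f ω q * h ω' q| ≤ 4 ^ M := by
  have h1 : ∀ A : Finset (Fin M), ∑ ω, ∑ ω', chi A ω * chi A ω' * ∑ q ∈ T, f ω q * h ω' q =
      ∑ q ∈ T, (∑ ω, chi A ω * f ω q) * (∑ ω, chi A ω * h ω q) := by
    intro A
    simp only [Finset.sum_mul_sum]
    rw [Finset.sum_comm (s := T)]
    refine Finset.sum_congr rfl fun ω _ => ?_
    rw [Finset.sum_comm (s := T)]
    refine Finset.sum_congr rfl fun ω' _ => ?_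
    rw [Finset.mul_sum]
    exact Finset.sum_congr rfl fun i _ => by ring
  have h2 : ∀ A : Finset (Fin M), |∑ ω, ∑ ω', chi A ω * chi A ω' * ∑ q ∈ T, f ω q * h ω' q| ≤
      ∑ q ∈ T, ((∑ ω, chi A ω * f ω q) ^ 2 + (∑ ω, chi A ω * h ω q) ^ 2) / 2 := by
    intro A
    rw [h1]
    refine (Finset.abs_sum_le_sum_abs _ _).trans (Finset.sum_le_sum fun q _ => ?_)
    rw [abs_le]; constructor <;>
    nlinarith [sq_nonneg ((∑ ω, chi A ω * f ω q) + (∑ ω, chi A ω * h ω q)),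
      sq_nonneg ((∑ ω, chi A ω * f ω q) - (∑ ω, chi A ω * h ω q))]
  refine (Finset.sum_le_sum fun A _ => h2 A).trans ?_
  rw [Finset.sum_comm]
  have h3 : ∀ q ∈ T, ∑ A : Finset (Fin M),
      ((∑ ω, chi A ω * f ω q) ^ 2 + (∑ ω, chi A ω * h ω q) ^ 2) / 2 =
      2 ^ M * ((∑ ω, f ω q ^ 2 + ∑ ω, h ω q ^ 2) / 2) := by
    intro q _
    rw [← Finset.sum_div, Finset.sum_add_distrib, parseval, parseval]; ring
  rw [Finset.sum_congr rfl h3, ← Finset.mul_sum, ← Finset.sum_div, Finset.sum_add_distrib,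
    Finset.sum_comm, Finset.sum_comm (s := T)]
  have e : ∀ k : (Fin M → ℤˣ) → Q → ℝ, (∀ ω, ∑ q ∈ T, k ω q ^ 2 ≤ 1) →
      ∑ ω, ∑ q ∈ T, k ω q ^ 2 ≤ 2 ^ M := by
    intro k hk
    calc _ ≤ ∑ ω : Fin M → ℤˣ, (1:ℝ) := Finset.sum_le_sum fun ω _ => hk ω
      _ = _ := by simp
  have := e f hf
  have := e h hh
  calc _ ≤ (2:ℝ) ^ M * ((2 ^ M + 2 ^ M) / 2) := by gcongr
    _ = 4 ^ M := by
      rw [show (4:ℝ) = 2 * 2 by norm_num, mul_pow]; ring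

/-- Right and left digit blocks. -/
noncomputable def blkR (l q r : ℕ) : ℝ := if r / 2 ^ l / 2 = q ∧ r / 2 ^ l % 2 = 1 then 1 else 0
noncomputable def blkS (l q s : ℕ) : ℝ := if s / 2 ^ l / 2 = q ∧ s / 2 ^ l % 2 = 0 then 1 else 0

lemma dyadic_lt (L s r : ℕ) (hs : s < 2 ^ L) (hr : r < 2 ^ L) :
    (if s < r then (1:ℝ) else 0) = ∑ l ∈ Finset.range L,
      if s / 2 ^ l / 2 = r / 2 ^ l / 2 ∧ s / 2 ^ l % 2 = 0 ∧ r / 2 ^ l % 2 = 1 then 1 else 0 := by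
  induction L generalizing s r with
  | zero =>
    have : s = 0 := by simpa using hs
    have : r = 0 := by simpa using hr
    subst_vars; simp
  | succ L ih =>
    rw [Finset.sum_range_succ']
    have e : ∀ l t : ℕ, t / 2 ^ (l + 1) = t / 2 / 2 ^ l := by
      intro l t; rw [pow_succ, mul_comm, Nat.div_div_eq_div_mul]
    simp only [e]
    rw [pow_succ] at hs hr
    rw [← ih (s / 2) (r / 2) (by omega) (by omega)]
    simp only [pow_zero, Nat.div_one]
    split_ifs <;> first | (exfalso; omega) | simp

lemma dyadic_blk (L s r : ℕ) (hs : s < 2 ^ L) (hr : r < 2 ^ L) :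
    (if s < r then (1:ℝ) else 0) = ∑ l ∈ Finset.range L, ∑ q ∈ Finset.range (2 ^ L),
      blkR l q r * blkS l q s := by
  rw [dyadic_lt L s r hs hr]
  refine Finset.sum_congr rfl fun l _ => ?_
  rw [Finset.sum_eq_single_of_mem (r / 2 ^ l / 2)]
  · unfold blkR blkS
    split_ifs <;> first | (exfalso; tauto) | simp
  · rw [Finset.mem_range]
    exact lt_of_le_of_lt ((Nat.div_le_self _ _).trans (Nat.div_le_self _ _)) hr
  · intro q _ hq
    unfold blkR
    rw [if_neg (fun h => hq h.1.symm), zero_mul]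

lemma blkR_sum (N l r : ℕ) : ∑ q ∈ Finset.range N, blkR l q r ^ 2 ≤ 1 := by
  have : ∀ q, blkR l q r ^ 2 ≤ if r / 2 ^ l / 2 = q then 1 else 0 := by
    intro q; unfold blkR; split_ifs <;> first | (exfalso; tauto) | simp
  refine (Finset.sum_le_sum fun q _ => this q).trans ?_
  rw [Finset.sum_ite_eq]; split_ifs <;> simp

lemma blkS_sum (N l r : ℕ) : ∑ q ∈ Finset.range N, blkS l q r ^ 2 ≤ 1 := by
  have : ∀ q, blkS l q r ^ 2 ≤ if r / 2 ^ l / 2 = q then 1 else 0 := by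
    intro q; unfold blkS; split_ifs <;> first | (exfalso; tauto) | simp
  refine (Finset.sum_le_sum fun q _ => this q).trans ?_
  rw [Finset.sum_ite_eq]; split_ifs <;> simp

lemma pi_sum_sq_le {d : ℕ} (T : Finset ℕ) (f : Fin d → ℕ → ℝ)
    (h : ∀ c, ∑ q ∈ T, f c q ^ 2 ≤ 1) :
    ∑ q ∈ Fintype.piFinset (fun _ : Fin d => T), (∏ c, f c (q c)) ^ 2 ≤ 1 := by
  simp only [← Finset.prod_pow]
  rw [← Finset.prod_univ_sum (fun _ : Fin d => T) (fun c q => f c q ^ 2)]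
  exact Finset.prod_le_one (fun c _ => Finset.sum_nonneg fun q _ => sq_nonneg _) (fun c _ => h c)

lemma rank_iff {Ω : Type*} [Fintype Ω] (S : Ω → ℝ) (x : ℝ) (ω ω' : Ω) :
    S ω' - S ω ≤ x ↔
      (Finset.univ.filter fun w => S w < S ω').card <
        (Finset.univ.filter fun w => S w ≤ S ω + x).card := by
  constructor
  · intro h
    apply Finset.card_lt_card
    rw [Finset.ssubset_iff_of_subset]
    · exact ⟨ω', by simp; linarith, by simp⟩
    · intro w; simp; intro hw; linarith
  · intro h
    by_contra hc
    push Not at hc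
    refine absurd h (not_lt.mpr (Finset.card_le_card ?_))
    intro w; simp; intro hw; linarith

lemma kernel_bound {d M : ℕ} (x : Euc d) (S : (Fin M → ℤˣ) → Euc d) :
    ∑ A : Finset (Fin M), |∑ ω, ∑ ω', chi A ω * chi A ω' * oneB x (S ω' - S ω)| ≤
      4 ^ M * (M + 1) ^ d := by
  let r : Fin d → (Fin M → ℤˣ) → ℕ := fun c ω =>
    (Finset.univ.filter fun w => S w c ≤ S ω c + x c).card
  let s : Fin d → (Fin M → ℤˣ) → ℕ := fun c ω =>
    (Finset.univ.filter fun w => S w c < S ω c).card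
  obtain ⟨L, hL⟩ : ∃ L, L = M + 1 := ⟨_, rfl⟩
  have hlt : ∀ T : Finset (Fin M → ℤˣ), T.card < 2 ^ L := by
    intro T
    rw [hL]
    have := Finset.card_le_univ T
    rw [card_signs] at this
    rw [pow_succ]
    have : 0 < 2 ^ M := by positivity
    omega
  obtain ⟨TL, hTL⟩ : ∃ TL, TL = Fintype.piFinset (fun _ : Fin d => Finset.range L) := ⟨_, rfl⟩
  obtain ⟨TQ, hTQ⟩ : ∃ TQ, TQ = Fintype.piFinset (fun _ : Fin d => Finset.range (2 ^ L)) :=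
    ⟨_, rfl⟩
  have hker : ∀ ω ω', oneB x (S ω' - S ω) = ∑ l ∈ TL, ∑ q ∈ TQ,
      (∏ c, blkR (l c) (q c) (r c ω)) * (∏ c, blkS (l c) (q c) (s c ω')) := by
    intro ω ω'
    have e1 : oneB x (S ω' - S ω) = ∏ c, if s c ω' < r c ω then (1:ℝ) else 0 := by
      have : ∀ c, s c ω' < r c ω ↔ (S ω' - S ω) c ≤ x c := by
        intro c
        simpa using (rank_iff (fun w => S w c) (x c) ω ω').symm
      simp only [this, oneB, Set.indicator, Set.mem_ofPred_eq]
      rw [Finset.prod_ite_zero]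
      simp
    rw [e1, Finset.prod_congr rfl fun c _ => dyadic_blk L (s c ω') (r c ω) (hlt _) (hlt _)]
    rw [Finset.prod_univ_sum, ← hTL]
    refine Finset.sum_congr rfl fun l _ => ?_
    rw [Finset.prod_univ_sum, ← hTQ]
    refine Finset.sum_congr rfl fun q _ => ?_
    rw [Finset.prod_mul_distrib]
  have h1 : ∀ A : Finset (Fin M), |∑ ω, ∑ ω', chi A ω * chi A ω' * oneB x (S ω' - S ω)| ≤
      ∑ l ∈ TL, |∑ ω, ∑ ω', chi A ω * chi A ω' * ∑ q ∈ TQ,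
      (∏ c, blkR (l c) (q c) (r c ω)) * (∏ c, blkS (l c) (q c) (s c ω'))| := by
    intro A
    refine le_trans (le_of_eq ?_) (Finset.abs_sum_le_sum_abs _ _)
    congr 1
    rw [Finset.sum_comm (s := TL)]
    refine Finset.sum_congr rfl fun ω _ => ?_
    rw [Finset.sum_comm (s := TL)]
    refine Finset.sum_congr rfl fun ω' _ => ?_
    rw [hker, Finset.mul_sum]
  refine (Finset.sum_le_sum fun A _ => h1 A).trans ?_
  rw [Finset.sum_comm (t := TL)]
  calc _ ≤ ∑ l ∈ TL, (4:ℝ) ^ M := by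
        refine Finset.sum_le_sum fun l _ => ?_
        exact block_bound TQ (fun ω q => ∏ c, blkR (l c) (q c) (r c ω))
          (fun ω q => ∏ c, blkS (l c) (q c) (s c ω))
          (fun ω => by
            rw [hTQ]
            exact pi_sum_sq_le _ (fun c q => blkR (l c) q (r c ω)) fun c => blkR_sum _ _ _)
          (fun ω => by
            rw [hTQ]
            exact pi_sum_sq_le _ (fun c q => blkS (l c) q (s c ω)) fun c => blkS_sum _ _ _)
    _ = _ := by
        rw [Finset.sum_const, hTL, Fintype.card_piFinset]
        simp [hL]; ring

/-- Number of minus signs. -/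
def nneg {M : ℕ} (η : Fin M → ℤˣ) : ℕ := (Finset.univ.filter fun i => η i = -1).card

/-- Fourier coefficients. -/
noncomputable def Wc {d : ℕ} (F : Measure (Euc d)) (x : Euc d) (M : ℕ) (A : Finset (Fin M)) : ℝ :=
  ((2:ℝ) ^ M)⁻¹ * ∑ η : Fin M → ℤˣ, gf F x (nneg η) * chi A η

lemma Wc_inv {d : ℕ} (F : Measure (Euc d)) (x : Euc d) (M : ℕ) (η : Fin M → ℤˣ) :
    ∑ A, Wc F x M A * chi A η = gf F x (nneg η) := by
  have h1 : ∀ A, Wc F x M A * chi A η =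
      ((2:ℝ) ^ M)⁻¹ * ∑ ω : Fin M → ℤˣ, gf F x (nneg ω) * chi A (ω * η) := by
    intro A
    rw [Wc, mul_assoc, Finset.sum_mul]
    congr 1
    exact Finset.sum_congr rfl fun ω _ => by rw [chi_mul]; ring
  simp only [h1]
  rw [← Finset.mul_sum, Finset.sum_comm]
  simp only [← Finset.mul_sum, sum_chi]
  have h2 : ∀ ω : Fin M → ℤˣ, ω * η = 1 ↔ ω = η := by
    intro ω
    rw [mul_eq_one_iff_eq_inv]
    have : η⁻¹ = η := by ext i; simp [Pi.inv_apply]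
    rw [this]
  simp only [h2]
  simp
  field_simp

lemma Wc_bound {d : ℕ} (F : Measure (Euc d)) [IsProbabilityMeasure F] (hs : IsSymmMeasure F)
    (x : Euc d) (M : ℕ) : ∑ A, |Wc F x M A| ≤ (M + 1) ^ d := by
  set P := Measure.pi fun _ : Fin M => F
  let S : (Fin M → Euc d) → (Fin M → ℤˣ) → Euc d := fun a ω => ∑ i, (sg (ω i) / 2) • a i
  have hS : ∀ a ω η, S a (ω * η) - S a ω =
      ∑ i ∈ Finset.univ.filter (fun i => η i = -1), sg ((-ω) i) • a i := by
    intro a ω η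
    simp only [S]
    rw [← Finset.sum_sub_distrib, Finset.sum_filter]
    refine Finset.sum_congr rfl fun i _ => ?_
    rw [← sub_smul, Pi.mul_apply, sg_mul]
    rcases Int.units_eq_one_or (η i) with h | h
    · simp [h]
    · simp only [h, if_true, Pi.neg_apply, sg_neg, sg_one]
      congr 1; ring
  have hg : ∀ ω η, ∫ a, oneB x (S a (ω * η) - S a ω) ∂P = gf F x (nneg η) := by
    intro ω η
    simp only [hS]
    exact integral_law F hs x (-ω) _
  have hint : ∀ ω ω', Integrable (fun a => oneB x (S a ω' - S a ω)) P := fun ω ω' =>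
    integrable_oneB_comp x P _ (by simp only [S]; fun_prop)
  let K : Finset (Fin M) → (Fin M → Euc d) → ℝ := fun A a =>
    ∑ ω, ∑ ω', chi A ω * chi A ω' * oneB x (S a ω' - S a ω)
  have hK : ∀ A, Integrable (K A) P := fun A =>
    integrable_finsetSum _ fun ω _ => integrable_finsetSum _ fun ω' _ => (hint ω ω').const_mul _
  have hW : ∀ A, Wc F x M A = ((4:ℝ) ^ M)⁻¹ * ∫ a, K A a ∂P := by
    intro A
    simp only [K]
    rw [integral_finsetSum]
    swap
    · exact fun ω _ => integrable_finsetSum _ fun ω' _ => (hint ω ω').const_mul _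
    have h1 : ∀ ω, ∫ a, ∑ ω', chi A ω * chi A ω' * oneB x (S a ω' - S a ω) ∂P =
        ∑ η : Fin M → ℤˣ, gf F x (nneg η) * chi A η := by
      intro ω
      rw [integral_finsetSum]
      swap
      · exact fun ω' _ => (hint ω ω').const_mul _
      rw [← Equiv.sum_comp (Equiv.mulLeft ω)]
      refine Finset.sum_congr rfl fun η _ => ?_
      rw [integral_const_mul, Equiv.coe_mulLeft, hg, chi_mul, ← mul_assoc, chi_sq]
      ring
    simp only [h1]
    rw [Wc, Finset.sum_const, Finset.card_univ, card_signs, nsmul_eq_mul, ← mul_assoc]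
    congr 1
    rw [show (4:ℝ) = 2 * 2 by norm_num, mul_pow]
    push_cast
    field_simp
  have h4 : (0:ℝ) < 4 ^ M := by positivity
  calc ∑ A, |Wc F x M A| = ((4:ℝ) ^ M)⁻¹ * ∑ A, |∫ a, K A a ∂P| := by
        simp only [hW, abs_mul, ← Finset.mul_sum]
        rw [abs_of_pos (by positivity)]
    _ ≤ ((4:ℝ) ^ M)⁻¹ * ∑ A, ∫ a, |K A a| ∂P := by
        gcongr; exact abs_integral_le_integral_abs
    _ = ((4:ℝ) ^ M)⁻¹ * ∫ a, ∑ A, |K A a| ∂P := by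
        rw [integral_finsetSum _ fun A _ => (hK A).abs]
    _ ≤ ((4:ℝ) ^ M)⁻¹ * ∫ a, (4 ^ M * (M + 1) ^ d : ℝ) ∂P := by
        refine mul_le_mul_of_nonneg_left ?_ (by positivity)
        exact integral_mono (integrable_finsetSum _ fun A _ => (hK A).abs) (integrable_const _)
          (fun a => kernel_bound x (S a))
    _ = _ := by simp

lemma chi_abs {M : ℕ} (A : Finset (Fin M)) (ω : Fin M → ℤˣ) : |chi A ω| = 1 := by
  have := chi_sq A ω
  rw [← abs_mul_abs_self] at this
  nlinarith [abs_nonneg (chi A ω)]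

/-- Eigenvalues of the flip walk. -/
noncomputable def lam {M : ℕ} (A : Finset (Fin M)) : ℝ := (∑ i, chi A (flp i)) / M

lemma lam_abs {M : ℕ} (hM : 0 < M) (A : Finset (Fin M)) : |lam A| ≤ 1 := by
  unfold lam
  rw [abs_div, div_le_one (by positivity)]
  refine (Finset.abs_sum_le_sum_abs _ _).trans ?_
  simp [chi_abs]

/-- The smoothed function. -/
noncomputable def Gt {d : ℕ} (F : Measure (Euc d)) (x : Euc d) (M : ℕ) (t : ℕ)
    (η : Fin M → ℤˣ) : ℝ := ∑ A, Wc F x M A * lam A ^ t * chi A η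

lemma Gt_succ {d : ℕ} (F : Measure (Euc d)) (x : Euc d) (M : ℕ) (t : ℕ) (η : Fin M → ℤˣ) :
    Gt F x M (t + 1) η = (∑ i, Gt F x M t (η * flp i)) / M := by
  unfold Gt
  rw [Finset.sum_comm, Finset.sum_div]
  refine Finset.sum_congr rfl fun A _ => ?_
  simp only [chi_mul, ← mul_assoc, ← Finset.mul_sum]
  rw [pow_succ, lam]; ring

lemma nneg_flp_pos {M : ℕ} (η : Fin M → ℤˣ) (i : Fin M) (h : η i ≠ -1) :
    nneg (η * flp i) = nneg η + 1 := by
  unfold nneg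
  have : (Finset.univ.filter fun j => (η * flp i) j = -1) =
      insert i (Finset.univ.filter fun j => η j = -1) := by
    ext j
    simp only [Finset.mem_filter, Finset.mem_univ, true_and, Finset.mem_insert, Pi.mul_apply]
    by_cases hj : j = i
    · subst hj
      have : η j = 1 := (Int.units_eq_one_or _).resolve_right h
      simp [this, flp_same]
    · simp [flp_ne hj, hj]
  rw [this, Finset.card_insert_of_notMem (by simp [h])]

lemma Gt_mem {d : ℕ} (F : Measure (Euc d)) [IsProbabilityMeasure F] (x : Euc d) (M : ℕ)
    (hM : 0 < M) (t : ℕ) (η : Fin M → ℤˣ) : 0 ≤ Gt F x M t η ∧ Gt F x M t η ≤ 1 := by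
  induction t generalizing η with
  | zero =>
    have : Gt F x M 0 η = gf F x (nneg η) := by
      rw [← Wc_inv]; simp [Gt]
    rw [this]
    exact ⟨gf_nonneg _ _ _, gf_le_one _ _ _⟩
  | succ t ih =>
    rw [Gt_succ]
    constructor
    · exact div_nonneg (Finset.sum_nonneg fun i _ => (ih _).1) (by positivity)
    · rw [div_le_one (by positivity)]
      calc _ ≤ ∑ i : Fin M, (1:ℝ) := Finset.sum_le_sum fun i _ => (ih _).2
        _ = _ := by simp

lemma Gt_approx {d : ℕ} (F : Measure (Euc d)) [IsProbabilityMeasure F] (x : Euc d) (M : ℕ)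
    (hM : 0 < M) (t : ℕ) (η : Fin M → ℤˣ) :
    |Gt F x M t η - gf F x (nneg η + t)| ≤ t * (nneg η + t) / M := by
  induction t generalizing η with
  | zero =>
    have : Gt F x M 0 η = gf F x (nneg η) := by
      rw [← Wc_inv]; simp [Gt]
    simp [this]
  | succ t ih =>
    have hM' : (0:ℝ) < M := by positivity
    have h1 : ∀ i, |Gt F x M t (η * flp i) - gf F x (nneg η + (t + 1))| ≤
        t * (nneg η + 1 + t) / M + if η i = -1 then 1 else 0 := by
      intro i
      split_ifs with h
      · have h2 : |Gt F x M t (η * flp i) - gf F x (nneg η + (t + 1))| ≤ 1 := by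
          have := Gt_mem F x M hM t (η * flp i)
          have := gf_nonneg F x (nneg η + (t + 1))
          have := gf_le_one F x (nneg η + (t + 1))
          rw [abs_le]; constructor <;> linarith
        have : 0 ≤ (t:ℝ) * (nneg η + 1 + t) / M := by positivity
        linarith
      · have := ih (η * flp i)
        rw [nneg_flp_pos η i h] at this
        rw [show nneg η + (t + 1) = nneg η + 1 + t by ring]
        push_cast at this
        linarith
    have h2 : Gt F x M (t + 1) η - gf F x (nneg η + (t + 1)) =
        (∑ i, (Gt F x M t (η * flp i) - gf F x (nneg η + (t + 1)))) / M := by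
      rw [Gt_succ, Finset.sum_sub_distrib]
      simp
      field_simp
    rw [h2, abs_div, abs_of_pos hM']
    have h3 : |∑ i, (Gt F x M t (η * flp i) - gf F x (nneg η + (t + 1)))| ≤
        t * (nneg η + 1 + t) + nneg η := by
      refine (Finset.abs_sum_le_sum_abs _ _).trans
        ((Finset.sum_le_sum fun i _ => h1 i).trans (le_of_eq ?_))
      rw [Finset.sum_add_distrib]
      simp [nneg]
      field_simp
    gcongr
    refine h3.trans ?_
    push_cast
    nlinarith

lemma spectral {d : ℕ} (F : Measure (Euc d)) [IsProbabilityMeasure F] (hs : IsSymmMeasure F)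
    (x : Euc d) (M : ℕ) (hM : 0 < M) : ∃ W y : Finset (Fin M) → ℝ,
      ∑ A, |W A| ≤ (M + 1) ^ d ∧ (∀ A, |y A| ≤ 1) ∧
      ∀ t : ℕ, (0 ≤ ∑ A, W A * y A ^ t) ∧ (∑ A, W A * y A ^ t ≤ 1) ∧
        |∑ A, W A * y A ^ t - gf F x t| ≤ (t:ℝ) ^ 2 / M := by
  refine ⟨Wc F x M, lam, Wc_bound F hs x M, lam_abs hM, fun t => ?_⟩
  have e : ∑ A, Wc F x M A * lam A ^ t = Gt F x M t 1 := by simp [Gt, chi_one]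
  have h1 : nneg (1 : Fin M → ℤˣ) = 0 := by simp [nneg]
  have h2 := Gt_approx F x M hM t 1
  rw [h1] at h2
  simp only [zero_add, Nat.cast_zero] at h2
  rw [e]
  refine ⟨(Gt_mem F x M hM t 1).1, (Gt_mem F x M hM t 1).2, ?_⟩
  rw [sq]; exact h2


/-- Uniform bound for the weighted power sums. -/
def Bd {ι : Type*} [Fintype ι] (W y p : ι → ℝ) (c : ℝ) : Prop :=
  ∀ t : ℕ, |∑ A, W A * y A ^ t * p A| ≤ c

lemma Bd.ypow {ι : Type*} [Fintype ι] {W y p : ι → ℝ} {c : ℝ} (h : Bd W y p c) (L : ℕ) :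
    Bd W y (fun A => y A ^ L * p A) c := by
  intro t
  have := h (t + L)
  have e : ∑ A, W A * y A ^ t * (y A ^ L * p A) = ∑ A, W A * y A ^ (t + L) * p A :=
    Finset.sum_congr rfl fun A _ => by rw [pow_add]; ring
  rw [e]; exact this

lemma Bd.add {ι : Type*} [Fintype ι] {W y p q : ι → ℝ} {c e : ℝ} (h : Bd W y p c)
    (h' : Bd W y q e) : Bd W y (fun A => p A + q A) (c + e) := by
  intro t
  simp only [mul_add, Finset.sum_add_distrib]
  exact (abs_add_le _ _).trans (add_le_add (h t) (h' t))

lemma Bd.smul {ι : Type*} [Fintype ι] {W y p : ι → ℝ} {c : ℝ} (h : Bd W y p c) (r : ℝ) :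
    Bd W y (fun A => r * p A) (|r| * c) := by
  intro t
  have : ∑ A, W A * y A ^ t * (r * p A) = r * ∑ A, W A * y A ^ t * p A := by
    rw [Finset.mul_sum]; exact Finset.sum_congr rfl fun _ _ => by ring
  rw [this, abs_mul]
  exact mul_le_mul_of_nonneg_left (h t) (abs_nonneg _)

lemma Bd.sum {ι κ : Type*} [Fintype ι] {W y : ι → ℝ} (s : Finset κ) (p : κ → ι → ℝ) (c : κ → ℝ)
    (h : ∀ i ∈ s, Bd W y (p i) (c i)) : Bd W y (fun A => ∑ i ∈ s, p i A) (∑ i ∈ s, c i) := by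
  intro t
  simp only [Finset.mul_sum]
  rw [Finset.sum_comm]
  exact (Finset.abs_sum_le_sum_abs _ _).trans (Finset.sum_le_sum fun i hi => h i hi t)

lemma Bd.z {ι : Type*} [Fintype ι] {W y p : ι → ℝ} {c : ℝ} (h : Bd W y p c) (L : ℕ) :
    Bd W y (fun A => (1 - y A ^ L) * p A) (2 * c) := by
  have := h.add ((h.ypow L).smul (-1))
  convert this using 1
  · funext A; ring
  · norm_num; ring

/-- The averaging multiplier. -/
noncomputable def qav (L : ℕ) (y : ℝ) : ℝ := (∑ i ∈ Finset.range L, (1 - y ^ i)) / L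

lemma Bd.q {ι : Type*} [Fintype ι] {W y p : ι → ℝ} {c : ℝ} (h : Bd W y p c) (L : ℕ)
    (hL : 0 < L) : Bd W y (fun A => qav L (y A) * p A) (2 * c) := by
  have := (Bd.sum (Finset.range L) (fun i A => (1 - y A ^ i) * p A) (fun _ => 2 * c)
    (fun i _ => h.z i)).smul ((L:ℝ)⁻¹)
  convert this using 1
  · funext A; rw [qav, ← Finset.sum_mul]; ring
  · simp; field_simp

lemma Bd.qpow {ι : Type*} [Fintype ι] {W y p : ι → ℝ} {c : ℝ} (h : Bd W y p c) (L : ℕ)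
    (hL : 0 < L) (k : ℕ) : Bd W y (fun A => qav L (y A) ^ k * p A) (2 ^ k * c) := by
  induction k with
  | zero => simpa using h
  | succ k ih =>
    have := ih.q L hL
    convert this using 1
    · funext A; ring
    · ring

/-- Truncated geometric series of the multiplier. -/
noncomputable def Pav (L K : ℕ) (y : ℝ) : ℝ := ∑ i ∈ Finset.range K, qav L y ^ i

lemma Bd.mono {ι : Type*} [Fintype ι] {W y p : ι → ℝ} {c e : ℝ} (h : Bd W y p c) (hc : c ≤ e) :
    Bd W y p e := fun t => (h t).trans hc

lemma Bd.nonneg {ι : Type*} [Fintype ι] {W y p : ι → ℝ} {c : ℝ} (h : Bd W y p c) : 0 ≤ c :=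
  (abs_nonneg _).trans (h 0)

lemma Bd.P {ι : Type*} [Fintype ι] {W y p : ι → ℝ} {c : ℝ} (h : Bd W y p c) (L : ℕ)
    (hL : 0 < L) (K : ℕ) : Bd W y (fun A => Pav L K (y A) * p A) (2 ^ K * c) := by
  have := Bd.sum (Finset.range K) (fun i A => qav L (y A) ^ i * p A) (fun i => 2 ^ i * c)
    (fun i _ => h.qpow L hL i)
  have h2 := this.mono (e := 2 ^ K * c) (by
    rw [← Finset.sum_mul]
    refine mul_le_mul_of_nonneg_right ?_ h.nonneg
    rw [geom_sum_eq (by norm_num)]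
    norm_num)
  convert h2 using 1
  funext A; rw [Pav, Finset.sum_mul]

lemma qav_nonneg (L : ℕ) {y : ℝ} (h0 : 0 ≤ y) (h1 : y ≤ 1) : 0 ≤ qav L y :=
  div_nonneg (Finset.sum_nonneg fun i _ => sub_nonneg.mpr (pow_le_one₀ h0 h1)) (by positivity)

lemma qav_le (L : ℕ) (hL : 0 < L) {y : ℝ} (h0 : 0 ≤ y) (h1 : y ≤ 1) : qav L y ≤ 1 - y ^ L := by
  unfold qav
  rw [div_le_iff₀ (by positivity)]
  calc _ ≤ ∑ i ∈ Finset.range L, (1 - y ^ L) := Finset.sum_le_sum fun i hi =>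
        sub_le_sub_left (pow_le_pow_of_le_one h0 h1 (Finset.mem_range.mp hi).le) _
    _ = _ := by simp; ring

lemma qav_id (L : ℕ) (hL : 0 < L) (y : ℝ) : (1 - y) * (1 - qav L y) = (1 - y ^ L) / L := by
  have h := mul_neg_geom_sum y L
  have hL' : (L:ℝ) ≠ 0 := by positivity
  unfold qav
  rw [Finset.sum_sub_distrib]
  simp
  field_simp
  linarith

lemma Pav_id (L K : ℕ) (hL : 0 < L) (y : ℝ) :
    (1 - y ^ L) / L * Pav L K y = (1 - y) * (1 - qav L y ^ K) := by
  rw [← qav_id L hL, mul_assoc, Pav, mul_neg_geom_sum]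

lemma pow_mul_one_sub_le (v : ℝ) (h0 : 0 ≤ v) (h1 : v ≤ 1) (m : ℕ) :
    v ^ m * (1 - v) ≤ 1 / (m + 1) := by
  rw [le_div_iff₀ (by positivity)]
  have h := mul_neg_geom_sum v (m + 1)
  have h2 : ((m:ℝ) + 1) * v ^ m ≤ ∑ i ∈ Finset.range (m + 1), v ^ i := by
    calc _ = ∑ i ∈ Finset.range (m + 1), v ^ m := by simp
      _ ≤ _ := Finset.sum_le_sum fun i hi =>
        pow_le_pow_of_le_one h0 h1 (Nat.lt_succ_iff.mp (Finset.mem_range.mp hi))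
  have h3 : 0 ≤ v ^ (m + 1) := by positivity
  nlinarith

lemma sup_bound (y : ℝ) (h0 : 0 ≤ y) (h1 : y ≤ 1) (L K m s : ℕ) (hL : 0 < L)
    (hs : K * L * m ≤ s) : y ^ s * qav L y ^ K ≤ (1 / (m + 1)) ^ K := by
  have hq := qav_nonneg L h0 h1
  calc y ^ s * qav L y ^ K ≤ y ^ (K * L * m) * (1 - y ^ L) ^ K := by
        exact mul_le_mul (pow_le_pow_of_le_one h0 h1 hs)
          (pow_le_pow_left₀ hq (qav_le L hL h0 h1) K) (pow_nonneg hq _) (pow_nonneg h0 _)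
    _ = ((y ^ L) ^ m * (1 - y ^ L)) ^ K := by
        rw [mul_pow]; congr 1
        rw [← pow_mul, ← pow_mul]; congr 1; ring
    _ ≤ _ := by
        gcongr
        · have : y ^ L ≤ 1 := pow_le_one₀ h0 h1
          have : 0 ≤ 1 - y ^ L := by linarith
          positivity
        · exact pow_mul_one_sub_le _ (by positivity) (pow_le_one₀ h0 h1) m

lemma diff_bounds {ι : Type*} [Fintype ι] (W y : ι → ℝ) (h0 : ∀ A, 0 ≤ y A) (h1 : ∀ A, y A ≤ 1)
    (Λ : ℝ) (hΛ : ∑ A, |W A| ≤ Λ) (hb : ∀ t : ℕ, |∑ A, W A * y A ^ t| ≤ 1)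
    (L K m s : ℕ) (hL : 0 < L) (hs : K * L * m ≤ s) :
    |∑ A, W A * y A ^ s * (1 - y A)| ≤ 2 ^ (K + 1) / L + Λ * (1 / (m + 1)) ^ K ∧
    |∑ A, W A * y A ^ s * (1 - y A) ^ 2| ≤ 4 ^ (K + 1) / L ^ 2 + 2 * Λ * (1 / (m + 1)) ^ K := by
  have hB : Bd W y (fun _ => 1) 1 := by intro t; simpa using hb t
  have hL' : (0:ℝ) < L := by positivity
  have B1 : ∀ {p : ι → ℝ} {c : ℝ}, Bd W y p c →
      Bd W y (fun A => (1 - y A ^ L) / L * Pav L K (y A) * p A) (2 ^ (K + 1) / L * c) := by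
    intro p c h
    have := ((h.P L hL K).z L).smul ((L:ℝ)⁻¹)
    convert this using 1
    · funext A; ring
    · rw [abs_of_pos (by positivity)]; ring
  have Ba := B1 hB
  have Bb := B1 Ba
  set ε : ℝ := (1 / ((m:ℝ) + 1)) ^ K with hε
  have hε0 : 0 ≤ ε := by positivity
  have hrest : ∀ (f : ι → ℝ) (c : ℝ), 0 ≤ c → (∀ A, |y A ^ s * f A| ≤ c) →
      |∑ A, W A * y A ^ s * f A| ≤ Λ * c := by
    intro f c hc hf
    refine (Finset.abs_sum_le_sum_abs _ _).trans ?_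
    refine le_trans ?_ (mul_le_mul_of_nonneg_right hΛ hc)
    rw [Finset.sum_mul]
    refine Finset.sum_le_sum fun A _ => ?_
    rw [mul_assoc, abs_mul]
    exact mul_le_mul_of_nonneg_left (hf A) (abs_nonneg _)
  have hq0 : ∀ A, 0 ≤ qav L (y A) := fun A => qav_nonneg L (h0 A) (h1 A)
  have hq1 : ∀ A, qav L (y A) ≤ 1 := fun A => (qav_le L hL (h0 A) (h1 A)).trans
    (by linarith [pow_nonneg (h0 A) L])
  have hsup := fun A => sup_bound (y A) (h0 A) (h1 A) L K m s hL hs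
  constructor
  · have e : ∑ A, W A * y A ^ s * (1 - y A) =
        ∑ A, W A * y A ^ s * ((1 - y A ^ L) / L * Pav L K (y A) * 1) +
        ∑ A, W A * y A ^ s * ((1 - y A) * qav L (y A) ^ K) := by
      rw [← Finset.sum_add_distrib]
      refine Finset.sum_congr rfl fun A _ => ?_
      rw [Pav_id L K hL]; ring
    rw [e]
    refine (abs_add_le _ _).trans (add_le_add ?_ ?_)
    · simpa using Ba s
    · refine hrest _ _ hε0 fun A => ?_
      have h2 : 0 ≤ 1 - y A := by linarith [h1 A]
      have h3 : 0 ≤ y A ^ s * qav L (y A) ^ K := mul_nonneg (pow_nonneg (h0 A) _) (pow_nonneg (hq0 A) _)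
      rw [show y A ^ s * ((1 - y A) * qav L (y A) ^ K) =
        (y A ^ s * qav L (y A) ^ K) * (1 - y A) by ring, abs_of_nonneg (mul_nonneg h3 h2)]
      exact (mul_le_of_le_one_right h3 (by linarith [h0 A])).trans (hsup A)
  · have e : ∑ A, W A * y A ^ s * (1 - y A) ^ 2 =
        ∑ A, W A * y A ^ s * ((1 - y A ^ L) / L * Pav L K (y A) *
          ((1 - y A ^ L) / L * Pav L K (y A) * 1)) +
        ∑ A, W A * y A ^ s * ((1 - y A) ^ 2 * (2 - qav L (y A) ^ K) * qav L (y A) ^ K) := by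
      rw [← Finset.sum_add_distrib]
      refine Finset.sum_congr rfl fun A _ => ?_
      rw [Pav_id L K hL]; ring
    rw [e]
    refine (abs_add_le _ _).trans (add_le_add ?_ ?_)
    · refine (Bb s).trans (le_of_eq ?_)
      rw [show (4:ℝ) = 2 * 2 by norm_num, mul_pow]; field_simp
    · rw [show 2 * Λ * ε = Λ * (2 * ε) by ring]
      refine hrest _ _ (by positivity) fun A => ?_
      have h2 : 0 ≤ 1 - y A := by linarith [h1 A]
      have h3 : 0 ≤ y A ^ s * qav L (y A) ^ K := mul_nonneg (pow_nonneg (h0 A) _) (pow_nonneg (hq0 A) _)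
      have h4 : 0 ≤ qav L (y A) ^ K := pow_nonneg (hq0 A) _
      have h5 : qav L (y A) ^ K ≤ 1 := pow_le_one₀ (hq0 A) (hq1 A)
      have h6 : 0 ≤ (1 - y A) ^ 2 * (2 - qav L (y A) ^ K) := mul_nonneg (sq_nonneg _) (by linarith)
      have h7 : (1 - y A) ^ 2 * (2 - qav L (y A) ^ K) ≤ 2 := by
        have : (1 - y A) ^ 2 ≤ 1 := by nlinarith [h0 A]
        nlinarith
      rw [show y A ^ s * ((1 - y A) ^ 2 * (2 - qav L (y A) ^ K) * qav L (y A) ^ K) =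
        ((1 - y A) ^ 2 * (2 - qav L (y A) ^ K)) * (y A ^ s * qav L (y A) ^ K) by ring,
        abs_of_nonneg (mul_nonneg h6 h3)]
      exact mul_le_mul h7 (hsup A) h3 (by norm_num)

/-- Constants. -/
noncomputable def Cg (d : ℕ) : ℝ :=
  64 * (4 ^ ((12 * d + 6) + 1) + 2 * (8192 ^ d * (8 * ((12 * d + 6 : ℕ) : ℝ)) ^ (12 * d + 6)))

lemma Cg_pos (d : ℕ) : 0 < Cg d := by unfold Cg; positivity

lemma gamma_bounds {ι : Type*} [Fintype ι] (d n : ℕ) (hn : 0 < n) (W y : ι → ℝ)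
    (h0 : ∀ A, 0 ≤ y A) (h1 : ∀ A, y A ≤ 1)
    (hΛ : ∑ A, |W A| ≤ ((n:ℝ) ^ 3 + 1) ^ d) (hb : ∀ t : ℕ, |∑ A, W A * y A ^ t| ≤ 1)
    (s : ℕ) (hs : n ≤ 8 * s) :
    |∑ A, W A * y A ^ s * (1 - y A)| ≤ Cg d / √n ∧
    |∑ A, W A * y A ^ s * (1 - y A) ^ 2| ≤ Cg d / (n * √n) := by
  obtain ⟨b, hb1, hb4, hb16⟩ : ∃ b : ℕ, 1 ≤ b ∧ b ^ 4 ≤ n ∧ n ≤ 16 * b ^ 4 := by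
    refine ⟨Nat.sqrt (Nat.sqrt n), ?_, ?_, ?_⟩
    · have := Nat.sqrt_pos.mpr (Nat.sqrt_pos.mpr hn); omega
    · have h1 := Nat.sqrt_le' (Nat.sqrt n)
      have h2 := Nat.sqrt_le' n
      calc _ = (Nat.sqrt (Nat.sqrt n) ^ 2) ^ 2 := by ring
        _ ≤ (Nat.sqrt n) ^ 2 := Nat.pow_le_pow_left h1 2
        _ ≤ n := h2
    · have h0 := Nat.sqrt_pos.mpr (Nat.sqrt_pos.mpr hn)
      have h1 := Nat.lt_succ_sqrt' (Nat.sqrt n)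
      have h2 := Nat.lt_succ_sqrt' n
      set c := Nat.sqrt (Nat.sqrt n)
      have h3 : Nat.sqrt n + 1 ≤ (c + 1) ^ 2 := h1
      have h4 : (c + 1) ^ 2 ≤ 4 * c ^ 2 := by nlinarith
      calc n ≤ (Nat.sqrt n + 1) ^ 2 := h2.le
        _ ≤ (4 * c ^ 2) ^ 2 := Nat.pow_le_pow_left (h3.trans h4) 2
        _ = _ := by ring
  obtain ⟨K, hK⟩ : ∃ K, K = 12 * d + 6 := ⟨_, rfl⟩
  have hK0 : 0 < K := by omega
  have hbR : (1:ℝ) ≤ b := by exact_mod_cast hb1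
  have hb0 : (0:ℝ) < b := by linarith
  have hm1 : K * b ^ 3 * (b / (8 * K)) ≤ s := by
    have h1 : 8 * K * (b / (8 * K)) ≤ b := Nat.mul_div_le b (8 * K)
    have h2 : b ^ 3 * (8 * K * (b / (8 * K))) ≤ b ^ 3 * b := Nat.mul_le_mul_left _ h1
    have h3 : b ^ 3 * (8 * K * (b / (8 * K))) = 8 * (K * b ^ 3 * (b / (8 * K))) := by ring
    have h4 : b ^ 3 * b = b ^ 4 := by ring
    omega
  have hm2 : (1:ℝ) / ((b / (8 * K) : ℕ) + 1) ≤ 8 * K / b := by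
    have h1 : b < 8 * K * (b / (8 * K) + 1) := Nat.lt_mul_div_succ b (by omega)
    have h2 : (b:ℝ) < 8 * K * ((b / (8 * K) : ℕ) + 1) := by exact_mod_cast h1
    rw [div_le_div_iff₀ (by positivity) hb0]
    linarith
  have hL0 : ∑ A, |W A| ≤ (8192 * (b:ℝ) ^ 12) ^ d := by
    refine hΛ.trans (pow_le_pow_left₀ (by positivity) ?_ d)
    have h1 : (n:ℝ) ≤ 16 * b ^ 4 := by exact_mod_cast hb16
    have h2 : (n:ℝ) ^ 3 ≤ (16 * b ^ 4) ^ 3 := pow_le_pow_left₀ (by positivity) h1 3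
    have h3 : (1:ℝ) ≤ (b:ℝ) ^ 12 := one_le_pow₀ hbR
    nlinarith
  obtain ⟨D1, D2⟩ := diff_bounds W y h0 h1 _ hL0 hb (b ^ 3) K (b / (8 * K)) s (by positivity) hm1
  set E : ℝ := 8192 ^ d * (8 * (K:ℝ)) ^ K with hE
  have hE0 : 0 ≤ E := by positivity
  have hΛε : (8192 * (b:ℝ) ^ 12) ^ d * (1 / ((b / (8 * K) : ℕ) + 1)) ^ K ≤ E / b ^ 6 := by
    calc _ ≤ (8192 * (b:ℝ) ^ 12) ^ d * (8 * K / b) ^ K := by gcongr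
      _ = E / b ^ 6 := by
        rw [hE, div_pow, mul_pow]
        have : (b:ℝ) ^ K = (b ^ 12) ^ d * b ^ 6 := by rw [hK, pow_add, pow_mul]
        rw [this]
        field_simp
  have hsq : √(n:ℝ) ≤ 4 * b ^ 2 := by
    apply Real.sqrt_le_iff.mpr
    refine ⟨by positivity, ?_⟩
    have h1 : (n:ℝ) ≤ 16 * b ^ 4 := by exact_mod_cast hb16
    nlinarith
  have hsn : (0:ℝ) < √n := by positivity
  have hCg : Cg d = 64 * (4 ^ (K + 1) + 2 * E) := by
    unfold Cg; rw [hE, hK]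
  have h24 : (2:ℝ) ^ (K + 1) ≤ 4 ^ (K + 1) := pow_le_pow_left₀ (by norm_num) (by norm_num) _
  have hp : (0:ℝ) < 4 ^ (K + 1) := by positivity
  push_cast at D1 D2
  constructor
  · refine D1.trans ?_
    calc _ ≤ (2:ℝ) ^ (K + 1) / b ^ 3 + E / b ^ 6 := by gcongr
      _ ≤ 4 ^ (K + 1) / b ^ 2 + E / b ^ 2 := by
          gcongr
          · norm_num
          · norm_num
      _ = (4 ^ (K + 1) + E) / b ^ 2 := by ring
      _ ≤ Cg d / √n := by
          rw [div_le_div_iff₀ (by positivity) hsn, hCg]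
          calc (4 ^ (K + 1) + E) * √n ≤ (4 ^ (K + 1) + E) * (4 * b ^ 2) := by gcongr
            _ ≤ _ := by
              have : (0:ℝ) < b ^ 2 := by positivity
              have h5 : 0 ≤ 4 ^ (K + 1) * (b:ℝ) ^ 2 := by positivity
              have h6 : 0 ≤ E * (b:ℝ) ^ 2 := by positivity
              nlinarith
  · refine D2.trans ?_
    calc _ = (4:ℝ) ^ (K + 1) / b ^ 6 + 2 * ((8192 * (b:ℝ) ^ 12) ^ d *
            (1 / ((b / (8 * K) : ℕ) + 1)) ^ K) := by
          rw [← pow_mul]; push_cast; ring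
      _ ≤ (4:ℝ) ^ (K + 1) / b ^ 6 + 2 * (E / b ^ 6) := by gcongr
      _ = (4 ^ (K + 1) + 2 * E) / b ^ 6 := by ring
      _ ≤ Cg d / (n * √n) := by
          rw [div_le_div_iff₀ (by positivity) (by positivity), hCg]
          have h1 : (n:ℝ) ≤ 16 * b ^ 4 := by exact_mod_cast hb16
          calc (4 ^ (K + 1) + 2 * E) * (n * √n) ≤
              (4 ^ (K + 1) + 2 * E) * ((16 * b ^ 4) * (4 * b ^ 2)) := by gcongr
            _ = _ := by ring

lemma taylor_up (Γ : ℕ → ℝ) (ε : ℝ) (s0 : ℕ)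
    (h : ∀ s, s0 ≤ s → |Γ s - 2 * Γ (s + 1) + Γ (s + 2)| ≤ ε) (j : ℕ) :
    |Γ (s0 + j + 1) - Γ (s0 + j) - (Γ (s0 + 1) - Γ s0)| ≤ ε * j ∧
    |Γ (s0 + j) - Γ s0 - j * (Γ (s0 + 1) - Γ s0)| ≤ ε * j ^ 2 := by
  have hε : 0 ≤ ε := (abs_nonneg _).trans (h s0 le_rfl)
  induction j with
  | zero => simp
  | succ j ih =>
    have h1 := h (s0 + j) (by omega)
    obtain ⟨a, b⟩ := ih
    rw [abs_le] at h1 a b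
    have e1 : s0 + (j + 1) + 1 = s0 + j + 2 := by omega
    have e2 : s0 + (j + 1) = s0 + j + 1 := by omega
    rw [e1, e2]
    push_cast
    have hj : (0:ℝ) ≤ j := by positivity
    have hεj : 0 ≤ ε * j := by positivity
    constructor
    · rw [abs_le]; constructor <;> nlinarith
    · rw [abs_le]; constructor <;> nlinarith

lemma taylor_down (Γ : ℕ → ℝ) (ε : ℝ) (s0 s1 : ℕ)
    (h : ∀ s, s1 ≤ s → |Γ s - 2 * Γ (s + 1) + Γ (s + 2)| ≤ ε) (j : ℕ) :
    ∀ s, s1 ≤ s → s + j = s0 →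
    |Γ (s + 1) - Γ s - (Γ (s0 + 1) - Γ s0)| ≤ ε * j ∧
    |Γ s - Γ s0 + j * (Γ (s0 + 1) - Γ s0)| ≤ ε * j ^ 2 := by
  have hε : 0 ≤ ε := (abs_nonneg _).trans (h s1 le_rfl)
  induction j with
  | zero => intro s _ hs; have : s = s0 := by omega
            subst this; simp
  | succ j ih =>
    intro s hs hsj
    have h1 := h s hs
    obtain ⟨a, b⟩ := ih (s + 1) (by omega) (by omega)
    rw [abs_le] at h1 a b
    have e1 : s + 1 + 1 = s + 2 := by omega
    rw [e1] at a
    push_cast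
    have hj : (0:ℝ) ≤ j := by positivity
    have hεj : 0 ≤ ε * j := by positivity
    constructor
    · rw [abs_le]; constructor <;> nlinarith
    · rw [abs_le]; constructor <;> nlinarith

lemma taylor (Γ : ℕ → ℝ) (ε : ℝ) (s0 s1 : ℕ) (hs : s1 ≤ s0)
    (h : ∀ s, s1 ≤ s → |Γ s - 2 * Γ (s + 1) + Γ (s + 2)| ≤ ε) (s : ℕ) (hs1 : s1 ≤ s) :
    |Γ s - Γ s0 - ((s:ℝ) - s0) * (Γ (s0 + 1) - Γ s0)| ≤ ε * ((s:ℝ) - s0) ^ 2 := by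
  rcases le_total s0 s with h1 | h1
  · obtain ⟨j, rfl⟩ := Nat.exists_eq_add_of_le h1
    have := (taylor_up Γ ε s0 (fun s hs' => h s (by omega)) j).2
    push_cast
    convert this using 2 <;> ring
  · obtain ⟨j, rfl⟩ := Nat.exists_eq_add_of_le h1
    have := (taylor_down Γ ε (s + j) s1 h j s hs1 rfl).2
    push_cast
    convert this using 2 <;> ring

lemma taylor_all (n : ℕ) (hn : 0 < n) (Γ : ℕ → ℝ) (C : ℝ) (hC : 0 ≤ C)
    (hΓ0 : ∀ s, 0 ≤ Γ s) (hΓ1 : ∀ s, Γ s ≤ 1)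
    (hd1 : ∀ s, n ≤ 8 * s → |Γ (s + 1) - Γ s| ≤ C / √n)
    (hd2 : ∀ s, n ≤ 8 * s → |Γ s - 2 * Γ (s + 1) + Γ (s + 2)| ≤ C / (n * √n))
    (s0 : ℕ) (hs0 : n ≤ 2 * s0) (s : ℕ) :
    |Γ s - Γ s0 - ((s:ℝ) - s0) * (Γ (s0 + 1) - Γ s0)| ≤
      (3 * C + 8) * (((s:ℝ) - s0) ^ 2 / (n * √n)) := by
  have hR : (0:ℝ) < √n := by positivity
  have hn' : (0:ℝ) < n := by positivity
  have hn1 : (1:ℝ) ≤ n := by exact_mod_cast hn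
  have hRn : √(n:ℝ) ≤ n := by
    rw [Real.sqrt_le_iff]; exact ⟨hn'.le, by nlinarith⟩
  set X := ((s:ℝ) - s0) ^ 2 / (n * √n) with hX
  have hX0 : 0 ≤ X := by positivity
  by_cases hs : n ≤ 8 * s
  · have h1 := taylor Γ (C / (n * √n)) s0 ((n + 7) / 8) (by omega)
      (fun s hs => hd2 s (by omega)) s (by omega)
    refine h1.trans ?_
    have : C / (n * √n) * ((s:ℝ) - s0) ^ 2 = C * X := by rw [hX]; ring
    rw [this]
    nlinarith
  · have hD := hd1 s0 (by omega)
    set D := Γ (s0 + 1) - Γ s0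
    have hgap : (3:ℝ) / 8 * n ≤ s0 - s := by
      have h1 : (n:ℝ) ≤ 2 * s0 := by exact_mod_cast hs0
      have h2 : 8 * (s:ℝ) < n := by exact_mod_cast (not_le.mp hs)
      linarith
    have hgap0 : 0 < (s0:ℝ) - s := by nlinarith
    have hX1 : 1 ≤ 8 * X := by
      rw [hX, ← mul_div_assoc, le_div_iff₀ (by positivity)]
      nlinarith
    have hX2 : ((s0:ℝ) - s) / √n ≤ 3 * X := by
      rw [hX, ← mul_div_assoc, div_le_div_iff₀ hR (by positivity)]
      have : ((s0:ℝ) - s) * n ≤ 3 * (s - s0) ^ 2 := by nlinarith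
      nlinarith
    have h3 : |((s:ℝ) - s0) * D| ≤ C * (3 * X) := by
      rw [abs_mul, abs_sub_comm, abs_of_pos hgap0]
      calc _ ≤ ((s0:ℝ) - s) * (C / √n) := by gcongr
        _ = C * (((s0:ℝ) - s) / √n) := by ring
        _ ≤ _ := by gcongr
    rw [abs_le] at h3 ⊢
    have := hΓ0 s; have := hΓ1 s; have := hΓ0 s0; have := hΓ1 s0
    constructor <;> nlinarith

set_option maxHeartbeats 2000000 in
lemma pointwise_abs (d n : ℕ) (hn : 0 < n) (g G : ℕ → ℝ) (C : ℝ) (hC : 0 ≤ C)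
    (hG0 : ∀ t, 0 ≤ G t) (hG1 : ∀ t, G t ≤ 1)
    (hg : ∀ k, |g (k + 1) - g k| ≤ d / √((k + 1 : ℕ) : ℝ))
    (hGg : ∀ t : ℕ, |G t - g t| ≤ (t:ℝ) ^ 2 / (n:ℝ) ^ 3)
    (hd1 : ∀ s, n ≤ 8 * s → |G (2 * (s + 1)) - G (2 * s)| ≤ C / √n)
    (hd2 : ∀ s, n ≤ 8 * s → |G (2 * s) - 2 * G (2 * (s + 1)) + G (2 * (s + 2))| ≤ C / (n * √n)) :
    ∃ D : ℝ, ∀ k : ℕ, |g k - g n - ((k:ℝ) - n) * D| ≤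
      (24 + 4 * d + 4 * C) * (1 / √n + ((k:ℝ) - n) ^ 2 / (n * √n)) := by
  have hR : (0:ℝ) < √n := by positivity
  have hn' : (0:ℝ) < n := by positivity
  have hn1 : (1:ℝ) ≤ n := by exact_mod_cast hn
  have hRn : √(n:ℝ) ≤ n := by
    rw [Real.sqrt_le_iff]; exact ⟨hn'.le, by nlinarith⟩
  have hgk : ∀ k : ℕ, |g k - g (2 * ((k + 1) / 2))| ≤ d / √((k + 1 : ℕ) : ℝ) := by
    intro k
    rcases Nat.even_or_odd' k with ⟨c, rfl | rfl⟩
    · have : (2 * c + 1) / 2 = c := by omega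
      rw [this]; simp; positivity
    · have : 2 * ((2 * c + 1 + 1) / 2) = (2 * c + 1) + 1 := by omega
      rw [this, abs_sub_comm]; exact hg _
  have hk3 : ∀ k : ℕ, |g k - G (2 * ((k + 1) / 2))| ≤
      d / √((k + 1 : ℕ) : ℝ) + ((k:ℝ) + 1) ^ 2 / (n:ℝ) ^ 3 := by
    intro k
    have h1 := hgk k
    have h2 := hGg (2 * ((k + 1) / 2))
    have h3 : (((2 * ((k + 1) / 2) : ℕ) : ℝ)) ^ 2 / (n:ℝ) ^ 3 ≤ ((k:ℝ) + 1) ^ 2 / (n:ℝ) ^ 3 := by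
      gcongr
      have : 2 * ((k + 1) / 2) ≤ k + 1 := by omega
      exact_mod_cast this
    rw [abs_le] at *
    constructor <;> linarith
  set Y := 1 / √(n:ℝ) with hY
  have hY0 : 0 < Y := by positivity
  have hnY : 1 / (n:ℝ) ≤ Y := by rw [hY]; gcongr
  have hk4 : ∀ k : ℕ, |g k - G (2 * ((k + 1) / 2))| ≤
      d * (2 * Y + 2 * (((k:ℝ) - n) ^ 2 / (n * √n))) + (8 * Y + 2 * (((k:ℝ) - n) ^ 2 / (n * √n))) := by
    intro k
    refine (hk3 k).trans ?_
    set X := ((k:ℝ) - n) ^ 2 / (n * √n) with hX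
    have hX0 : 0 ≤ X := by positivity
    refine add_le_add ?_ ?_
    · rw [div_eq_mul_one_div]
      refine mul_le_mul_of_nonneg_left ?_ (by positivity)
      by_cases h : n ≤ 4 * (k + 1)
      · have h1 : √(n:ℝ) ≤ 2 * √((k + 1 : ℕ) : ℝ) := by
          rw [Real.sqrt_le_iff]
          refine ⟨by positivity, ?_⟩
          rw [mul_pow, Real.sq_sqrt (by positivity)]
          have : (n:ℝ) ≤ 4 * ((k + 1 : ℕ) : ℝ) := by exact_mod_cast h
          linarith
        have h2 : 1 / √((k + 1 : ℕ) : ℝ) ≤ 2 * Y := by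
          rw [hY, ← mul_div_assoc, div_le_div_iff₀ (by positivity) hR]; linarith
        linarith
      · have h1 : 1 / √((k + 1 : ℕ) : ℝ) ≤ 1 := by
          rw [div_le_one (by positivity)]
          rw [Real.one_le_sqrt]; push_cast; linarith [show (0:ℝ) ≤ k by positivity]
        have h2 : 4 * ((k:ℝ) + 1) < n := by exact_mod_cast (not_le.mp h)
        have h3 : 1 ≤ 2 * X := by
          rw [hX, ← mul_div_assoc, le_div_iff₀ (by positivity)]
          nlinarith
        linarith
    · have h1 : ((k:ℝ) + 1) ^ 2 ≤ 2 * (k - n) ^ 2 + 8 * n ^ 2 := by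
        nlinarith [sq_nonneg ((k:ℝ) - n - (n + 1))]
      calc ((k:ℝ) + 1) ^ 2 / (n:ℝ) ^ 3 ≤ (2 * (k - n) ^ 2 + 8 * n ^ 2) / (n:ℝ) ^ 3 := by gcongr
        _ = 8 * (1 / n) + 2 * ((k - n) ^ 2 / (n:ℝ) ^ 3) := by field_simp; ring
        _ ≤ _ := by
          rw [hX]
          gcongr
          rw [pow_succ, sq]
          nlinarith
  have hT : ∀ s : ℕ, |G (2 * s) - G (2 * ((n + 1) / 2)) - ((s:ℝ) - ((n + 1) / 2 : ℕ)) *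
      (G (2 * ((n + 1) / 2 + 1)) - G (2 * ((n + 1) / 2)))| ≤
      (3 * C + 8) * (((s:ℝ) - ((n + 1) / 2 : ℕ)) ^ 2 / (n * √n)) :=
    taylor_all n hn (fun s => G (2 * s)) C hC (fun s => hG0 _) (fun s => hG1 _) hd1 hd2
    ((n + 1) / 2) (by omega)
  have hD := hd1 ((n + 1) / 2) (by omega)
  set s0 := (n + 1) / 2 with hs0
  set D := G (2 * (s0 + 1)) - G (2 * s0) with hDdef
  refine ⟨D / 2, fun k => ?_⟩
  have hT' := hT ((k + 1) / 2)
  have hkk := hk4 k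
  have hnn := hk4 n
  rw [← hs0] at hnn
  set s := (k + 1) / 2 with hs
  set X := ((k:ℝ) - n) ^ 2 / (n * √n) with hX
  have hX0 : 0 ≤ X := by positivity
  have e0 : ((n:ℝ) - n) ^ 2 / (n * √n) = 0 := by simp
  rw [e0] at hnn
  have hmis : |2 * ((s:ℝ) - s0) - (k - n)| ≤ 1 := by
    have a1 : k ≤ 2 * s := by omega
    have a2 : 2 * s ≤ k + 1 := by omega
    have a3 : n ≤ 2 * s0 := by omega
    have a4 : 2 * s0 ≤ n + 1 := by omega
    have b1 : (k:ℝ) ≤ 2 * s := by exact_mod_cast a1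
    have b2 : 2 * (s:ℝ) ≤ k + 1 := by exact_mod_cast a2
    have b3 : (n:ℝ) ≤ 2 * s0 := by exact_mod_cast a3
    have b4 : 2 * (s0:ℝ) ≤ n + 1 := by exact_mod_cast a4
    rw [abs_le]; constructor <;> linarith
  have hXs : ((s:ℝ) - s0) ^ 2 / (n * √n) ≤ X + Y := by
    have h1 : ((s:ℝ) - s0) ^ 2 ≤ (k - n) ^ 2 + 1 := by
      rw [abs_le] at hmis
      nlinarith [sq_nonneg ((s:ℝ) - s0 - (k - n)), sq_nonneg ((k:ℝ) - n)]
    calc _ ≤ (((k:ℝ) - n) ^ 2 + 1) / (n * √n) := by gcongr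
      _ = X + 1 / (n * √n) := by rw [hX]; ring
      _ ≤ _ := by
        rw [hY]; gcongr; nlinarith
  have hT2 : |G (2 * s) - G (2 * s0) - ((s:ℝ) - s0) * D| ≤ (3 * C + 8) * (X + Y) :=
    hT'.trans (by gcongr)
  have hM : |((s:ℝ) - s0) * D - (k - n) * (D / 2)| ≤ C * Y := by
    have : ((s:ℝ) - s0) * D - (k - n) * (D / 2) = (2 * ((s:ℝ) - s0) - (k - n)) / 2 * D := by ring
    rw [this, abs_mul, abs_div]
    have hD' : |D| ≤ C * Y := by rw [hY, mul_one_div]; exact hD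
    calc _ ≤ 1 / |(2:ℝ)| * (C * Y) := by gcongr
      _ ≤ C * Y := by
        have : 0 ≤ C * Y := by positivity
        norm_num; linarith
  have hCY : 0 ≤ C * Y := by positivity
  have hCX : 0 ≤ C * X := by positivity
  have hdX : 0 ≤ d * X := by positivity
  have hdY : 0 ≤ d * Y := by positivity
  rw [abs_le] at hT2 hM hkk hnn ⊢
  constructor <;> nlinarith

/-- Poisson weights. -/
noncomputable def pw (n k : ℕ) : ℝ := Real.exp (-(n:ℝ)) * (n:ℝ) ^ k / k.factorial

lemma pw_nonneg (n k : ℕ) : 0 ≤ pw n k := by unfold pw; positivity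

lemma hasSum_conv {f g : ℕ → ℝ} {a b : ℝ} (h : HasSum f a) (hf : ∀ k, g k = f k) (hb : b = a) :
    HasSum g b := by
  rw [hb, funext hf]; exact h

lemma pw_sum (n : ℕ) : HasSum (pw n) 1 := by
  have h : HasSum (fun k : ℕ => (n:ℝ) ^ k / k.factorial) (Real.exp n) := by
    rw [Real.exp_eq_exp_ℝ]
    exact NormedSpace.expSeries_div_hasSum_exp (n:ℝ)
  have h2 := h.mul_left (Real.exp (-(n:ℝ)))
  rw [← Real.exp_add, neg_add_cancel, Real.exp_zero] at h2
  exact hasSum_conv h2 (fun k => by unfold pw; ring) rfl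

lemma pw_succ (n k : ℕ) : pw n (k + 1) * ((k:ℝ) + 1) = n * pw n k := by
  unfold pw
  rw [Nat.factorial_succ]
  push_cast
  field_simp
  ring

lemma pw_mean (n : ℕ) : HasSum (fun k => pw n k * k) n := by
  rw [← hasSum_nat_add_iff' 1]
  have := (pw_sum n).mul_left (n:ℝ)
  simp only [mul_one] at this
  simp only [Finset.range_one, Finset.sum_singleton, Nat.cast_zero, mul_zero, sub_zero]
  exact hasSum_conv this (fun k => by rw [← pw_succ]; push_cast; ring) rfl

lemma pw_second (n : ℕ) : HasSum (fun k => pw n k * (k:ℝ) ^ 2) ((n:ℝ) ^ 2 + n) := by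
  rw [← hasSum_nat_add_iff' 1]
  have := ((pw_mean n).add (pw_sum n)).mul_left (n:ℝ)
  simp only [Finset.range_one, Finset.sum_singleton, Nat.cast_zero, ne_eq, OfNat.ofNat_ne_zero,
    not_false_eq_true, zero_pow, mul_zero, sub_zero]
  refine hasSum_conv this (fun k => ?_) ?_
  · have := pw_succ n k
    push_cast
    calc _ = (pw n (k + 1) * ((k:ℝ) + 1)) * (k + 1) := by ring
      _ = _ := by rw [this]; ring
  · ring

lemma cpois_val {d : ℕ} (F : Measure (Euc d)) [IsProbabilityMeasure F] (x : Euc d) (n : ℕ) :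
    HasSum (fun k => pw n k * gf F x k) (cpois n F {y : Euc d | ∀ c, y c ≤ x c}).toReal := by
  have e : ∀ k, pw n k * gf F x k = (ENNReal.ofReal (pw n k) *
      convPow F k {y : Euc d | ∀ c, y c ≤ x c}).toReal := by
    intro k
    rw [ENNReal.toReal_mul, ENNReal.toReal_ofReal (pw_nonneg n k)]; rfl
  have h1 : cpois n F {y : Euc d | ∀ c, y c ≤ x c} =
      ∑' k, ENNReal.ofReal (pw n k) * convPow F k {y : Euc d | ∀ c, y c ≤ x c} := by
    unfold cpois
    rw [Measure.sum_apply _ (meas_box x)]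
    rfl
  have hS : Summable (fun k => pw n k * gf F x k) := by
    refine Summable.of_nonneg_of_le (fun k => mul_nonneg (pw_nonneg _ _) (gf_nonneg _ _ _))
      (fun k => ?_) (pw_sum n).summable
    exact mul_le_of_le_one_right (pw_nonneg _ _) (gf_le_one _ _ _)
  rw [h1, ENNReal.tsum_toReal_eq]
  · simp only [← e]
    exact hS.hasSum
  · intro k
    exact ENNReal.mul_ne_top ENNReal.ofReal_ne_top (measure_ne_top _ _)

lemma pointwise {d : ℕ} (F : Measure (Euc d)) [IsProbabilityMeasure F] (hs : IsSymmMeasure F)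
    (x : Euc d) (n : ℕ) (hn : 0 < n) : ∃ D : ℝ, ∀ k : ℕ,
      |gf F x k - gf F x n - ((k:ℝ) - n) * D| ≤
      (24 + 4 * d + 4 * Cg d) * (1 / √n + ((k:ℝ) - n) ^ 2 / (n * √n)) := by
  obtain ⟨W, y, hW, hy, hG⟩ := spectral F hs x (n ^ 3) (by positivity)
  have hsq : ∀ (A : Finset (Fin (n ^ 3))) (s : ℕ), (y A ^ 2) ^ s = y A ^ (2 * s) :=
    fun A s => (pow_mul _ _ _).symm
  have hb : ∀ t : ℕ, |∑ A, W A * (y A ^ 2) ^ t| ≤ 1 := by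
    intro t
    simp only [hsq]
    rw [abs_le]
    exact ⟨by linarith [(hG (2 * t)).1], (hG (2 * t)).2.1⟩
  have hgb := fun s hs => gamma_bounds d n hn W (fun A => y A ^ 2) (fun A => sq_nonneg _)
    (fun A => (sq_le_one_iff_abs_le_one _).mpr (hy A)) (by push_cast at hW; exact hW) hb s hs
  refine pointwise_abs d n hn (gf F x) (fun t => ∑ A, W A * y A ^ t) (Cg d) (Cg_pos d).le
    (fun t => (hG t).1) (fun t => (hG t).2.1) (lo_step F hs x)
    (fun t => by have := (hG t).2.2; push_cast at this; exact this) ?_ ?_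
  · intro s hs
    have := (hgb s hs).1
    rw [abs_sub_comm]
    convert this using 2
    rw [← Finset.sum_sub_distrib]
    refine Finset.sum_congr rfl fun A _ => ?_
    rw [hsq, mul_add, pow_add]; ring
  · intro s hs
    have := (hgb s hs).2
    convert this using 2
    rw [Finset.mul_sum, ← Finset.sum_sub_distrib, ← Finset.sum_add_distrib]
    refine Finset.sum_congr rfl fun A _ => ?_
    rw [hsq, mul_add, mul_add, pow_add, pow_add]; ring

lemma final_bound {d : ℕ} (F : Measure (Euc d)) [IsProbabilityMeasure F] (hs : IsSymmMeasure F)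
    (x : Euc d) (n : ℕ) (hn : 0 < n) :
    |gf F x n - (cpois n F {y : Euc d | ∀ c, y c ≤ x c}).toReal| ≤
      (2 * (24 + 4 * d + 4 * Cg d)) / √n := by
  obtain ⟨D, hD⟩ := pointwise F hs x n hn
  set P := (cpois n F {y : Euc d | ∀ c, y c ≤ x c}).toReal
  set B := (24 + 4 * (d:ℝ) + 4 * Cg d)
  have hR : (0:ℝ) < √n := by positivity
  have hn' : (0:ℝ) < n := by positivity
  have h0 := pw_sum n
  have h1 := pw_mean n
  have h2 := pw_second n
  have hP := cpois_val F x n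
  have hs1 : HasSum (fun k => pw n k * (gf F x k - gf F x n - ((k:ℝ) - n) * D)) (P - gf F x n) := by
    have := (hP.sub (h0.mul_left (gf F x n))).sub ((h1.sub (h0.mul_left (n:ℝ))).mul_left D)
    refine hasSum_conv this (fun k => ?_) ?_
    · ring
    · ring
  have hs2 : HasSum (fun k => pw n k * (B * (1 / √n + ((k:ℝ) - n) ^ 2 / (n * √n)))) (2 * B / √n) := by
    have := ((h0.mul_left (1 / √n)).add
      (((h2.sub (h1.mul_left (2 * (n:ℝ)))).add (h0.mul_left ((n:ℝ) ^ 2))).mul_left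
        (1 / (n * √n)))).mul_left B
    refine hasSum_conv this (fun k => ?_) ?_
    · ring
    · field_simp; ring
  have hle : ‖P - gf F x n‖ ≤ 2 * B / √n := by
    rw [← hs1.tsum_eq]
    refine tsum_of_norm_bounded hs2 fun k => ?_
    rw [norm_mul, Real.norm_of_nonneg (pw_nonneg n k)]
    exact mul_le_mul_of_nonneg_left (hD k) (pw_nonneg n k)
  rw [abs_sub_comm]; exact hle

theorem stmt8 :
    ∃ C : ℕ → ℝ, (∀ d, 0 < C d) ∧
      ∀ (d n : ℕ), 0 < d → 0 < n →
        ∀ F : Measure (Euc d), IsProbabilityMeasure F → IsSymmMeasure F →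
          kolmDist (convPow F n) (cpois n F) ≤ C d / Real.sqrt n := by
  refine ⟨fun d => 2 * (24 + 4 * d + 4 * Cg d), fun d => ?_, ?_⟩
  · have := Cg_pos d
    positivity
  · intro d n _ hn F hF hs
    unfold kolmDist
    exact ciSup_le fun x => final_bound F hs x n hn
end
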